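/- Let R be a complete regular local domain of mixed characteristic p with F-finite residue field. Then every submodule W of every finitely generated R-module M is wepf-closed, i.e., W^wepf_M = W. -/

import Mathlib

open IsLocalRing TensorProduct
set_option synthInstance.maxHeartbeats 1000000
set_option maxHeartbeats 1000000

/-- The absolute integral closure `R⁺` of a domain `R`: the integral closure of `R`
in an algebraic closure of its fraction field. -/
noncomputable abbrev RPlus (R : Type) [CommRing R] [IsDomain R] : Type :=
  ↥(integralClosure R (AlgebraicClosure (FractionRing R)))

/-- The epf closure of a submodule `W` of an `R`-module `M`: `u` is in the closure iff
there is `c ≠ 0` in `R` such that `d ⊗ u ∈ im(R⁺ ⊗ W → R⁺ ⊗ M) + p^N (R⁺ ⊗ M)` for all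
`N ≥ 1` and all `n`-th roots `d ∈ R⁺` of `c` (`n ≥ 1`). -/
def epfMod (p : ℕ) (R : Type) [CommRing R] [IsDomain R]
    {M : Type} [AddCommGroup M] [Module R M] (W : Submodule R M) : Set M :=
  {u | ∃ c : R, c ≠ 0 ∧ ∀ n N : ℕ, 0 < n → 0 < N →
    ∀ d : RPlus R, d ^ n = algebraMap R (RPlus R) c →
      d ⊗ₜ[R] u ∈ LinearMap.range (LinearMap.baseChange (RPlus R) W.subtype) ⊔
        Ideal.span {(p : RPlus R) ^ N} • (⊤ : Submodule (RPlus R) (RPlus R ⊗[R] M))}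

/-- The weak epf closure of a submodule: `W^wepf = ⋂_{N ≥ 1} (W + p^N M)^epf`. -/
def wepfMod (p : ℕ) (R : Type) [CommRing R] [IsDomain R]
    {M : Type} [AddCommGroup M] [Module R M] (W : Submodule R M) : Set M :=
  {u | ∀ N : ℕ, 0 < N →
    u ∈ epfMod p R (W ⊔ Ideal.span {(p : R) ^ N} • (⊤ : Submodule R M))}

/-- A field `k` of characteristic `p` is F-finite if it is a finite module over
its subfield `k^p` of `p`-th powers. -/
def FFinite (p : ℕ) (k : Type) [Field k] : Prop :=
  ∃ (m : ℕ) (s : Fin m → k), ∀ a : k, ∃ c : Fin m → k, a = ∑ i, (c i) ^ p * s i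


set_option linter.all false

section
open IsLocalRing

/-- recursive regular chain -/
def RegS : ℕ → (R : Type) → [CommRing R] → (ℕ → R) → Prop
  | 0, R, _, _ => IsField R
  | n+1, R, _, x => (∀ y, IsUnit (1 + x 0 * y)) ∧ (∀ y, x 0 * y = 0 → y = 0) ∧
      RegS n (R ⧸ Ideal.span {x 0}) (fun i => Ideal.Quotient.mk _ (x (i+1)))

lemma isUnit_of_mk_unit {R : Type} [CommRing R] {x : R} (h : ∀ y, IsUnit (1 + x * y)) {a : R}
    (ha : IsUnit (Ideal.Quotient.mk (Ideal.span {x}) a)) : IsUnit a := by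
  obtain ⟨b, hb⟩ := isUnit_iff_exists_inv.1 ha
  obtain ⟨b, rfl⟩ := Ideal.Quotient.mk_surjective b
  rw [← map_mul, ← map_one (Ideal.Quotient.mk _), Ideal.Quotient.eq, Ideal.mem_span_singleton] at hb
  obtain ⟨c, hc⟩ := hb
  have h1 : IsUnit (a * b) := by
    have : a * b = 1 + x * c := by linear_combination hc
    rw [this]; exact h c
  exact isUnit_of_mul_isUnit_left h1

lemma RegS.isLocal : ∀ (n : ℕ) (R : Type) [CommRing R] (x : ℕ → R), RegS n R x → IsLocalRing R
  | 0, R, _, x, h => by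
      let := IsField.toField h
      exact (inferInstance : IsLocalRing R)
  | n+1, R, _, x, h => by
      obtain ⟨h1, h2, h3⟩ := h
      have := RegS.isLocal n _ _ h3
      have hnt : Nontrivial R := (Ideal.Quotient.mk (Ideal.span {x 0})).domain_nontrivial
      refine IsLocalRing.of_nonunits_add ?_
      intro a b ha hb hab
      have : Ideal.Quotient.mk (Ideal.span {x 0}) a + Ideal.Quotient.mk (Ideal.span {x 0}) b ∈
          nonunits (R ⧸ Ideal.span {x 0}) := by
        apply IsLocalRing.nonunits_add
        · intro h; exact ha (isUnit_of_mk_unit h1 h)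
        · intro h; exact hb (isUnit_of_mk_unit h1 h)
      apply this
      rw [← map_add]
      exact hab.map _

lemma RegS.ofEquiv : ∀ (n : ℕ) (R S : Type) [CommRing R] [CommRing S] (e : R ≃+* S) (x : ℕ → R) (y : ℕ → S)
    (_ : ∀ i < n, y i = e (x i)), RegS n R x → RegS n S y
  | 0, R, S, _, _, e, x, y, hy, h => by
      exact MulEquiv.isField (show IsField R from h) e.symm.toMulEquiv
  | n+1, R, S, _, _, e, x, y, hy, h => by
      obtain ⟨h1, h2, h3⟩ := h
      have hy0 : y 0 = e (x 0) := hy 0 (Nat.succ_pos _)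
      refine ⟨fun z => ?_, fun z hz => ?_, ?_⟩
      · have := (h1 (e.symm z)).map e
        simpa [hy0] using this
      · have := h2 (e.symm z) (by apply e.injective; simpa [hy0] using hz)
        simpa using this
      · refine RegS.ofEquiv n _ _ (Ideal.quotientEquiv (Ideal.span {x 0}) (Ideal.span {y 0}) e ?_) _ _ ?_ h3
        · rw [Ideal.map_span]; simp [hy0]
        · intro i hi
          rw [hy (i+1) (by omega)]
          rfl

lemma krull_dvd {R : Type} [CommRing R] [IsNoetherianRing R] [IsLocalRing R] {x : R} (hx : x ∈ maximalIdeal R)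
   (I : Ideal R) {a : R} (h : ∀ n : ℕ, ∃ b, a - x ^ n * b ∈ I) : a ∈ I := by
  by_contra hI
  have hIt : I ≠ ⊤ := fun h => hI (h ▸ Submodule.mem_top)
  have : Nontrivial (R ⧸ I) := Ideal.Quotient.nontrivial_iff.2 hIt
  have : IsLocalRing (R ⧸ I) := IsLocalRing.of_surjective' (Ideal.Quotient.mk I) Ideal.Quotient.mk_surjective
  have h0 := Ideal.iInf_pow_eq_bot_of_isLocalRing (maximalIdeal (R ⧸ I)) (Ideal.IsPrime.ne_top')
  have : Ideal.Quotient.mk I a ∈ (⨅ i : ℕ, maximalIdeal (R ⧸ I) ^ i) := by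
    rw [Submodule.mem_iInf]
    intro n
    obtain ⟨b, hb⟩ := h n
    rw [← Ideal.Quotient.eq_zero_iff_mem, map_sub, sub_eq_zero] at hb
    rw [hb, map_mul, map_pow]
    apply Ideal.mul_mem_right
    apply Ideal.pow_mem_pow
    rw [mem_maximalIdeal]
    intro hu
    obtain ⟨b, hb⟩ := isUnit_iff_exists_inv.1 hu
    obtain ⟨b, rfl⟩ := Ideal.Quotient.mk_surjective b
    rw [← map_mul, ← map_one (Ideal.Quotient.mk _), Ideal.Quotient.eq] at hb
    have h2 := (maximalIdeal R).sub_mem ((maximalIdeal R).mul_mem_right b hx) (le_maximalIdeal hIt hb)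
    rw [sub_sub_cancel] at h2
    exact (mem_maximalIdeal _ |>.1 h2) isUnit_one
  rw [h0, Ideal.mem_bot, Ideal.Quotient.eq_zero_iff_mem] at this
  exact hI this

lemma exists_pow_mul_not_dvd {R : Type} [CommRing R] [IsNoetherianRing R] [IsLocalRing R] {x : R}
    (hx : x ∈ maximalIdeal R) {a : R} (ha : a ≠ 0) : ∃ n b, a = x ^ n * b ∧ ¬ x ∣ b := by
  by_contra hcon
  push Not at hcon
  apply ha
  rw [← Ideal.mem_bot]
  apply krull_dvd hx
  have : ∀ n, ∃ b, a = x ^ n * b := by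
    intro n
    induction n with
    | zero => exact ⟨a, by simp⟩
    | succ n ih =>
      obtain ⟨b, hb⟩ := ih
      obtain ⟨c, rfl⟩ := hcon n b hb
      exact ⟨c, by rw [hb]; ring⟩
  intro n
  obtain ⟨b, hb⟩ := this n
  exact ⟨b, by simp [hb]⟩

lemma RegS.mem_max {n : ℕ} {R : Type} [CommRing R] [IsLocalRing R] {x : ℕ → R} (h : RegS (n+1) R x) : x 0 ∈ maximalIdeal R := by
  obtain ⟨h1, h2, h3⟩ := h
  rw [mem_maximalIdeal]
  intro hu
  obtain ⟨b, hb⟩ := isUnit_iff_exists_inv.1 hu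
  have := h1 (-b)
  rw [mul_neg, hb] at this
  simp at this

lemma RegS.isDomain : ∀ (n : ℕ) (R : Type) [CommRing R] [IsNoetherianRing R] (x : ℕ → R), RegS n R x → IsDomain R
  | 0, R, _, _, x, h => IsField.isDomain h
  | n+1, R, _, _, x, h => by
      have := RegS.isLocal _ _ _ h
      have hx := h.mem_max
      obtain ⟨h1, h2, h3⟩ := h
      have hdom := RegS.isDomain n _ _ h3
      have hprime : (Ideal.span {x 0}).IsPrime := (Ideal.Quotient.isDomain_iff_prime _).1 hdom
      have hpow : ∀ n y, x 0 ^ n * y = 0 → y = 0 := by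
        intro n
        induction n with
        | zero => intro y hy; simpa using hy
        | succ n ih => intro y hy; exact ih _ (h2 _ (by rw [← hy]; ring))
      have : NoZeroDivisors R := by
        refine ⟨fun {a b} hab => ?_⟩
        by_contra hcon
        push Not at hcon
        obtain ⟨i, a', rfl, ha'⟩ := exists_pow_mul_not_dvd hx hcon.1
        obtain ⟨j, b', rfl, hb'⟩ := exists_pow_mul_not_dvd hx hcon.2
        have : a' * b' = 0 := hpow (i+j) _ (by rw [← hab]; ring)
        have h4 : a' * b' ∈ Ideal.span {x 0} := by rw [this]; exact Ideal.zero_mem _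
        rcases hprime.mem_or_mem h4 with h | h
        · exact ha' (Ideal.mem_span_singleton.1 h)
        · exact hb' (Ideal.mem_span_singleton.1 h)
      exact NoZeroDivisors.to_isDomain R

/-- complete integral closedness -/
lemma RegS.cic : ∀ (n : ℕ) (R : Type) [CommRing R] [IsNoetherianRing R] (x : ℕ → R), RegS n R x →
    ∀ (w c a : R), w ≠ 0 → c ≠ 0 → (∀ j, w ^ j ∣ c * a ^ j) → w ∣ a
  | 0, R, _, _, x, h => by
      intro w c a hw hc _
      obtain ⟨b, hb⟩ := (show IsField R from h).mul_inv_cancel hw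
      exact ⟨b * a, by rw [← mul_assoc, hb, one_mul]⟩
  | n+1, R, _, _, x, h => by
      have := RegS.isLocal _ _ _ h
      have := RegS.isDomain _ _ _ h
      have hx := h.mem_max
      obtain ⟨h1, h2, h3⟩ := h
      have hdom := RegS.isDomain n _ _ h3
      have ih := RegS.cic n _ _ h3
      have hx0 : x 0 ≠ 0 := fun h => one_ne_zero (h2 1 (by rw [h, zero_mul]))
      have hprime : Prime (x 0) := (Ideal.span_singleton_prime hx0).1 ((Ideal.Quotient.isDomain_iff_prime _).1 hdom)
      -- case x0 ∤ w
      have key : ∀ (w c : R), ¬ x 0 ∣ w → ¬ x 0 ∣ c → ∀ a, (∀ j, w ^ j ∣ c * a ^ j) → w ∣ a := by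
        intro w c hw hc
        have hw0 : w ≠ 0 := fun h => hw (h ▸ dvd_zero _)
        have cancel : ∀ (j i : ℕ) (z : R), w ^ j ∣ x 0 ^ i * z → w ^ j ∣ z := by
          intro j i
          induction i with
          | zero => intro z hz; simpa using hz
          | succ i ihi =>
            intro z hz
            have : w ^ j ∣ x 0 * z := ihi _ (by convert hz using 1; ring)
            obtain ⟨b, hb⟩ := this
            have : x 0 ∣ w ^ j * b := ⟨z, hb.symm⟩
            rcases hprime.dvd_or_dvd this with h | h
            · exact absurd (hprime.dvd_of_dvd_pow h) hw
            · obtain ⟨b', rfl⟩ := h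
              exact ⟨b', mul_left_cancel₀ hx0 (by rw [hb]; ring)⟩
        have step : ∀ a, (∀ j, w ^ j ∣ c * a ^ j) → ∃ r a₁, a = w * r + x 0 * a₁ ∧ (∀ j, w ^ j ∣ c * a₁ ^ j) := by
          intro a ha
          have h5 := ih (Ideal.Quotient.mk _ w) (Ideal.Quotient.mk _ c) (Ideal.Quotient.mk _ a)
            (by rwa [Ne, Ideal.Quotient.eq_zero_iff_mem, Ideal.mem_span_singleton])
            (by rwa [Ne, Ideal.Quotient.eq_zero_iff_mem, Ideal.mem_span_singleton])
            (fun j => by rw [← map_pow, ← map_pow, ← map_mul]; exact map_dvd _ (ha j))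
          obtain ⟨r, hr⟩ := h5
          obtain ⟨r, rfl⟩ := Ideal.Quotient.mk_surjective r
          rw [← map_mul, Ideal.Quotient.eq, Ideal.mem_span_singleton] at hr
          obtain ⟨a₁, ha₁⟩ := hr
          refine ⟨r, a₁, by linear_combination ha₁, fun j => ?_⟩
          apply cancel j j
          have : x 0 ^ j * (c * a₁ ^ j) = c * (a + w * (-r)) ^ j := by
            rw [show a + w * (-r) = x 0 * a₁ by linear_combination ha₁]; ring
          rw [this, add_pow, Finset.mul_sum]
          apply Finset.dvd_sum
          intro i hi
          have hij : i ≤ j := by simpa [Nat.lt_succ_iff] using hi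
          have e1 : w ^ j = w ^ i * w ^ (j - i) := by rw [← pow_add]; congr 1; omega
          rw [e1]
          have : c * (a ^ i * (w * -r) ^ (j - i) * (j.choose i)) = (c * a ^ i) * (w ^ (j-i) * ((-r)^(j-i) * (j.choose i))) := by
            rw [mul_pow]; ring
          rw [this]
          exact mul_dvd_mul (ha i) (dvd_mul_right _ _)
        have iter : ∀ n a, (∀ j, w ^ j ∣ c * a ^ j) → ∃ r a₁, a = w * r + x 0 ^ n * a₁ ∧ (∀ j, w ^ j ∣ c * a₁ ^ j) := by
          intro n
          induction n with
          | zero => intro a ha; exact ⟨0, a, by simp, ha⟩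
          | succ n ihn =>
            intro a ha
            obtain ⟨r, a₁, e, h⟩ := ihn a ha
            obtain ⟨r', a₂, e', h'⟩ := step a₁ h
            exact ⟨r + x 0 ^ n * r', a₂, by rw [e, e']; ring, h'⟩
        intro a ha
        rw [← Ideal.mem_span_singleton]
        apply krull_dvd hx
        intro n
        obtain ⟨r, a₁, e, h⟩ := iter n a ha
        exact ⟨a₁, by rw [e, add_sub_cancel_right]; exact Ideal.mem_span_singleton.2 (dvd_mul_right _ _)⟩
      intro w c a hw hc ha
      obtain ⟨i, w', rfl, hw'⟩ := exists_pow_mul_not_dvd hx hw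
      obtain ⟨k, c', rfl, hc'⟩ := exists_pow_mul_not_dvd hx hc
      by_cases ha0 : a = 0
      · rw [ha0]; exact dvd_zero _
      obtain ⟨l, a', rfl, ha'⟩ := exists_pow_mul_not_dvd hx ha0
      have hil : i ≤ l := by
        by_contra hlt
        push Not at hlt
        have := ha (k+1)
        have h6 : x 0 ^ (i*(k+1)) ∣ x 0 ^ (k + l * (k+1)) * (c' * a' ^ (k+1)) := by
          refine dvd_trans ⟨w' ^ (k+1), ?_⟩ (this.trans (dvd_of_eq ?_)) <;> ring
        have h7 : x 0 ^ (k + l * (k+1) + 1) ∣ x 0 ^ (k + l * (k+1)) * (c' * a' ^ (k+1)) := by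
          refine dvd_trans (pow_dvd_pow _ ?_) h6
          nlinarith
        rw [pow_succ] at h7
        have h8 := (mul_dvd_mul_iff_left (pow_ne_zero _ hx0)).1 h7
        rcases hprime.dvd_or_dvd h8 with h | h
        · exact hc' h
        · exact ha' (hprime.dvd_of_dvd_pow h)
      have := key w' c' hw' hc' a' (fun j => by
        have h6 : w' ^ j ∣ x 0 ^ (k + l * j) * (c' * a' ^ j) := by
          refine dvd_trans ⟨x 0 ^ (i * j), ?_⟩ ((ha j).trans (dvd_of_eq ?_)) <;> ring
        have cancel : ∀ (i : ℕ) (z : R), w' ^ j ∣ x 0 ^ i * z → w' ^ j ∣ z := by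
          intro i
          induction i with
          | zero => intro z hz; simpa using hz
          | succ i ihi =>
            intro z hz
            have : w' ^ j ∣ x 0 * z := ihi _ (by convert hz using 1; ring)
            obtain ⟨b, hb⟩ := this
            have : x 0 ∣ w' ^ j * b := ⟨z, hb.symm⟩
            rcases hprime.dvd_or_dvd this with h | h
            · exact absurd (hprime.dvd_of_dvd_pow h) hw'
            · obtain ⟨b', rfl⟩ := h
              exact ⟨b', mul_left_cancel₀ hx0 (by rw [hb]; ring)⟩
        exact cancel _ _ h6)
      exact mul_dvd_mul (pow_dvd_pow _ hil) this
end

section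
open IsLocalRing

lemma max_quot {R : Type} [CommRing R] [IsLocalRing R] (I : Ideal R) [IsLocalRing (R ⧸ I)] :
    maximalIdeal (R ⧸ I) = (maximalIdeal R).map (Ideal.Quotient.mk I) := by
  have hIt : I ≠ ⊤ := Ideal.Quotient.nontrivial_iff.1 inferInstance
  apply le_antisymm
  · intro z hz
    obtain ⟨a, rfl⟩ := Ideal.Quotient.mk_surjective z
    apply Ideal.mem_map_of_mem
    rw [mem_maximalIdeal] at hz ⊢
    intro h
    exact hz (h.map _)
  · rw [Ideal.map_le_iff_le_comap]
    intro x hx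
    rw [Ideal.mem_comap, mem_maximalIdeal]
    intro hu
    obtain ⟨b, hb⟩ := isUnit_iff_exists_inv.1 hu
    obtain ⟨b, rfl⟩ := Ideal.Quotient.mk_surjective b
    rw [← map_mul, ← map_one (Ideal.Quotient.mk _), Ideal.Quotient.eq] at hb
    have h2 := (maximalIdeal R).sub_mem ((maximalIdeal R).mul_mem_right b hx) (le_maximalIdeal hIt hb)
    rw [sub_sub_cancel] at h2
    exact (mem_maximalIdeal _ |>.1 h2) isUnit_one

lemma artin_rees_elt {R : Type} [CommRing R] [IsDomain R] [IsNoetherianRing R] (m : Ideal R) {x : R} (hx : x ≠ 0) :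
    ∃ k, ∀ b z, x * z ∈ m ^ b → z ∈ m ^ (b - k) := by
  obtain ⟨k, hk⟩ := Ideal.exists_pow_inf_eq_pow_smul m (Ideal.span {x} : Submodule R R)
  refine ⟨k, fun b z hz => ?_⟩
  by_cases hb : k ≤ b
  · have h1 : x * z ∈ (m ^ b • ⊤ ⊓ Ideal.span {x} : Submodule R R) := by
      refine ⟨by simpa using hz, Ideal.mem_span_singleton.2 (dvd_mul_right _ _)⟩
    rw [hk b hb] at h1
    have h2 : x * z ∈ m ^ (b - k) * Ideal.span {x} :=
      Submodule.smul_mono le_rfl inf_le_right h1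
    rw [Ideal.mem_mul_span_singleton] at h2
    obtain ⟨w, hw, e⟩ := h2
    have : z = w := mul_left_cancel₀ hx (by rw [← e, mul_comm])
    rwa [this]
  · rw [show b - k = 0 by omega]; simp

lemma artin_rees_pow {R : Type} [CommRing R] [IsDomain R] [IsNoetherianRing R] (m : Ideal R) {x : R} {k : ℕ}
    (h : ∀ b z, x * z ∈ m ^ b → z ∈ m ^ (b - k)) : ∀ i b z, x ^ i * z ∈ m ^ b → z ∈ m ^ (b - i * k) := by
  intro i
  induction i with
  | zero => intro b z hz; simpa using hz
  | succ i ih =>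
    intro b z hz
    have := ih _ _ (h b (x ^ i * z) (by convert hz using 1; ring))
    convert this using 2
    rw [Nat.sub_sub]; ring_nf

lemma RegS.ord : ∀ (n : ℕ) (R : Type) [CommRing R] [IsNoetherianRing R] [IsLocalRing R] (x : ℕ → R), RegS n R x →
    ∀ c : R, c ≠ 0 → ∃ ν : ℕ, ∀ g : R, g ≠ 0 → ∀ s : ℕ, ∃ P0, ∀ P ≥ P0, g * c ^ P ∉ maximalIdeal R ^ (ν * P - s)
  | 0, R, _, _, _, x, h => by
      intro c hc
      have := RegS.isDomain _ _ _ h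
      refine ⟨1, fun g hg s => ⟨s + 1, fun P hP hmem => ?_⟩⟩
      have h0 : maximalIdeal R = ⊥ := (IsLocalRing.isField_iff_maximalIdeal_eq.1 h)
      rw [h0, Ideal.bot_pow (by omega), Ideal.mem_bot] at hmem
      exact mul_ne_zero hg (pow_ne_zero _ hc) hmem
  | n+1, R, _, _, _, x, h => by
      intro c hc
      have := RegS.isDomain _ _ _ h
      have hx := h.mem_max
      obtain ⟨h1, h2, h3⟩ := h
      have hloc := RegS.isLocal _ _ _ h3
      have hx0 : x 0 ≠ 0 := fun h => one_ne_zero (h2 1 (by rw [h, zero_mul]))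
      obtain ⟨i, c', rfl, hc'⟩ := exists_pow_mul_not_dvd hx hc
      obtain ⟨ν, hν⟩ := RegS.ord n _ _ h3 (Ideal.Quotient.mk _ c')
        (by rwa [Ne, Ideal.Quotient.eq_zero_iff_mem, Ideal.mem_span_singleton])
      obtain ⟨k, hk⟩ := artin_rees_elt (maximalIdeal R) hx0
      have hk' := artin_rees_pow _ hk
      refine ⟨ν + i * k, fun g hg s => ?_⟩
      obtain ⟨j, g', rfl, hg'⟩ := exists_pow_mul_not_dvd hx hg
      obtain ⟨P0, hP0⟩ := hν (Ideal.Quotient.mk _ g')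
        (by rwa [Ne, Ideal.Quotient.eq_zero_iff_mem, Ideal.mem_span_singleton]) (s + j * k)
      refine ⟨P0, fun P hP hmem => hP0 P hP ?_⟩
      have h4 : g' * c' ^ P ∈ maximalIdeal R ^ ((ν + i * k) * P - s - (j + i * P) * k) := by
        apply hk'
        convert hmem using 1; ring
      rw [max_quot, ← Ideal.map_pow, ← map_pow, ← map_mul]
      apply Ideal.mem_map_of_mem
      convert h4 using 2
      rw [Nat.sub_sub, show (ν + i * k) * P = ν * P + i * P * k by ring, show s + (j + i * P) * k = (s + j * k) + i * P * k by ring,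
        Nat.add_sub_add_right]

lemma RegS.max_eq : ∀ (n : ℕ) (R : Type) [CommRing R] [IsLocalRing R] (x : ℕ → R), RegS n R x →
    maximalIdeal R = Ideal.span (Set.range (fun i : Fin n => x i))
  | 0, R, _, _, x, h => by
      rw [IsLocalRing.isField_iff_maximalIdeal_eq.1 h]; simp
  | n+1, R, _, _, x, h => by
      have hx := h.mem_max
      obtain ⟨h1, h2, h3⟩ := h
      have hloc := RegS.isLocal _ _ _ h3
      have ih := RegS.max_eq n _ _ h3
      apply le_antisymm
      · intro a ha
        have : Ideal.Quotient.mk (Ideal.span {x 0}) a ∈ maximalIdeal (R ⧸ Ideal.span {x 0}) := by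
          rw [max_quot]; exact Ideal.mem_map_of_mem _ ha
        rw [ih, show (Set.range fun i : Fin n => Ideal.Quotient.mk (Ideal.span {x 0}) (x (i+1))) =
          Ideal.Quotient.mk (Ideal.span {x 0}) '' (Set.range fun i : Fin n => x (i+1)) by rw [← Set.range_comp]; rfl,
          ← Ideal.map_span, Ideal.mem_map_iff_of_surjective _ Ideal.Quotient.mk_surjective] at this
        obtain ⟨b, hb, e⟩ := this
        rw [Ideal.Quotient.eq, Ideal.mem_span_singleton] at e
        obtain ⟨c, hc⟩ := e
        have : a = b + x 0 * (-c) := by linear_combination -hc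
        rw [this]
        apply Ideal.add_mem
        · refine Ideal.span_mono ?_ hb
          rintro _ ⟨i, rfl⟩
          exact ⟨i.succ, by simp⟩
        · apply Ideal.mul_mem_right
          exact Ideal.subset_span ⟨0, rfl⟩
      · rw [Ideal.span_le]
        rintro _ ⟨i, rfl⟩
        refine Fin.cases hx (fun i => ?_) i
        have h5 : Ideal.Quotient.mk (Ideal.span {x 0}) (x (i+1)) ∈ maximalIdeal (R ⧸ Ideal.span {x 0}) := by
          rw [ih]; exact Ideal.subset_span ⟨i, rfl⟩
        simp only [SetLike.mem_coe, Fin.val_succ]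
        rw [mem_maximalIdeal] at h5 ⊢
        exact fun hu => h5 (hu.map _)

lemma RegS.of_dim : ∀ (d : ℕ) (R : Type) [CommRing R] [IsNoetherianRing R] [IsLocalRing R] (x : Fin d → R),
    Ideal.span (Set.range x) = maximalIdeal R → (d : WithBot ℕ∞) ≤ ringKrullDim R → ∃ x' : ℕ → R, RegS d R x'
  | 0, R, _, _, _, x, hx, hd => by
      refine ⟨fun _ => 0, ?_⟩
      apply IsLocalRing.isField_iff_maximalIdeal_eq.2
      rw [← hx]; simp
  | d+1, R, _, _, _, x, hx, hd => by
      have hht : (maximalIdeal R).height ≠ 0 := by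
        intro h0
        rw [← IsLocalRing.maximalIdeal_height_eq_ringKrullDim, h0] at hd
        norm_cast at hd
      have hfin : (minimalPrimes R).Finite := minimalPrimes.finite_of_isNoetherianRing R
      obtain ⟨y, hym, hy2, hymin⟩ : ∃ y ∈ maximalIdeal R, y ∉ maximalIdeal R ^ 2 ∧ ∀ P ∈ minimalPrimes R, y ∉ P := by
        by_contra hcon
        push Not at hcon
        have hsub := (Ideal.subset_union_prime (s := insert (maximalIdeal R ^ 2) hfin.toFinset) (f := id)
          (maximalIdeal R ^ 2) (maximalIdeal R ^ 2) (I := maximalIdeal R) (by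
            intro i hi h1 h2
            rw [Finset.mem_insert] at hi
            have : i ∈ minimalPrimes R := by simpa using hi.resolve_left h1
            exact this.1.1)).1 (by
            intro y hy
            by_cases hy2 : y ∈ maximalIdeal R ^ 2
            · exact Set.mem_biUnion (x := maximalIdeal R ^ 2) (by simp) hy2
            · obtain ⟨P, hP, hyP⟩ := hcon y hy hy2
              exact Set.mem_biUnion (x := P) (by simp [hP]) hyP)
        obtain ⟨i, hi, hle⟩ := hsub
        rw [Finset.mem_insert] at hi
        rcases hi with rfl | hi
        · have h0 : maximalIdeal R = ⊥ := by
            apply Submodule.eq_bot_of_le_smul_of_le_jacobson_bot (maximalIdeal R) (maximalIdeal R) (IsNoetherian.noetherian _)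
            · simpa [sq] using hle
            · exact IsLocalRing.maximalIdeal_le_jacobson _
          apply hht
          rw [Ideal.height_eq_zero_iff]
          obtain ⟨P, hP, hPm⟩ := Ideal.exists_minimalPrimes_le (I := (⊥ : Ideal R)) (J := maximalIdeal R) bot_le
          have : P = maximalIdeal R := le_antisymm hPm (by rw [h0]; exact bot_le)
          rw [← this]; exact hP
        · have hi' : i ∈ minimalPrimes R := by simpa using hi
          have : maximalIdeal R = i := ((maximalIdeal.isMaximal R).eq_of_le hi'.1.1.ne_top hle)
          apply hht
          rw [Ideal.height_eq_zero_iff, this]; exact hi'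
      -- exchange
      have hy' := hym
      rw [← hx, Ideal.mem_span_range_iff_exists_fun] at hy'
      obtain ⟨c, hc⟩ := hy'
      obtain ⟨i, hi⟩ : ∃ i, IsUnit (c i) := by
        by_contra hcon
        push Not at hcon
        apply hy2
        rw [← hc, sq]
        apply Ideal.sum_mem
        intro i _
        apply Ideal.mul_mem_mul
        · exact (mem_maximalIdeal _).2 (hcon i)
        · rw [← hx]; exact Ideal.subset_span ⟨i, rfl⟩
      have hyt : Ideal.span {y} ≠ ⊤ := by
        rw [Ne, Ideal.span_singleton_eq_top]; exact (mem_maximalIdeal _).1 hym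
      have : Nontrivial (R ⧸ Ideal.span {y}) := Ideal.Quotient.nontrivial_iff.2 hyt
      have hloc : IsLocalRing (R ⧸ Ideal.span {y}) := IsLocalRing.of_surjective' (Ideal.Quotient.mk _) Ideal.Quotient.mk_surjective
      have hspan : Ideal.span (Set.range fun j => Ideal.Quotient.mk (Ideal.span {y}) (x (i.succAbove j))) = maximalIdeal (R ⧸ Ideal.span {y}) := by
        rw [max_quot, ← hx, Ideal.map_span]
        apply le_antisymm
        · apply Ideal.span_mono
          rintro _ ⟨j, rfl⟩
          exact ⟨_, ⟨_, rfl⟩, rfl⟩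
        · rw [Ideal.span_le]
          rintro _ ⟨_, ⟨j, rfl⟩, rfl⟩
          have hS : ∀ j, Ideal.Quotient.mk (Ideal.span {y}) (x (i.succAbove j)) ∈
            Ideal.span (Set.range fun j => Ideal.Quotient.mk (Ideal.span {y}) (x (i.succAbove j))) :=
            fun j => Ideal.subset_span ⟨j, rfl⟩
          rcases Fin.eq_self_or_eq_succAbove i j with rfl | ⟨k, rfl⟩
          · rw [Fin.sum_univ_succAbove _ j] at hc
            obtain ⟨u, hu⟩ := isUnit_iff_exists_inv.1 hi
            have e : Ideal.Quotient.mk (Ideal.span {y}) (x j) = - ∑ k, Ideal.Quotient.mk (Ideal.span {y}) (u * c (j.succAbove k)) * Ideal.Quotient.mk (Ideal.span {y}) (x (j.succAbove k)) := by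
              simp_rw [← map_mul]
              rw [← map_sum, ← map_neg, Ideal.Quotient.eq, Ideal.mem_span_singleton]
              refine ⟨u, ?_⟩
              rw [← hc]
              simp_rw [mul_assoc, ← Finset.mul_sum]
              linear_combination (-x j) * hu
            rw [SetLike.mem_coe, e]
            apply neg_mem
            apply Ideal.sum_mem
            intro k _
            exact Ideal.mul_mem_left _ _ (hS k)
          · exact hS k
      have hdim : (d : WithBot ℕ∞) ≤ ringKrullDim (R ⧸ Ideal.span {y}) := by
        have h1 := ringKrullDim_le_ringKrullDim_quotient_add_card ({y} : Finset R) (by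
          rw [IsLocalRing.ringJacobson_eq_maximalIdeal]; simpa using hym)
        rw [Finset.coe_singleton, Finset.card_singleton] at h1
        have h2 := hd.trans h1
        push_cast at h2
        generalize ringKrullDim (R ⧸ Ideal.span {y}) = z at h2
        induction z with
        | bot => exact absurd h2 (by simp)
        | coe z =>
          induction z with
          | top => exact_mod_cast le_top
          | coe z => norm_cast at h2 ⊢; omega
      obtain ⟨x', hx'⟩ := RegS.of_dim d _ _ hspan hdim
      have hdom := RegS.isDomain _ _ _ hx'
      have hprime : (Ideal.span {y}).IsPrime := (Ideal.Quotient.isDomain_iff_prime _).1 hdom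
      -- a minimal prime below (y) is zero
      obtain ⟨P, hP, hPy⟩ := Ideal.exists_minimalPrimes_le (I := (⊥ : Ideal R)) (J := Ideal.span {y}) bot_le
      have hP0 : P = ⊥ := by
        apply Submodule.eq_bot_of_le_smul_of_le_jacobson_bot (Ideal.span {y}) P (IsNoetherian.noetherian _)
        · intro a ha
          obtain ⟨b, rfl⟩ := Ideal.mem_span_singleton.1 (hPy ha)
          have hb : b ∈ P := (hP.1.1.mem_or_mem ha).resolve_left (hymin P hP)
          exact Submodule.smul_mem_smul (Ideal.mem_span_singleton_self y) hb
        · rw [Ideal.span_le, Set.singleton_subset_iff]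
          exact IsLocalRing.maximalIdeal_le_jacobson _ hym
      have hPp := hP.1.1
      rw [hP0] at hPp
      have hy0 : y ≠ 0 := fun h => hymin P hP (by rw [h]; exact P.zero_mem)
      have hdomR : IsDomain R := by
        have : NoZeroDivisors R := ⟨fun {a b} hab => by simpa using hPp.mem_or_mem (show a * b ∈ (⊥ : Ideal R) by simpa using hab)⟩
        exact NoZeroDivisors.to_isDomain R
      choose lift hlift using fun z : R ⧸ Ideal.span {y} => Ideal.Quotient.mk_surjective z
      refine ⟨fun j => Nat.casesOn j y (fun j => lift (x' j)), fun z => ?_, fun z hz => ?_, ?_⟩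
      · by_contra hu
        have h1 := (maximalIdeal R).sub_mem ((mem_maximalIdeal _).2 hu) ((maximalIdeal R).mul_mem_right z hym)
        simp at h1
      · exact (mul_eq_zero.1 hz).resolve_left hy0
      · have h9 : (fun i => Ideal.Quotient.mk (Ideal.span {y}) (lift (x' i))) = x' := funext fun j => hlift _
        have h10 : RegS d (R ⧸ Ideal.span {y}) (fun i => Ideal.Quotient.mk (Ideal.span {y}) (lift (x' i))) := by
          rw [h9]; exact hx'
        exact h10
end

section
open IsLocalRing Polynomial

lemma jac_of_integral {R S : Type} [CommRing R] [CommRing S] [Algebra R S] [Algebra.IsIntegral R S] [IsLocalRing R]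
    {a : R} (ha : a ∈ maximalIdeal R) {z : S} {k : ℕ} (hz : z ^ k = algebraMap R S a) : ∀ y, IsUnit (1 + z * y) := by
  intro y
  by_contra hu
  obtain ⟨M, hM, hmem⟩ := exists_max_ideal_of_mem_nonunits (mem_nonunits_iff.2 hu)
  have h1 : (M.comap (algebraMap R S)).IsMaximal := Ideal.isMaximal_comap_of_isIntegral_of_isMaximal M
  have h2 := IsLocalRing.eq_maximalIdeal h1
  rw [← h2, Ideal.mem_comap, ← hz] at ha
  have h3 := hM.isPrime.mem_of_pow_mem _ ha
  apply hM.ne_top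
  rw [Ideal.eq_top_iff_one]
  have := M.sub_mem hmem (M.mul_mem_right y h3)
  simpa using this

lemma adj_nzd {R : Type} [CommRing R] {f : R[X]} (hf : f.Monic) {a : R} (ha : ∀ y, a * y = 0 → y = 0) :
    ∀ y : AdjoinRoot f, AdjoinRoot.of f a * y = 0 → y = 0 := by
  intro y hy
  let b := (AdjoinRoot.powerBasis' hf).basis
  apply b.repr.injective
  ext i
  have h1 : a • y = 0 := by rw [← hy, Algebra.smul_def]; rfl
  have h2 := congrArg (fun z => b.repr z i) h1
  simp only [map_smul, Finsupp.smul_apply, smul_eq_mul, map_zero, Finsupp.zero_apply] at h2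
  simpa using ha _ h2

lemma adjQuot_exists {R : Type} [CommRing R] (f : R[X]) (a : R) :
    ∃ e : (AdjoinRoot f ⧸ Ideal.span {AdjoinRoot.of f a}) ≃+* AdjoinRoot (f.map (Ideal.Quotient.mk (Ideal.span {a}))),
      (∀ r, e (Ideal.Quotient.mk _ (AdjoinRoot.of f r)) = AdjoinRoot.of _ (Ideal.Quotient.mk _ r)) ∧
      e (Ideal.Quotient.mk _ (AdjoinRoot.root f)) = AdjoinRoot.root _ := by
  have h : Ideal.span {AdjoinRoot.of f a} = (Ideal.span {a}).map (AdjoinRoot.of f) := by rw [Ideal.map_span]; simp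
  rw [h]
  have key : ∀ g : R[X], (AdjoinRoot.quotEquivQuotMap f (Ideal.span {a})).toRingEquiv (Ideal.Quotient.mk _ (AdjoinRoot.mk f g)) =
      AdjoinRoot.mk _ (g.map (Ideal.Quotient.mk _)) := fun g => AdjoinRoot.quotEquivQuotMap_apply_mk f g (Ideal.span {a})
  refine ⟨(AdjoinRoot.quotEquivQuotMap f (Ideal.span {a})).toRingEquiv, fun r => ?_, ?_⟩
  · have := key (C r)
    rw [Polynomial.map_C, AdjoinRoot.mk_C, AdjoinRoot.mk_C] at this
    exact this
  · have := key X
    rw [Polynomial.map_X, AdjoinRoot.mk_X, AdjoinRoot.mk_X] at this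
    exact this

noncomputable def adjQuot {R : Type} [CommRing R] (f : R[X]) (a : R) :
    (AdjoinRoot f ⧸ Ideal.span {AdjoinRoot.of f a}) ≃+* AdjoinRoot (f.map (Ideal.Quotient.mk (Ideal.span {a}))) :=
  (adjQuot_exists f a).choose

lemma adjQuot_of {R : Type} [CommRing R] (f : R[X]) (a r : R) :
    adjQuot f a (Ideal.Quotient.mk _ (AdjoinRoot.of f r)) = AdjoinRoot.of _ (Ideal.Quotient.mk _ r) :=
  (adjQuot_exists f a).choose_spec.1 r

lemma adjQuot_root {R : Type} [CommRing R] (f : R[X]) (a : R) :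
    adjQuot f a (Ideal.Quotient.mk _ (AdjoinRoot.root f)) = AdjoinRoot.root _ :=
  (adjQuot_exists f a).choose_spec.2

lemma adjRootQuot {R : Type} [CommRing R] (p : ℕ) (hp : 0 < p) (a : R) :
    ∃ e : (R ⧸ Ideal.span {a}) ≃+* (AdjoinRoot (X ^ p - C a) ⧸ Ideal.span {AdjoinRoot.root (X ^ p - C a)}),
      ∀ r, e (Ideal.Quotient.mk _ r) = Ideal.Quotient.mk _ (AdjoinRoot.of _ r) := by
  set f : R[X] := X ^ p - C a with hf
  have hroot : AdjoinRoot.root f ^ p = AdjoinRoot.of f a := by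
    have := AdjoinRoot.eval₂_root f
    simp only [hf, eval₂_sub, eval₂_X_pow, eval₂_C] at this
    exact sub_eq_zero.1 this
  let φ : R →+* (AdjoinRoot f ⧸ Ideal.span {AdjoinRoot.root f}) := (Ideal.Quotient.mk _).comp (AdjoinRoot.of f)
  have hsurj : Function.Surjective φ := by
    intro z
    obtain ⟨z, rfl⟩ := Ideal.Quotient.mk_surjective z
    obtain ⟨g, rfl⟩ := AdjoinRoot.mk_surjective z
    refine ⟨g.coeff 0, ?_⟩
    show Ideal.Quotient.mk _ _ = _
    rw [Ideal.Quotient.eq, Ideal.mem_span_singleton]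
    have : g = X * g.divX + C (g.coeff 0) := by rw [mul_comm]; exact (divX_mul_X_add g).symm
    refine ⟨- AdjoinRoot.mk f g.divX, ?_⟩
    have h2 := congrArg (AdjoinRoot.mk f) this
    rw [map_add, map_mul, AdjoinRoot.mk_X, AdjoinRoot.mk_C] at h2
    rw [h2]; ring
  have hker : RingHom.ker φ = Ideal.span {a} := by
    apply le_antisymm
    · intro r hr
      rw [RingHom.mem_ker] at hr
      have hr : Ideal.Quotient.mk _ (AdjoinRoot.of f r) = 0 := hr
      rw [Ideal.Quotient.eq_zero_iff_mem, Ideal.mem_span_singleton] at hr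
      obtain ⟨y, hy⟩ := hr
      let ψ : AdjoinRoot f →+* R ⧸ Ideal.span {a} := AdjoinRoot.lift (Ideal.Quotient.mk _) 0 (by
        simp [hf, hp.ne'])
      have := congrArg ψ hy
      simp only [ψ, AdjoinRoot.lift_of, map_mul, AdjoinRoot.lift_root, zero_mul] at this
      exact Ideal.Quotient.eq_zero_iff_mem.1 this
    · rw [Ideal.span_le, Set.singleton_subset_iff, SetLike.mem_coe, RingHom.mem_ker]
      show Ideal.Quotient.mk _ (AdjoinRoot.of f a) = 0
      rw [Ideal.Quotient.eq_zero_iff_mem, Ideal.mem_span_singleton, ← hroot]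
      exact dvd_pow_self _ hp.ne'
  refine ⟨(Ideal.quotEquivOfEq hker.symm).trans (RingHom.quotientKerEquivOfSurjective hsurj), fun r => rfl⟩

lemma adj_root_pow {R : Type} [CommRing R] (p : ℕ) (a : R) :
    AdjoinRoot.root (X ^ p - C a) ^ p = AdjoinRoot.of (X ^ p - C a) a := by
  have := AdjoinRoot.eval₂_root (X ^ p - C a)
  simp only [eval₂_sub, eval₂_X_pow, eval₂_C] at this
  exact sub_eq_zero.1 this

lemma adj_integral {R : Type} [CommRing R] {f : R[X]} (hf : f.Monic) : Algebra.IsIntegral R (AdjoinRoot f) := by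
  have := (AdjoinRoot.powerBasis' hf).finite
  infer_instance

lemma RegS.succ_intro {n : ℕ} {R : Type} [CommRing R] (y : ℕ → R) (x0 : R) (h0 : y 0 = x0) (y' : ℕ → R)
    (h' : ∀ i, y (i+1) = y' i) (h1 : ∀ z, IsUnit (1 + x0 * z)) (h2 : ∀ z, x0 * z = 0 → z = 0)
    (h3 : RegS n (R ⧸ Ideal.span {x0}) (fun i => Ideal.Quotient.mk _ (y' i))) : RegS (n+1) R y := by
  subst h0
  obtain rfl : (fun i => y (i+1)) = y' := funext h'
  exact ⟨h1, h2, h3⟩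

lemma RegS.adjX (p : ℕ) (hp : 0 < p) : ∀ (i n : ℕ) (_ : i < n) (R : Type) [CommRing R] (x : ℕ → R), RegS n R x →
    RegS n (AdjoinRoot (X ^ p - C (x i))) (fun j => if j = i then AdjoinRoot.root _ else AdjoinRoot.of _ (x j))
  | 0, 0, hi, R, _, x, h => by omega
  | 0, n+1, hi, R, _, x, h => by
      have hloc := RegS.isLocal _ _ _ h
      have hx := h.mem_max
      obtain ⟨h1, h2, h3⟩ := h
      have hf : (X ^ p - C (x 0) : R[X]).Monic := monic_X_pow_sub_C _ hp.ne'
      have := adj_integral hf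
      have hroot := adj_root_pow p (x 0)
      refine RegS.succ_intro _ (AdjoinRoot.root _) (if_pos rfl) (fun j => AdjoinRoot.of _ (x (j+1))) (fun j => if_neg (Nat.succ_ne_zero j)) ?_ ?_ ?_
      · exact jac_of_integral hx hroot
      · intro y hy
        apply adj_nzd hf h2
        have h7 := congrArg (AdjoinRoot.root (X ^ p - C (x 0)) ^ (p - 1) * ·) hy
        simp only [← mul_assoc, ← pow_succ, mul_zero] at h7
        rw [Nat.sub_add_cancel hp] at h7
        rw [← hroot, h7]
      · obtain ⟨e, he⟩ := adjRootQuot p hp (x 0)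
        exact RegS.ofEquiv n _ _ e _ _ (fun j _ => (he _).symm) h3
  | i+1, 0, hi, R, _, x, h => by omega
  | i+1, n+1, hi, R, _, x, h => by
      have hloc := RegS.isLocal _ _ _ h
      have hx := h.mem_max
      obtain ⟨h1, h2, h3⟩ := h
      have hf : (X ^ p - C (x (i+1)) : R[X]).Monic := monic_X_pow_sub_C _ hp.ne'
      have := adj_integral hf
      refine RegS.succ_intro _ (AdjoinRoot.of _ (x 0)) (if_neg (Nat.succ_ne_zero i).symm) (fun j => if j + 1 = i + 1 then AdjoinRoot.root _ else AdjoinRoot.of _ (x (j+1))) (fun j => rfl) ?_ ?_ ?_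
      · exact jac_of_integral (k := 1) hx (pow_one _)
      · exact adj_nzd hf h2
      · have ih := RegS.adjX p hp i n (by omega) _ _ h3
        have hmap : (X ^ p - C (x (i+1)) : R[X]).map (Ideal.Quotient.mk (Ideal.span {x 0})) =
          X ^ p - C (Ideal.Quotient.mk (Ideal.span {x 0}) (x (i+1))) := by simp
        rw [← hmap] at ih
        have H : RegS n (AdjoinRoot (X ^ p - C (x (i+1))) ⧸ Ideal.span {AdjoinRoot.of (X ^ p - C (x (i+1))) (x 0)})
            (fun j => Ideal.Quotient.mk _ (if j + 1 = i + 1 then AdjoinRoot.root _ else AdjoinRoot.of _ (x (j+1)))) := by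
          refine RegS.ofEquiv n _ _ (adjQuot _ _).symm _ _ ?_ ih
          intro j hj
          rw [RingEquiv.eq_symm_apply]
          by_cases hji : j = i
          · simp only [hji, if_true]; exact adjQuot_root _ _
          · simp only [hji, Nat.succ_inj, if_false]; exact adjQuot_of _ _ _
        exact H

lemma RegS.adjT (p : ℕ) (hp : p.Prime) : ∀ (n : ℕ) (R : Type) [CommRing R] (x : ℕ → R) (t : R) (ht : ∀ a, IsUnit (t - a ^ p)),
    RegS n R x → RegS n (AdjoinRoot (X ^ p - C t)) (fun j => AdjoinRoot.of _ (x j))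
  | 0, R, _, x, t, ht, h => by
      show IsField _
      let := IsField.toField h
      have hirr : Irreducible (X ^ p - C t : R[X]) := X_pow_sub_C_irreducible_of_prime hp (by
        intro b hb
        have := ht b
        rw [hb, sub_self] at this
        simp at this)
      have := Fact.mk hirr
      exact Field.toIsField (AdjoinRoot (X ^ p - C t : R[X]))
  | n+1, R, _, x, t, ht, h => by
      have hloc := RegS.isLocal _ _ _ h
      have hx := h.mem_max
      obtain ⟨h1, h2, h3⟩ := h
      have hf : (X ^ p - C t : R[X]).Monic := monic_X_pow_sub_C _ hp.pos.ne'
      have := adj_integral hf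
      refine RegS.succ_intro _ (AdjoinRoot.of _ (x 0)) rfl (fun j => AdjoinRoot.of _ (x (j+1))) (fun j => rfl) ?_ ?_ ?_
      · exact jac_of_integral (k := 1) hx (pow_one _)
      · exact adj_nzd hf h2
      · have ih := RegS.adjT p hp n _ _ (Ideal.Quotient.mk (Ideal.span {x 0}) t) (by
          intro a
          obtain ⟨a, rfl⟩ := Ideal.Quotient.mk_surjective a
          rw [← map_pow, ← map_sub]
          exact (ht a).map _) h3
        have hmap : (X ^ p - C t : R[X]).map (Ideal.Quotient.mk (Ideal.span {x 0})) =
          X ^ p - C (Ideal.Quotient.mk (Ideal.span {x 0}) t) := by simp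
        rw [← hmap] at ih
        refine RegS.ofEquiv n _ _ (adjQuot _ _).symm _ _ ?_ ih
        intro j hj
        rw [RingEquiv.eq_symm_apply]
        exact adjQuot_of _ _ _
end

/-- elementwise flatness of `A/s → B/J` -/
def FlI {A B : Type} [CommRing A] [CommRing B] (φ : A →+* B) (s : A) (J : Ideal B) : Prop :=
  ∀ (ι : Type) [Fintype ι] (a : ι → A) (y : ι → B), ∑ i, φ (a i) * y i ∈ J →
    ∃ (κ : Type) (_ : Fintype κ) (e : ι → κ → A) (z : κ → B),
      (∀ i, y i - ∑ l, φ (e i l) * z l ∈ J) ∧ ∀ l, s ∣ ∑ i, a i * e i l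

section
variable {A B C : Type} [CommRing A] [CommRing B] [CommRing C]

lemma FlI.multi {φ : A →+* B} {s : A} {J : Ideal B} (h : FlI φ s J) (n : ℕ) :
    ∀ (ι : Type) [Fintype ι] (a : Fin n → ι → A) (y : ι → B), (∀ k, ∑ i, φ (a k i) * y i ∈ J) →
    ∃ (κ : Type) (_ : Fintype κ) (e : ι → κ → A) (z : κ → B),
      (∀ i, y i - ∑ l, φ (e i l) * z l ∈ J) ∧ ∀ k l, s ∣ ∑ i, a k i * e i l := by
  induction n with
  | zero =>
    intro ι _ a y _
    classical
    refine ⟨ι, inferInstance, fun i l => if i = l then 1 else 0, y, fun i => ?_, fun k => k.elim0⟩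
    simp [apply_ite φ]
  | succ n ih =>
    intro ι _ a y hy
    obtain ⟨κ, _, e, z, h1, h2⟩ := ih ι (fun k => a k.succ) y (fun k => hy k.succ)
    have h3 : ∑ l, φ (∑ i, a 0 i * e i l) * z l ∈ J := by
      have : ∑ i, φ (a 0 i) * (y i - ∑ l, φ (e i l) * z l) ∈ J :=
        J.sum_mem fun i _ => J.mul_mem_left _ (h1 i)
      have h4 := J.sub_mem (hy 0) this
      have e1 : ∑ l, φ (∑ i, a 0 i * e i l) * z l = ∑ i, φ (a 0 i) * ∑ l, φ (e i l) * z l := by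
        simp only [map_sum, map_mul, Finset.sum_mul, Finset.mul_sum]
        rw [Finset.sum_comm]
        simp only [mul_assoc]
      rw [e1]
      convert h4 using 1
      simp only [mul_sub, Finset.sum_sub_distrib]
      ring
    obtain ⟨κ', _, f, w, h5, h6⟩ := h κ _ z h3
    have swap : ∀ (b : ι → A) m, ∑ i, b i * ∑ l, e i l * f l m = ∑ l, (∑ i, b i * e i l) * f l m := by
      intro b m
      simp only [Finset.sum_mul, Finset.mul_sum]
      rw [Finset.sum_comm]
      simp only [mul_assoc]
    refine ⟨κ', inferInstance, fun i m => ∑ l, e i l * f l m, w, fun i => ?_, fun k m => ?_⟩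
    · have h7 : ∑ l, φ (e i l) * (z l - ∑ m, φ (f l m) * w m) ∈ J :=
        J.sum_mem fun l _ => J.mul_mem_left _ (h5 l)
      convert J.add_mem (h1 i) h7 using 1
      have : ∑ m, φ (∑ l, e i l * f l m) * w m = ∑ l, φ (e i l) * ∑ m, φ (f l m) * w m := by
        simp only [map_sum, map_mul, Finset.sum_mul, Finset.mul_sum]
        rw [Finset.sum_comm]
        simp only [mul_assoc]
      rw [this]
      simp only [mul_sub, Finset.sum_sub_distrib]
      ring
    · rw [swap]
      refine Fin.cases ?_ (fun k => ?_) k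
      · exact h6 m
      · exact Finset.dvd_sum fun l _ => (h2 k l).mul_right _

lemma FlI.comp {φ : A →+* B} {ψ : B →+* C} {s : A} {J : Ideal C} (h : FlI φ s ⊥) (h' : FlI ψ 0 J) :
    FlI (ψ.comp φ) s J := by
  intro ι _ a y hy
  obtain ⟨κ, _, b, z, h1, h2⟩ := h' ι (fun i => φ (a i)) y hy
  have h3 : ∀ l, ∃ (μ : Type) (_ : Fintype μ) (e : ι → μ → A) (w : μ → B),
      (∀ i, b i l = ∑ m, φ (e i m) * w m) ∧ ∀ m, s ∣ ∑ i, a i * e i m := by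
    intro l
    obtain ⟨μ, i1, e, w, h4, h5⟩ := h ι a (fun i => b i l) (by
      rw [Ideal.mem_bot]; exact zero_dvd_iff.1 (h2 l))
    exact ⟨μ, i1, e, w, fun i => sub_eq_zero.1 (h4 i), h5⟩
  choose μ i1 e w h4 h5 using h3
  refine ⟨Σ l, μ l, inferInstance, fun i q => e q.1 i q.2, fun q => ψ (w q.1 q.2) * z q.1, fun i => ?_, fun q => h5 q.1 q.2⟩
  convert h1 i using 2
  rw [Fintype.sum_sigma]
  refine Finset.sum_congr rfl fun l _ => ?_
  simp only [RingHom.comp_apply, h4, map_sum, map_mul, Finset.sum_mul, mul_assoc]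

lemma FlI.mod {φ : A →+* B} (s : A) (h : FlI φ 0 ⊥) : FlI φ s (Ideal.span {φ s}) := by
  intro ι _ a y hy
  obtain ⟨u, hu⟩ := Ideal.mem_span_singleton.1 hy
  obtain ⟨κ, _, e, z, h1, h2⟩ := h (Option ι) (fun o => o.elim (-s) a) (fun o => o.elim u y) (by
    rw [Ideal.mem_bot, Fintype.sum_option]
    simp [hu])
  refine ⟨κ, inferInstance, fun i l => e (some i) l, z, fun i => ?_, fun l => ?_⟩
  · have h3 : y i - ∑ l, φ (e (some i) l) * z l = 0 := (Ideal.mem_bot).1 (h1 (some i))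
    rw [h3]; exact zero_mem _
  · have := zero_dvd_iff.1 (h2 l)
    rw [Fintype.sum_option] at this
    exact ⟨e none l, by simp at this; linear_combination this⟩

lemma FlI.pull {A' B' : Type} [CommRing A'] [CommRing B'] {φ : A →+* B} {φ' : A' →+* B'} {s : A} {s' : A'} {J : Ideal B} {J' : Ideal B'}
    (α : A →+* A') (β : B →+* B') (hc : ∀ a, β (φ a) = φ' (α a)) (hα : Function.Surjective α) (hβ : Function.Surjective β)
    (hs : ∀ a, s' ∣ α a → s ∣ a) (hJ : ∀ b, b ∈ J ↔ β b ∈ J') (h : FlI φ' s' J') : FlI φ s J := by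
  intro ι _ a y hy
  obtain ⟨κ, _, e, z, h1, h2⟩ := h ι (fun i => α (a i)) (fun i => β (y i)) (by
    have := (hJ _).1 hy
    simpa [hc] using this)
  choose e' he using fun i l => hα (e i l)
  choose z' hz using fun l => hβ (z l)
  refine ⟨κ, inferInstance, e', z', fun i => ?_, fun l => hs _ ?_⟩
  · rw [hJ]; convert h1 i using 1; simp [hc, he, hz]
  · convert h2 l using 1; simp [he]

lemma FlI.push {A' B' : Type} [CommRing A'] [CommRing B'] {φ : A →+* B} {φ' : A' →+* B'} {s : A} {s' : A'} {J : Ideal B} {J' : Ideal B'}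
    (α : A →+* A') (β : B →+* B') (hc : ∀ a, β (φ a) = φ' (α a)) (hα : Function.Surjective α) (hβ : Function.Surjective β)
    (hs : ∀ a, s ∣ a → s' ∣ α a) (hJ : ∀ b, b ∈ J ↔ β b ∈ J') (h : FlI φ s J) : FlI φ' s' J' := by
  intro ι _ a y hy
  choose a' ha using fun i => hα (a i)
  choose y' hy' using fun i => hβ (y i)
  obtain ⟨κ, _, e, z, h1, h2⟩ := h ι a' y' (by
    rw [hJ]; simpa [hc, ha, hy'] using hy)
  refine ⟨κ, inferInstance, fun i l => α (e i l), fun l => β (z l), fun i => ?_, fun l => ?_⟩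
  · convert (hJ _).1 (h1 i) using 1; simp [hc, hy']
  · convert hs _ (h2 l) using 1; simp [ha]

lemma FlI.dev {φ : A →+* B} {t : A} {ρ : B} (h0 : FlI φ t (Ideal.span {φ t, ρ})) (N : ℕ)
    (hn : ∀ n < N, ∀ y, φ t ^ n * y ∈ Ideal.span {φ t ^ (n+1), ρ} → y ∈ Ideal.span {φ t, ρ}) :
    FlI φ (t ^ N) (Ideal.span {φ t ^ N, ρ}) := by
  induction N with
  | zero =>
    intro ι _ a y _
    refine ⟨Empty, inferInstance, fun _ l => l.elim, fun l => l.elim, fun i => ?_, fun l => l.elim⟩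
    have : Ideal.span {φ t ^ 0, ρ} = ⊤ := by
      rw [Ideal.eq_top_iff_one]; exact Ideal.subset_span (by simp)
    rw [this]; trivial
  | succ N ih =>
    have hs := ih (fun n h => hn n (by omega))
    intro ι _ d x hx
    have hle : Ideal.span {φ t ^ (N+1), ρ} ≤ Ideal.span {φ t ^ N, ρ} := by
      rw [Ideal.span_le]
      rintro _ (rfl | rfl)
      · rw [pow_succ]; exact Ideal.mul_mem_right _ _ (Ideal.subset_span (by simp))
      · exact Ideal.subset_span (by simp)
    obtain ⟨κ, _, a, y, h1, h2⟩ := hs ι d x (hle hx)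
    choose b hb using h2
    choose e r he using fun i => Ideal.mem_span_pair.1 (h1 i)
    -- x i = Σ a i j y j + t^N e i + r i ρ
    obtain ⟨u, v, huv⟩ := Ideal.mem_span_pair.1 hx
    have key : φ t ^ N * (∑ j, φ (b j) * y j + ∑ i, φ (d i) * e i) ∈ Ideal.span {φ t ^ (N+1), ρ} := by
      refine Ideal.mem_span_pair.2 ⟨u, v - ∑ i, φ (d i) * r i, ?_⟩
      have e1 : φ t ^ N * ∑ j, φ (b j) * y j = ∑ i, φ (d i) * ∑ j, φ (a i j) * y j := by
        rw [Finset.mul_sum]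
        have : ∀ j, φ t ^ N * (φ (b j) * y j) = ∑ i, φ (d i) * φ (a i j) * y j := by
          intro j
          rw [← mul_assoc, ← map_pow, ← map_mul, ← hb j, map_sum, Finset.sum_mul]
          simp only [map_mul]
        simp only [this, Finset.mul_sum]
        rw [Finset.sum_comm]
        simp only [mul_assoc]
      have e2 : ∑ i, φ (d i) * x i = ∑ i, φ (d i) * ∑ j, φ (a i j) * y j + φ t ^ N * ∑ i, φ (d i) * e i + (∑ i, φ (d i) * r i) * ρ := by
        rw [Finset.mul_sum, Finset.sum_mul, ← Finset.sum_add_distrib, ← Finset.sum_add_distrib]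
        refine Finset.sum_congr rfl fun i _ => ?_
        linear_combination (-φ (d i)) * he i
      rw [mul_add, e1]
      linear_combination huv + e2
    have key2 := hn N (by omega) _ key
    obtain ⟨μ, _, g, z, h3, h4⟩ := h0 (κ ⊕ ι) (Sum.elim b d) (Sum.elim y e) (by
      rw [Fintype.sum_sum_type]; exact key2)
    choose y' r' hy' using fun j => Ideal.mem_span_pair.1 (h3 (Sum.inl j))
    choose e' r'' he' using fun i => Ideal.mem_span_pair.1 (h3 (Sum.inr i))
    refine ⟨μ ⊕ κ, inferInstance, fun i => Sum.elim (fun l => ∑ j, a i j * g (Sum.inl j) l + t ^ N * g (Sum.inr i) l)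
      (fun j => t * a i j), Sum.elim z y', fun i => ?_, ?_⟩
    · rw [Fintype.sum_sum_type]
      simp only [Sum.elim_inl, Sum.elim_inr] at *
      refine Ideal.mem_span_pair.2 ⟨e' i, r i + φ t ^ N * r'' i + ∑ j, φ (a i j) * r' j, ?_⟩
      have e1 : ∑ l, φ (∑ j, a i j * g (Sum.inl j) l + t ^ N * g (Sum.inr i) l) * z l
        = ∑ j, φ (a i j) * (∑ l, φ (g (Sum.inl j) l) * z l) + φ t ^ N * ∑ l, φ (g (Sum.inr i) l) * z l := by
        simp only [map_add, map_sum, map_mul, map_pow, add_mul, Finset.sum_add_distrib, Finset.sum_mul, Finset.mul_sum, mul_assoc]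
        rw [Finset.sum_comm]
      have e2 : ∑ j, φ (a i j) * y j = ∑ j, φ (a i j) * (∑ l, φ (g (Sum.inl j) l) * z l) + ∑ j, φ (t * a i j) * y' j + (∑ j, φ (a i j) * r' j) * ρ := by
        rw [Finset.sum_mul, ← Finset.sum_add_distrib, ← Finset.sum_add_distrib]
        refine Finset.sum_congr rfl fun j _ => ?_
        rw [map_mul]
        linear_combination (-φ (a i j)) * hy' j
      rw [e1]
      linear_combination he i - e2 + φ t ^ N * he' i
    · rintro (l | j)
      · simp only [Sum.elim_inl]
        obtain ⟨c, hc⟩ := h4 l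
        rw [Fintype.sum_sum_type] at hc
        simp only [Sum.elim_inl, Sum.elim_inr] at hc
        refine ⟨c, ?_⟩
        have e1 : ∑ i, d i * (∑ j, a i j * g (Sum.inl j) l + t ^ N * g (Sum.inr i) l) =
          ∑ j, (∑ i, d i * a i j) * g (Sum.inl j) l + t ^ N * ∑ i, d i * g (Sum.inr i) l := by
          simp only [mul_add, Finset.sum_add_distrib, Finset.sum_mul, Finset.mul_sum]
          rw [Finset.sum_comm]
          congr 1
          · simp only [mul_assoc]
          · exact Finset.sum_congr rfl fun i _ => by ring
        rw [e1]
        simp only [hb]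
        have e3 : ∑ j, t ^ N * b j * g (Sum.inl j) l = t ^ N * ∑ j, b j * g (Sum.inl j) l := by
          rw [Finset.mul_sum]; exact Finset.sum_congr rfl fun i _ => by ring
        rw [e3, ← mul_add, hc]; ring
      · simp only [Sum.elim_inr]
        refine ⟨b j, ?_⟩
        have : ∑ i, d i * (t * a i j) = t * ∑ i, d i * a i j := by
          rw [Finset.mul_sum]; exact Finset.sum_congr rfl fun i _ => by ring
        rw [this, hb]; ring

end

section
open Polynomial

lemma perf_rel {p : ℕ} [Fact p.Prime] {E C : Type} [CommRing E] [CommRing C] [CharP E p] [CharP C p]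
    (ψ : E →+* C) [IsPRadical ψ p] {ι : Type} [Fintype ι] (a : ι → E) (y : ι → C)
    (h : ∑ i, ψ (a i) * y i = 0) :
    ∃ (m : ℕ) (Y : ι → E), (∀ i, ψ (Y i) = y i ^ p ^ m) ∧ ∑ i, a i ^ p ^ m * Y i = 0 := by
  choose n Y hY using fun i => IsPRadical.pow_mem ψ p (y i)
  let N := Finset.univ.sup n
  have hN : ∀ i, n i ≤ N := fun i => Finset.le_sup (Finset.mem_univ i)
  let Y' : ι → E := fun i => Y i ^ p ^ (N - n i)
  have hY' : ∀ i, ψ (Y' i) = y i ^ p ^ N := by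
    intro i
    simp only [Y', map_pow, hY]
    rw [← pow_mul, ← pow_add, Nat.add_sub_cancel' (hN i)]
  have hx : ψ (∑ i, a i ^ p ^ N * Y' i) = 0 := by
    rw [map_sum]
    simp only [map_mul, map_pow, hY']
    simp only [← mul_pow]
    rw [← sum_pow_char_pow, h, zero_pow (pow_ne_zero _ (Fact.out : p.Prime).ne_zero)]
  have h2 := IsPRadical.ker_le ψ p (RingHom.mem_ker.2 hx)
  rw [mem_pNilradical] at h2
  obtain ⟨m, hm⟩ := h2
  refine ⟨N + m, fun i => Y' i ^ p ^ m, fun i => ?_, ?_⟩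
  · rw [map_pow, hY', ← pow_mul, ← pow_add]
  · rw [sum_pow_char_pow] at hm
    rw [← hm]
    refine Finset.sum_congr rfl fun i _ => ?_
    rw [mul_pow, ← pow_mul, ← pow_add]

lemma perf_root {p : ℕ} [Fact p.Prime] {C : Type} [CommRing C] [CharP C p] [PerfectRing C p] (m : ℕ) (x : C) :
    ∃ y, y ^ p ^ m = x := (bijective_iterateFrobenius C p m).2 x

lemma perf_inj {p : ℕ} [Fact p.Prime] {C : Type} [CommRing C] [CharP C p] [PerfectRing C p] (m : ℕ) {x y : C}
    (h : x ^ p ^ m = y ^ p ^ m) : x = y := (bijective_iterateFrobenius C p m).1 h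

lemma FlI.perf {p : ℕ} [Fact p.Prime] {D E C : Type} [CommRing D] [CommRing E] [CommRing C] [CharP D p] [CharP E p] [CharP C p]
    [PerfectRing D p] [PerfectRing C p] (ψ : E →+* C) [IsPRadical ψ p] (φ : D →+* E) (t : D) (ρ : E)
    (h : ∀ n : ℕ, FlI φ (t ^ p ^ n) (Ideal.span {φ t ^ p ^ n, ρ ^ p ^ n})) :
    FlI (ψ.comp φ) t (Ideal.span {ψ (φ t), ψ ρ}) := by
  intro ι _ a y hy
  obtain ⟨u, v, huv⟩ := Ideal.mem_span_pair.1 hy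
  obtain ⟨m, Y, hY, hrel⟩ := perf_rel ψ (ι := Option (Option ι))
    (fun o => o.elim (- φ t) (fun o => o.elim (-ρ) (fun i => φ (a i)))) (fun o => o.elim u (fun o => o.elim v y)) (by
      rw [Fintype.sum_option, Fintype.sum_option]
      simp only [Option.elim, map_neg]
      simp only [RingHom.comp_apply] at huv
      linear_combination -huv)
  have hneg : ∀ x : E, ∃ ε : E, (-x) ^ p ^ m = ε * x ^ p ^ m := fun x => ⟨(-1) ^ p ^ m, by rw [← mul_pow]; simp⟩
  rw [Fintype.sum_option, Fintype.sum_option] at hrel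
  simp only [Option.elim] at hrel
  obtain ⟨ε1, h1⟩ := hneg (φ t)
  obtain ⟨ε2, h2⟩ := hneg ρ
  rw [h1, h2] at hrel
  obtain ⟨κ, _, e, z, h3, h4⟩ := h m ι (fun i => a i ^ p ^ m) (fun i => Y (some (some i))) (by
    refine Ideal.mem_span_pair.2 ⟨- ε1 * Y none, - ε2 * Y (some none), ?_⟩
    simp only [map_pow]
    linear_combination -hrel)
  choose e' he' using fun i l => perf_root (p := p) m (e i l)
  choose z' hz' using fun l => perf_root (p := p) m (ψ (z l))
  refine ⟨κ, inferInstance, e', z', fun i => ?_, fun l => ?_⟩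
  · obtain ⟨c, d, hcd⟩ := Ideal.mem_span_pair.1 (h3 i)
    obtain ⟨c', hc'⟩ := perf_root (p := p) m (ψ c)
    obtain ⟨d', hd'⟩ := perf_root (p := p) m (ψ d)
    refine Ideal.mem_span_pair.2 ⟨c', d', perf_inj (p := p) m ?_⟩
    rw [add_pow_char_pow, sub_pow_char_pow, sum_pow_char_pow]
    simp only [mul_pow, hc', hd', hz', ← map_pow, he']
    have := congrArg ψ hcd
    have h5 := hY (some (some i))
    simp only [Option.elim] at h5
    simp only [map_add, map_mul, map_sub, map_sum, h5, map_pow] at this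
    simp only [map_pow, RingHom.comp_apply]
    rw [this]
  · obtain ⟨c, hc⟩ := h4 l
    obtain ⟨c', hc'⟩ := perf_root (p := p) m c
    refine ⟨c', perf_inj (p := p) m ?_⟩
    rw [sum_pow_char_pow]
    simp only [mul_pow, he', hc', hc]

lemma FlI.poly {D E : Type} [CommRing D] [CommRing E] {φ : D →+* E} {t : D} (h : FlI φ t ⊥) :
    FlI ((C : E →+* E[X]).comp φ) t ⊥ := by
  intro ι _ a y hy
  rw [Ideal.mem_bot] at hy
  let N := Finset.univ.sup (fun i => (y i).natDegree) + 1
  have hN : ∀ i, (y i).natDegree < N := fun i => Nat.lt_succ_of_le (Finset.le_sup (f := fun i => (y i).natDegree) (Finset.mem_univ i))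
  have hn : ∀ n : Fin N, ∃ (κ : Type) (_ : Fintype κ) (e : ι → κ → D) (z : κ → E),
      (∀ i, (y i).coeff n = ∑ l, φ (e i l) * z l) ∧ ∀ l, t ∣ ∑ i, a i * e i l := by
    intro n
    obtain ⟨κ, i1, e, z, h1, h2⟩ := h ι a (fun i => (y i).coeff n) (by
      rw [Ideal.mem_bot]
      have := congrArg (fun f => f.coeff n) hy
      simpa [finsetSum_coeff] using this)
    exact ⟨κ, i1, e, z, fun i => sub_eq_zero.1 (h1 i), h2⟩
  choose κ i1 e z h1 h2 using hn
  refine ⟨Σ n, κ n, inferInstance, fun i q => e q.1 i q.2, fun q => C (z q.1 q.2) * X ^ (q.1 : ℕ), fun i => ?_, fun q => h2 q.1 q.2⟩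
  rw [Ideal.mem_bot, sub_eq_zero, Fintype.sum_sigma]
  rw [(y i).as_sum_range' N (hN i), Finset.sum_range]
  refine Finset.sum_congr rfl fun n _ => ?_
  rw [← C_mul_X_pow_eq_monomial, h1, map_sum, Finset.sum_mul]
  refine Finset.sum_congr rfl fun l _ => ?_
  simp [mul_assoc]

lemma FlI.polyMod {D E : Type} [CommRing D] [CommRing E] {φ : D →+* E} {t : D} (h : FlI φ t ⊥) (g : E[X]) (hg : g.Monic) :
    FlI ((C : E →+* E[X]).comp φ) t (Ideal.span {g}) := by
  intro ι _ a y hy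
  have h0 : ∑ i, ((C : E →+* E[X]).comp φ) (a i) * (y i %ₘ g) = 0 := by
    have h1 := (modByMonic_eq_zero_iff_dvd hg).2 (Ideal.mem_span_singleton.1 hy)
    have : ∀ f : E[X], f %ₘ g = modByMonicHom g f := fun f => rfl
    rw [this, map_sum] at h1
    rw [← h1]
    refine Finset.sum_congr rfl fun i _ => ?_
    simp only [RingHom.comp_apply, ← smul_eq_C_mul, map_smul, this]
  obtain ⟨κ, i1, e, z, h1, h2⟩ := h.poly ι a (fun i => y i %ₘ g) h0
  refine ⟨κ, i1, e, z, fun i => ?_, h2⟩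
  have h3 := sub_eq_zero.1 ((Ideal.mem_bot).1 (h1 i))
  rw [← h3, Ideal.mem_span_singleton]
  exact ⟨y i /ₘ g, by linear_combination -modByMonic_add_div (y i) g⟩

structure StI {D0 C : Type} [CommRing D0] [CommRing C] (t : D0) (𝔪 : Ideal D0) (φ : D0 →+* C) (ρ : C) : Prop where
  nzd : ∀ y, φ t * y = 0 → y = 0
  fl : FlI φ t (Ideal.span {φ t})
  rnzd : ∀ y, φ t ∣ ρ * y → φ t ∣ y
  rfl' : FlI φ t (Ideal.span {φ t, ρ})
  ne : 𝔪.map φ ⊔ Ideal.span {ρ} ≠ ⊤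

lemma nzd_pow_dvd {E : Type} [CommRing E] {t r : E} (ht : ∀ y, t * y = 0 → y = 0) (hr : ∀ y, t ∣ r * y → t ∣ y) :
    ∀ (n : ℕ) (y : E), t ^ n ∣ r * y → t ^ n ∣ y
  | 0, y, _ => by simp
  | n+1, y, h => by
      obtain ⟨z, rfl⟩ := hr y ((dvd_pow_self t (Nat.succ_ne_zero n)).trans h)
      obtain ⟨w, hw⟩ := h
      have h1 : r * z = t ^ n * w := by
        refine sub_eq_zero.1 (ht _ ?_)
        linear_combination hw
      obtain ⟨v, rfl⟩ := nzd_pow_dvd ht hr n z ⟨w, h1⟩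
      exact ⟨v, by ring⟩

lemma nzd_pow {E : Type} [CommRing E] {t : E} (ht : ∀ y, t * y = 0 → y = 0) :
    ∀ (n : ℕ) (y : E), t ^ n * y = 0 → y = 0
  | 0, y, h => by simpa using h
  | n+1, y, h => nzd_pow ht n y (ht _ (by rw [← h]; ring))

lemma rnzd_pow {E : Type} [CommRing E] {t r : E} (hr : ∀ y, t ∣ r * y → t ∣ y) :
    ∀ (n : ℕ) (y : E), t ∣ r ^ n * y → t ∣ y
  | 0, y, h => by simpa using h
  | n+1, y, h => rnzd_pow hr n y (hr _ (by convert h using 1; ring))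

lemma lemmaS_flat {D E Eb : Type} [CommRing D] [CommRing E] [CommRing Eb] {t : D} (φ : D →+* E)
    (hnzd : ∀ y, φ t * y = 0 → y = 0) (π : E →+* Eb[X]) (hπ : Function.Surjective π) (hker : ∀ y, π y = 0 ↔ φ t ∣ y)
    (φb : D →+* Eb) (hφ : ∀ a, π (φ a) = C (φb a)) (r : E) (hr : ∀ n b, φ t ^ n ∣ r * b → ∃ b', r * b = φ t ^ n * (r * b'))
    (hfl : FlI (C.comp φb) t (Ideal.span {π r})) (N : ℕ) : FlI φ (t ^ N) (Ideal.span {φ t ^ N, r}) := by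
  refine FlI.dev ?_ N ?_
  · refine FlI.pull (RingHom.id D) π hφ Function.surjective_id hπ (fun a h => h) (fun b => ?_) hfl
    rw [Ideal.mem_span_pair, Ideal.mem_span_singleton]
    constructor
    · rintro ⟨a, c, rfl⟩
      have : π (φ t) = 0 := (hker _).2 dvd_rfl
      simp [this]
    · rintro ⟨c, hc⟩
      obtain ⟨c, rfl⟩ := hπ c
      rw [← map_mul, ← sub_eq_zero, ← map_sub, hker] at hc
      obtain ⟨d, hd⟩ := hc
      exact ⟨d, c, by linear_combination -hd⟩
  · intro n _ y hy
    obtain ⟨a, b, hab⟩ := Ideal.mem_span_pair.1 hy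
    obtain ⟨b', hb'⟩ := hr n b ⟨y - φ t * a, by linear_combination hab⟩
    refine Ideal.mem_span_pair.2 ⟨a, b', sub_eq_zero.1 (nzd_pow hnzd n _ ?_)⟩
    linear_combination hab - hb'

lemma lemmaS {p : ℕ} [Fact p.Prime] {D E Eb : Type} [CommRing D] [CommRing E] [CommRing Eb] [CharP D p] [PerfectRing D p] [CharP E p]
    {t : D} {𝔪 : Ideal D} (φ : D →+* E)
    (hnzd : ∀ y, φ t * y = 0 → y = 0) (π : E →+* Eb[X]) (hπ : Function.Surjective π) (hker : ∀ y, π y = 0 ↔ φ t ∣ y)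
    (φb : D →+* Eb) (hφ : ∀ a, π (φ a) = C (φb a)) (hfl : FlI φb t ⊥) (hne : 𝔪.map φb ≠ ⊤)
    (ρ : E) (g : Eb[X]) (hg : g.Monic) (hgd : 0 < g.natDegree) (v w : Eb) (hvw : v * w = 1) (hρ : π ρ = C v * g) :
    StI t 𝔪 ((PerfectClosure.of E p).comp φ) (PerfectClosure.of E p ρ) := by
  have hp0 : p ≠ 0 := (Fact.out : p.Prime).ne_zero
  have hgn : ∀ f, g * f = 0 → f = 0 := fun f hf => hg.mul_right_eq_zero_iff.1 hf
  have hrn : ∀ y, φ t ∣ ρ * y → φ t ∣ y := by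
    intro y hy
    rw [← hker, map_mul, hρ] at hy
    rw [← hker]
    apply hgn
    have : C w * (C v * g * π y) = 0 := by rw [hy, mul_zero]
    rw [← this, ← mul_assoc, ← mul_assoc, ← C_mul, mul_comm w, hvw]; simp
  have hrnq : ∀ q y, φ t ∣ ρ ^ q * y → φ t ∣ y := rnzd_pow hrn
  have hspan : ∀ q, Ideal.span {π (ρ ^ q)} = Ideal.span {g ^ q} := by
    intro q
    rw [map_pow, hρ, mul_pow]
    apply Ideal.span_singleton_mul_left_unit
    exact ((IsUnit.of_mul_eq_one _ hvw).map C).pow q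
  refine ⟨?_, ?_, ?_, ?_, ?_⟩
  · intro y hy
    obtain ⟨m, Y, h1, h2⟩ := perf_rel (PerfectClosure.of E p) (ι := Unit) (fun _ => φ t) (fun _ => y) (by simpa using hy)
    simp only [Finset.univ_unique, Finset.sum_singleton] at h2
    have h3 := nzd_pow hnzd _ _ h2
    have h4 := h1 default
    rw [h3, map_zero] at h4
    exact eq_zero_of_pow_eq_zero h4.symm
  · have := FlI.perf (p := p) (PerfectClosure.of E p) φ t 0 (fun n => by
      rw [zero_pow (pow_ne_zero _ hp0)]
      exact lemmaS_flat φ hnzd π hπ hker φb hφ 0 (fun n b _ => ⟨0, by simp⟩) (by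
        rw [map_zero, Ideal.span_singleton_eq_bot.2 rfl]; exact hfl.poly) _)
    rw [map_zero, Ideal.span_pair_zero] at this
    exact this
  · rintro y ⟨u, hu⟩
    obtain ⟨m, Y, h1, h2⟩ := perf_rel (PerfectClosure.of E p) (ι := Bool) (fun b => if b then ρ else - φ t) (fun b => if b then y else u) (by
      simp only [Fintype.sum_bool, if_true, Bool.false_eq_true, if_false, map_neg]
      rw [hu]; simp)
    simp only [Fintype.sum_bool, if_true, Bool.false_eq_true, if_false] at h2
    have hd : φ t ^ p ^ m ∣ Y true := by
      refine nzd_pow_dvd hnzd (hrnq (p ^ m)) _ _ ?_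
      rw [neg_pow] at h2
      exact ⟨- (-1) ^ p ^ m * Y false, by linear_combination h2⟩
    obtain ⟨Z, hZ⟩ := hd
    obtain ⟨z, hz⟩ := perf_root (p := p) m (PerfectClosure.of E p Z)
    have h4 := h1 true
    simp only [if_true] at h4
    refine ⟨z, perf_inj (p := p) m ?_⟩
    rw [← h4, hZ, mul_pow, hz, map_mul, map_pow]; rfl
  · exact FlI.perf (p := p) (PerfectClosure.of E p) φ t ρ (fun n =>
      lemmaS_flat φ hnzd π hπ hker φb hφ _ (fun k b hb => by
        obtain ⟨b', rfl⟩ := nzd_pow_dvd hnzd (hrnq _) k b hb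
        exact ⟨b', by ring⟩) (by rw [hspan]; exact hfl.polyMod _ (hg.pow _)) _)
  · intro htop
    rw [Ideal.eq_top_iff_one, Submodule.mem_sup] at htop
    obtain ⟨a, ha, b, hb, hab⟩ := htop
    obtain ⟨b, rfl⟩ := Ideal.mem_span_singleton.1 hb
    obtain ⟨n, f, m, rfl⟩ := Submodule.mem_span_set'.1 ha
    choose m' hm' hm'' using fun i => (m i).2
    obtain ⟨k, Y, h1, h2⟩ := perf_rel (PerfectClosure.of E p) (ι := Option (Option (Fin n)))
      (fun o => o.elim (-1) (fun o => o.elim ρ (fun i => φ (m' i)))) (fun o => o.elim 1 (fun o => o.elim b f)) (by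
        rw [Fintype.sum_option, Fintype.sum_option]
        simp only [Option.elim, map_neg, map_one]
        rw [neg_one_mul, neg_add_eq_zero, ← hab, add_comm]
        congr 1
        refine Finset.sum_congr rfl fun i _ => ?_
        rw [← hm'' i, smul_eq_mul, mul_comm]; rfl)
    rw [Fintype.sum_option, Fintype.sum_option] at h2
    simp only [Option.elim] at h2
    have h3 := h1 none
    simp only [Option.elim, one_pow] at h3
    have h4 : IsUnit (Y none) := by
      have : PerfectClosure.of E p (Y none - 1) = 0 := by rw [map_sub, h3, map_one, sub_self]
      have h5 := IsPRadical.ker_le (PerfectClosure.of E p) p (RingHom.mem_ker.2 this)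
      rw [mem_pNilradical] at h5
      obtain ⟨j, hj⟩ := h5
      rw [sub_pow_char_pow, one_pow, sub_eq_zero] at hj
      exact (isUnit_pow_iff (pow_ne_zero _ hp0)).1 (hj ▸ isUnit_one)
    let q := Ideal.Quotient.mk (𝔪.map φb)
    have : Nontrivial (Eb ⧸ 𝔪.map φb) := Ideal.Quotient.nontrivial_iff.2 hne
    have h6 := congrArg (fun z => (π z).map q) h2
    have h7 : ∀ i, (π (φ (m' i))).map q = 0 := by
      intro i
      rw [hφ, map_C, C_eq_zero]
      exact Ideal.Quotient.eq_zero_iff_mem.2 (Ideal.mem_map_of_mem _ (hm' i))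
    have hpk : p ^ k ≠ 0 := pow_ne_zero _ hp0
    simp only [map_add, map_sum, map_mul, map_pow, Polynomial.map_add, Polynomial.map_sum, Polynomial.map_mul, Polynomial.map_pow, h7,
      zero_pow hpk, zero_mul, Finset.sum_const_zero, add_zero, map_zero, Polynomial.map_zero, map_neg, map_one, Polynomial.map_neg, Polynomial.map_one] at h6
    have h8 : IsUnit ((π (Y none)).map q) := (h4.map π).map (mapRingHom q)
    have h9 : (π ρ).map q ∣ (-1) ^ p ^ k * (π (Y none)).map q := by
      rw [eq_neg_of_add_eq_zero_left h6]
      exact ((dvd_pow_self _ hpk).mul_right _).neg_right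
    have h10 : IsUnit ((π ρ).map q) := isUnit_of_dvd_unit h9 ((isUnit_one.neg.pow _).mul h8)
    rw [hρ, Polynomial.map_mul] at h10
    have h11 := isUnit_of_mul_isUnit_right h10
    have h12 := (hg.map q).eq_one_of_isUnit h11
    have h13 := hg.natDegree_map q
    rw [h12, natDegree_one] at h13
    omega
end

section
open Polynomial

structure Good (p : ℕ) {D0 : Type} [CommRing D0] (t : D0) (𝔪 : Ideal D0) {D : Type} [CommRing D] (φ : D0 →+* D) : Prop where
  charP : CharP D p
  perfect : PerfectRing D p
  nzd : ∀ y, φ t * y = 0 → y = 0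
  fl : FlI φ t (Ideal.span {φ t})
  ne : 𝔪.map φ ≠ ⊤

lemma StI.good {p : ℕ} {D0 : Type} [CommRing D0] {t : D0} {𝔪 : Ideal D0} {C : Type} [CommRing C] {φ : D0 →+* C} {ρ : C}
    (h : StI t 𝔪 φ ρ) (h1 : CharP C p) (h2 : PerfectRing C p) : Good p t 𝔪 φ :=
  ⟨h1, h2, h.nzd, h.fl, fun h3 => h.ne (by rw [h3]; simp)⟩

lemma init_S {p : ℕ} [Fact p.Prime] {D0 : Type} [CommRing D0] [CharP D0 p] [PerfectRing D0 p] {t : D0} {𝔪 : Ideal D0} (ht : t ∈ 𝔪)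
    {D : Type} [CommRing D] {φ : D0 →+* D} (hD : Good p t 𝔪 φ) (f : D[X]) (hf : f.Monic) (hfd : 0 < f.natDegree) :
    ∃ (C : Type) (_ : CommRing C) (_ : CharP C p) (_ : PerfectRing C p) (j : D →+* C) (z : C),
      StI t 𝔪 (j.comp φ) ((f.map j).eval z) := by
  have := hD.charP
  let q := Ideal.Quotient.mk (Ideal.span {φ t})
  have hqs : Function.Surjective q := Ideal.Quotient.mk_surjective
  have hne : 𝔪.map (q.comp φ) ≠ ⊤ := by
    intro h
    apply hD.ne
    rw [← Ideal.map_map] at h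
    have h2 := congrArg (Ideal.comap q) h
    rw [Ideal.comap_map_of_surjective q hqs, Ideal.comap_top] at h2
    rw [← h2]
    symm
    rw [sup_eq_left]
    intro y hy
    have : q y = 0 := by simpa using hy
    obtain ⟨c, rfl⟩ := Ideal.mem_span_singleton.1 (Ideal.Quotient.eq_zero_iff_mem.1 this)
    exact Ideal.mul_mem_right _ _ (Ideal.mem_map_of_mem _ ht)
  have hnt : Nontrivial (D ⧸ Ideal.span {φ t}) := by
    by_contra h
    rw [not_nontrivial_iff_subsingleton] at h
    exact hne ((Ideal.eq_top_iff_one _).2 (by rw [Subsingleton.elim (1 : D ⧸ Ideal.span {φ t}) 0]; exact zero_mem _))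
  have hdvd : ∀ y : D[X], y.map q = 0 ↔ C (φ t) ∣ y := by
    intro y
    rw [C_dvd_iff_dvd_coeff, Polynomial.ext_iff]
    refine forall_congr' fun n => ?_
    rw [coeff_map, coeff_zero, Ideal.Quotient.eq_zero_iff_mem, Ideal.mem_span_singleton]
  have H := lemmaS (p := p) (D := D0) (E := D[X]) (Eb := D ⧸ Ideal.span {φ t}) (t := t) (𝔪 := 𝔪) (C.comp φ) (by
      intro y hy
      ext n
      have := congrArg (fun f => f.coeff n) hy
      simp only [RingHom.comp_apply, coeff_C_mul, coeff_zero] at this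
      simpa using hD.nzd _ this) (mapRingHom q) (map_surjective q hqs) hdvd (q.comp φ) (by intro a; simp) (by
      refine FlI.push (RingHom.id D0) q (fun a => rfl) Function.surjective_id hqs (fun a h => h) (fun b => ?_) hD.fl
      rw [Ideal.mem_bot, Ideal.Quotient.eq_zero_iff_mem]) hne f (f.map q) (hf.map q) (by rw [hf.natDegree_map]; exact hfd) 1 1 (by simp) (by simp)
  refine ⟨PerfectClosure D[X] p, inferInstance, inferInstance, inferInstance, (PerfectClosure.of D[X] p).comp C, PerfectClosure.of D[X] p X, ?_⟩
  have hev : (f.map ((PerfectClosure.of D[X] p).comp C)).eval (PerfectClosure.of D[X] p X) = PerfectClosure.of D[X] p f := by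
    rw [eval_map, ← hom_eval₂, eval₂_C_X]
  rw [hev]
  exact H

lemma step_S {p : ℕ} [Fact p.Prime] {D0 : Type} [CommRing D0] [CharP D0 p] [PerfectRing D0 p] {t : D0} {𝔪 : Ideal D0} (ht : t ∈ 𝔪)
    {D : Type} [CommRing D] [CharP D p] {φ : D0 →+* D} {ρ : D} (hD : StI t 𝔪 φ ρ) (κ v w : D) (hvw : v * w = 1) :
    ∃ (C : Type) (_ : CommRing C) (_ : CharP C p) (_ : PerfectRing C p) (j : D →+* C) (η : C),
      j (φ t) * η = j ρ ∧ StI t 𝔪 (j.comp φ) (j κ + j v * η) := by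
  let q := Ideal.Quotient.mk (Ideal.span {φ t, ρ})
  have hqs : Function.Surjective q := Ideal.Quotient.mk_surjective
  have hq1 : q (φ t) = 0 := Ideal.Quotient.eq_zero_iff_mem.2 (Ideal.subset_span (by simp))
  have hq2 : q ρ = 0 := Ideal.Quotient.eq_zero_iff_mem.2 (Ideal.subset_span (by simp))
  have hne : 𝔪.map (q.comp φ) ≠ ⊤ := by
    intro h
    apply hD.ne
    rw [← Ideal.map_map] at h
    have h2 := congrArg (Ideal.comap q) h
    rw [Ideal.comap_map_of_surjective q hqs, Ideal.comap_top] at h2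
    rw [eq_top_iff, ← h2]
    refine sup_le le_sup_left ?_
    intro y hy
    have : q y = 0 := by simpa using hy
    obtain ⟨c, d, rfl⟩ := Ideal.mem_span_pair.1 (Ideal.Quotient.eq_zero_iff_mem.1 this)
    exact Submodule.add_mem_sup (Ideal.mul_mem_left _ _ (Ideal.mem_map_of_mem _ ht)) (Ideal.mul_mem_left _ _ (Ideal.mem_span_singleton_self _))
  have hnt : Nontrivial (D ⧸ Ideal.span {φ t, ρ}) := by
    by_contra h
    rw [not_nontrivial_iff_subsingleton] at h
    exact hne ((Ideal.eq_top_iff_one _).2 (by rw [Subsingleton.elim (1 : D ⧸ Ideal.span {φ t, ρ}) 0]; exact zero_mem _))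
  let f : D[X] := C (φ t) * X - C ρ
  let E := AdjoinRoot f
  let π : E →+* (D ⧸ Ideal.span {φ t, ρ})[X] := AdjoinRoot.lift (C.comp q) X (by simp [f, hq1, hq2])
  have hπm : ∀ g : D[X], π (AdjoinRoot.mk f g) = g.map q := by
    intro g
    simp only [π, AdjoinRoot.lift_mk]
    rfl
  have hπof : ∀ a : D, π (AdjoinRoot.of f a) = C (q a) := by
    intro a
    rw [← AdjoinRoot.mk_C, hπm, map_C]
  have hπroot : π (AdjoinRoot.root f) = X := by
    rw [← AdjoinRoot.mk_X, hπm, map_X]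
  have hroot : AdjoinRoot.of f (φ t) * AdjoinRoot.root f = AdjoinRoot.of f ρ := by
    have := AdjoinRoot.eval₂_root f
    simp only [f, eval₂_sub, eval₂_mul, eval₂_C, eval₂_X] at this
    exact sub_eq_zero.1 this
  have hπs : Function.Surjective π := by
    intro g
    obtain ⟨g, rfl⟩ := map_surjective q hqs g
    exact ⟨AdjoinRoot.mk f g, hπm g⟩
  have : Nontrivial E := π.domain_nontrivial
  have hCE : CharP E p := by
    rw [CharP.charP_iff_prime_eq_zero (Fact.out)]
    rw [← map_natCast (AdjoinRoot.of f), CharP.cast_eq_zero, map_zero]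
  have hker : ∀ y : E, π y = 0 ↔ AdjoinRoot.of f (φ t) ∣ y := by
    intro y
    constructor
    · obtain ⟨g, rfl⟩ := AdjoinRoot.mk_surjective y
      intro h
      rw [hπm] at h
      rw [g.as_sum_range_C_mul_X_pow, map_sum]
      refine Finset.dvd_sum fun n _ => ?_
      rw [map_mul, AdjoinRoot.mk_C]
      apply Dvd.dvd.mul_right
      have h2 := congrArg (fun g => g.coeff n) h
      simp only [coeff_map, coeff_zero] at h2
      obtain ⟨c, d, hcd⟩ := Ideal.mem_span_pair.1 (Ideal.Quotient.eq_zero_iff_mem.1 h2)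
      rw [← hcd, map_add, map_mul, map_mul, ← hroot]
      exact ⟨AdjoinRoot.of f c + AdjoinRoot.of f d * AdjoinRoot.root f, by ring⟩
    · rintro ⟨y, rfl⟩
      rw [map_mul, hπof, hq1, map_zero, zero_mul]
  have hcn : ∀ y : D[X], C (φ t) * y = 0 → y = 0 := by
    intro y hy
    ext n
    have := congrArg (fun f => f.coeff n) hy
    simp only [coeff_C_mul, coeff_zero] at this
    simpa using hD.nzd _ this
  have H := lemmaS (p := p) (D := D0) (E := E) (Eb := D ⧸ Ideal.span {φ t, ρ}) (t := t) (𝔪 := 𝔪) ((AdjoinRoot.of f).comp φ) (by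
      intro y hy
      obtain ⟨g, rfl⟩ := AdjoinRoot.mk_surjective y
      rw [RingHom.comp_apply, ← AdjoinRoot.mk_C, ← map_mul, AdjoinRoot.mk_eq_zero] at hy
      obtain ⟨h, hh⟩ := hy
      have h1 : C (φ t) ∣ h := by
        rw [C_dvd_iff_dvd_coeff]
        intro n
        apply hD.rnzd
        have h2 : C ρ * h = C (φ t) * (X * h - g) := by simp only [f] at hh; linear_combination hh
        exact ⟨_, by rw [← coeff_C_mul, h2, coeff_C_mul]⟩
      obtain ⟨h, rfl⟩ := h1
      rw [AdjoinRoot.mk_eq_zero]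
      refine ⟨h, sub_eq_zero.1 (hcn _ ?_)⟩
      linear_combination hh) π hπs hker (q.comp φ) (by intro a; exact hπof _) (by
      refine FlI.push (RingHom.id D0) q (fun a => rfl) Function.surjective_id hqs (fun a h => h) (fun b => ?_) hD.rfl'
      rw [Ideal.mem_bot, Ideal.Quotient.eq_zero_iff_mem]) hne
      (AdjoinRoot.of f κ + AdjoinRoot.of f v * AdjoinRoot.root f) (X + C (q (w * κ))) (monic_X_add_C _) (by rw [natDegree_X_add_C]; exact one_pos) (q v) (q w)
      (by rw [← map_mul, hvw, map_one]) (by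
        have : q v * q w = 1 := by rw [← map_mul, hvw, map_one]
        have h2 := congrArg C this
        simp only [map_mul, map_one] at h2
        rw [map_add, map_mul, hπof, hπof, hπroot, map_mul, map_mul]
        linear_combination (- C (q κ)) * h2)
  refine ⟨PerfectClosure E p, inferInstance, inferInstance, inferInstance, (PerfectClosure.of E p).comp (AdjoinRoot.of f), PerfectClosure.of E p (AdjoinRoot.root f), ?_, ?_⟩
  · rw [RingHom.comp_apply, RingHom.comp_apply, ← hroot, map_mul]
  · rw [map_add, map_mul] at H
    exact H

end

section
open Polynomial

lemma witt_dvd_p {p : ℕ} [Fact p.Prime] {C : Type} [CommRing C] [CharP C p] [PerfectRing C p] (x : WittVector p C)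
    (h : WittVector.constantCoeff x = 0) : ∃ y, x = p * y :=
  Ideal.mem_span_singleton.1 ((WittVector.mem_span_p_iff_coeff_zero_eq_zero x).2 h)

lemma witt_cc_teich {p : ℕ} [Fact p.Prime] {C : Type} [CommRing C] (x : C) :
    WittVector.constantCoeff (WittVector.teichmuller p x) = x := WittVector.teichmuller_coeff_zero p x

lemma witt_cc_map {p : ℕ} [Fact p.Prime] {C D : Type} [CommRing C] [CommRing D] (f : C →+* D) (x : WittVector p C) :
    WittVector.constantCoeff (WittVector.map f x) = f (WittVector.constantCoeff x) := rfl

lemma witt_key {p : ℕ} [Fact p.Prime] {D0 : Type} [CommRing D0] [CharP D0 p] [PerfectRing D0 p] {t : D0} {𝔪 : Ideal D0} (ht : t ∈ 𝔪)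
    (w : WittVector p D0) (hw : IsUnit (WittVector.constantCoeff w))
    {D : Type} [CommRing D] {φ : D0 →+* D} (hD : Good p t 𝔪 φ) (F : (WittVector p D)[X]) (hF : F.Monic) (hFd : 0 < F.natDegree) (i : ℕ) :
    ∃ (C : Type) (_ : CommRing C) (_ : CharP C p) (_ : PerfectRing C p) (j : D →+* C) (z : C) (h r : WittVector p C),
      StI t 𝔪 (j.comp φ) (WittVector.constantCoeff r) ∧
      (F.map (WittVector.map j)).eval (WittVector.teichmuller p z) -
        WittVector.map (j.comp φ) (WittVector.teichmuller p t - (p : WittVector p D0) * w) * h = (p : WittVector p C) ^ i * r := by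
  have := hD.charP
  have hnt : Nontrivial D := CharP.nontrivial_of_char_ne_one (R := D) (v := p) (Fact.out : p.Prime).ne_one
  induction i with
  | zero =>
    let f := F.map (WittVector.constantCoeff (p := p) (R := D))
    obtain ⟨C, i1, i2, i3, j, z, hS⟩ := init_S ht hD f (hF.map _) (by rw [hF.natDegree_map]; exact hFd)
    refine ⟨C, i1, i2, i3, j, z, 0, (F.map (WittVector.map j)).eval (WittVector.teichmuller p z), ?_, by simp⟩
    convert hS using 1
    rw [eval_map, hom_eval₂, Polynomial.map_map, eval_map, witt_cc_teich]
    rfl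
  | succ i ih =>
    obtain ⟨C, i1, i2, i3, j, z, h, r, hS, hr⟩ := ih
    obtain ⟨r1, hr1⟩ := witt_dvd_p (r - WittVector.teichmuller p (WittVector.constantCoeff r)) (by rw [map_sub, witt_cc_teich, sub_self])
    obtain ⟨v, hv⟩ := isUnit_iff_exists_inv.1 (hw.map (j.comp φ))
    obtain ⟨C', i1', i2', i3', j', η, hη, hS'⟩ := step_S ht hS (WittVector.constantCoeff r1) _ _ hv
    refine ⟨C', i1', i2', i3', j'.comp j, j' z, WittVector.map j' h + p ^ i * WittVector.teichmuller p η,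
      WittVector.map j' r1 + WittVector.map (j'.comp (j.comp φ)) w * WittVector.teichmuller p η, ?_, ?_⟩
    · rw [map_add, map_mul, witt_cc_map, witt_cc_map, witt_cc_teich]
      exact hS'
    · have e0 : ∀ x : WittVector p D0, WittVector.map ((j'.comp j).comp φ) x = WittVector.map j' (WittVector.map (j.comp φ) x) := fun x => rfl
      have e00 : ∀ x : WittVector p D0, WittVector.map (j'.comp (j.comp φ)) x = WittVector.map j' (WittVector.map (j.comp φ) x) := fun x => rfl
      have e1 : (F.map (WittVector.map (p := p) (j'.comp j))).eval (WittVector.teichmuller p (j' z)) =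
          WittVector.map j' ((F.map (WittVector.map j)).eval (WittVector.teichmuller p z)) := by
        rw [eval_map, eval_map, hom_eval₂, WittVector.map_teichmuller]
        rfl
      have e2 : WittVector.map j' (WittVector.map (j.comp φ) (WittVector.teichmuller p t)) * WittVector.teichmuller p η =
          WittVector.map j' (WittVector.teichmuller p (WittVector.constantCoeff r)) := by
        rw [WittVector.map_teichmuller, WittVector.map_teichmuller, WittVector.map_teichmuller, ← map_mul]
        exact congrArg _ hη
      have hr' := congrArg (WittVector.map j') hr
      have hr1' := congrArg (WittVector.map j') hr1
      rw [e1, e0, e00]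
      simp only [map_sub, map_mul, map_pow, map_natCast] at hr' hr1' e2 ⊢
      linear_combination hr' + p ^ i * hr1' - p ^ i * e2

lemma witt_root {p : ℕ} [Fact p.Prime] {D0 : Type} [CommRing D0] [CharP D0 p] [PerfectRing D0 p] {t : D0} {𝔪 : Ideal D0} (ht : t ∈ 𝔪)
    (w : WittVector p D0) (hw : IsUnit (WittVector.constantCoeff w))
    {D : Type} [CommRing D] {φ : D0 →+* D} (hD : Good p t 𝔪 φ) (F : (WittVector p D)[X]) (hF : F.Monic) (hFd : 0 < F.natDegree) (L : ℕ) :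
    ∃ (C : Type) (_ : CommRing C) (j : D →+* C) (z : WittVector p C), Good p t 𝔪 (j.comp φ) ∧
      (F.map (WittVector.map j)).eval z ∈ Ideal.span {WittVector.map (j.comp φ) (WittVector.teichmuller p t - (p : WittVector p D0) * w), (p : WittVector p C) ^ L} := by
  obtain ⟨C, i1, i2, i3, j, z, h, r, hS, hr⟩ := witt_key ht w hw hD F hF hFd L
  exact ⟨C, i1, j, _, hS.good i2 i3, Ideal.mem_span_pair.2 ⟨h, r, by linear_combination -hr⟩⟩

lemma witt_unit {p : ℕ} [Fact p.Prime] {C : Type} [CommRing C] [CharP C p] [PerfectRing C p] (x : WittVector p C)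
    (h : IsUnit (WittVector.constantCoeff x)) : IsUnit x := by
  obtain ⟨v, hv⟩ := isUnit_iff_exists_inv.1 h
  obtain ⟨y, hy⟩ := witt_dvd_p (x * WittVector.teichmuller p v - 1) (by rw [map_sub, map_mul, witt_cc_teich, hv, map_one, sub_self])
  have h1 : (p : WittVector p C) ∈ Ideal.jacobson ⊥ := by
    have := IsAdicComplete.le_jacobson_bot (Ideal.span {(p : WittVector p C)})
    exact this (Ideal.mem_span_singleton_self _)
  rw [Ideal.mem_jacobson_bot] at h1
  have h2 := h1 y
  rw [← hy, sub_add_cancel] at h2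
  exact isUnit_of_mul_isUnit_left h2

/-- p is a nonzerodivisor mod ξ -/
lemma witt_pnzd {p : ℕ} [Fact p.Prime] {C : Type} [CommRing C] [CharP C p] [PerfectRing C p] {t : C} (ht : ∀ y, t * y = 0 → y = 0)
    (w : WittVector p C) (y a : WittVector p C) (h : p * y = (WittVector.teichmuller p t - p * w) * a) :
    (WittVector.teichmuller p t - p * w) ∣ y := by
  have h1 := congrArg WittVector.constantCoeff h
  simp only [map_mul, map_sub, map_natCast, CharP.cast_eq_zero, zero_mul, sub_zero, witt_cc_teich] at h1
  obtain ⟨b, rfl⟩ := witt_dvd_p a (ht _ h1.symm)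
  refine ⟨b, sub_eq_zero.1 (WittVector.eq_zero_of_p_mul_eq_zero _ ?_)⟩
  linear_combination h

lemma root_closed {A : Type} [CommRing A] (P : A) (hP : ∀ y, P * y = 0 → y = 0) (τ u : A) (hu : IsUnit u) (q : ℕ) (hτ : τ ^ q = P * u)
    (hq : ∀ y, P ∣ y ^ q → τ ∣ y) (N : ℕ) (x : A) (hx : P ^ (q * N) ∣ x ^ q) : P ^ N ∣ x := by
  obtain ⟨v, hv⟩ := isUnit_iff_exists_inv.1 hu
  have key : ∀ j ≤ q * N, τ ^ j ∣ x := by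
    intro j
    induction j with
    | zero => simp
    | succ j ih =>
      intro hj
      obtain ⟨y, rfl⟩ := ih (by omega)
      obtain ⟨c, hc⟩ := (pow_dvd_pow P hj).trans hx
      have h1 : P ^ j * (u ^ j * y ^ q - P * c) = 0 := by
        have : (τ ^ j * y) ^ q = P ^ j * u ^ j * y ^ q := by
          rw [mul_pow, ← pow_mul, mul_comm j, pow_mul, hτ, mul_pow]
        rw [this] at hc
        linear_combination hc
      have h2 := sub_eq_zero.1 (nzd_pow hP _ _ h1)
      obtain ⟨z, rfl⟩ := hq y ⟨v ^ j * c, by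
        have : (u * v) ^ j = 1 := by rw [hv, one_pow]
        rw [mul_pow] at this
        linear_combination v ^ j * h2 - y ^ q * this⟩
      exact ⟨z, by ring⟩
  obtain ⟨c, hc⟩ := key _ le_rfl
  rw [pow_mul, hτ, mul_pow] at hc
  exact ⟨u ^ N * c, by rw [hc]; ring⟩

lemma witt_root_closed {p : ℕ} [Fact p.Prime] {C : Type} [CommRing C] [CharP C p] [PerfectRing C p] {t : C} (ht : ∀ y, t * y = 0 → y = 0)
    (w : WittVector p C) (hw : IsUnit (WittVector.constantCoeff w)) (e N : ℕ) (x : WittVector p C)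
    (hx : x ^ p ^ e ∈ Ideal.span {WittVector.teichmuller p t - p * w, (p : WittVector p C) ^ (p ^ e * N)}) :
    x ∈ Ideal.span {WittVector.teichmuller p t - p * w, (p : WittVector p C) ^ N} := by
  set ξ := WittVector.teichmuller p t - p * w with hξ
  let q := Ideal.Quotient.mk (Ideal.span {ξ})
  have hq0 : ∀ y, q y = 0 ↔ ξ ∣ y := fun y => by rw [Ideal.Quotient.eq_zero_iff_mem, Ideal.mem_span_singleton]
  have hqs : Function.Surjective q := Ideal.Quotient.mk_surjective
  have hqm : ∀ (a b : WittVector p C), a ∈ Ideal.span {ξ, b} ↔ q b ∣ q a := by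
    intro a b
    rw [Ideal.mem_span_pair]
    constructor
    · rintro ⟨c, d, rfl⟩
      rw [map_add, map_mul, map_mul, (hq0 ξ).2 dvd_rfl, mul_zero, zero_add]
      exact dvd_mul_left _ _
    · rintro ⟨d, hd⟩
      obtain ⟨d, rfl⟩ := hqs d
      rw [← map_mul, ← sub_eq_zero, ← map_sub, hq0] at hd
      obtain ⟨c, hc⟩ := hd
      exact ⟨c, d, by linear_combination -hc⟩
  rw [hqm] at hx ⊢
  obtain ⟨s, hs⟩ := perf_root (p := p) e t
  rw [map_pow, map_pow] at hx
  rw [map_pow]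
  have hτ : q (WittVector.teichmuller p s) ^ p ^ e = q p * q w := by
    rw [← map_pow, ← map_pow, hs, ← map_mul, ← sub_eq_zero, ← map_sub, hq0]
  refine root_closed (q p) ?_ (q (WittVector.teichmuller p s)) (q w) ((witt_unit w hw).map q) (p ^ e) hτ ?_ N (q x) hx
  · intro y hy
    obtain ⟨y, rfl⟩ := hqs y
    rw [← map_mul, hq0] at hy
    obtain ⟨a, ha⟩ := hy
    exact (hq0 _).2 (witt_pnzd ht w y a ha)
  · intro y hy
    obtain ⟨y, rfl⟩ := hqs y
    rw [← map_pow, ← hqm, Ideal.mem_span_pair] at hy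
    obtain ⟨a, b, hab⟩ := hy
    have h1 := congrArg WittVector.constantCoeff hab
    simp only [hξ, map_add, map_pow, map_mul, map_sub, map_natCast, CharP.cast_eq_zero, zero_mul, mul_zero, add_zero, sub_zero, witt_cc_teich] at h1
    obtain ⟨a', ha'⟩ := perf_root (p := p) e (WittVector.constantCoeff a)
    rw [← hs, ← ha', ← mul_pow] at h1
    have h2 := perf_inj (p := p) e h1
    obtain ⟨y', hy'⟩ := witt_dvd_p (y - WittVector.teichmuller p s * WittVector.teichmuller p a') (by
      rw [map_sub, map_mul, witt_cc_teich, witt_cc_teich, ← h2]; ring)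
    obtain ⟨v, hv⟩ := isUnit_iff_exists_inv.1 (witt_unit w hw)
    have hv' : q w * q v = 1 := by rw [← map_mul, hv, map_one]
    have hpos : p ^ e ≠ 0 := pow_ne_zero _ (Fact.out : p.Prime).ne_zero
    have hpd : q (WittVector.teichmuller p s) ∣ q p := by
      have : q p = q (WittVector.teichmuller p s) ^ p ^ e * q v := by rw [hτ]; linear_combination (-q p) * hv'
      rw [this]
      exact (dvd_pow_self _ hpos).mul_right _
    have h3 : q y = q p * q y' + q (WittVector.teichmuller p s) * q (WittVector.teichmuller p a') := by
      rw [← map_mul, ← map_mul, ← map_add, ← hy']; congr 1; ring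
    rw [h3]
    exact dvd_add (hpd.mul_right _) (dvd_mul_right _ _)

end

section
open Polynomial

structure BaseD (p L : ℕ) [Fact p.Prime] {R : Type} [CommRing R] (m : Ideal R) {D0 : Type} [CommRing D0] (t : D0) (𝔪 : Ideal D0)
    (w : WittVector p D0) {OL : Type} [CommRing OL] (θ : WittVector p D0 →+* OL) (ι : R →+* OL) (ψ : R →+* D0 ⧸ Ideal.span {t}) : Prop where
  Lpos : 0 < L
  charP : CharP D0 p
  perfect : PerfectRing D0 p
  nzd : ∀ y, t * y = 0 → y = 0
  tm : t ∈ 𝔪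
  ne : 𝔪 ≠ ⊤
  wu : IsUnit (WittVector.constantCoeff w)
  surj : Function.Surjective θ
  ker : ∀ a, θ a = 0 ↔ a ∈ Ideal.span {WittVector.teichmuller p t - (p : WittVector p D0) * w, (p : WittVector p D0) ^ L}
  fl : FlI ψ (p : R) ⊥
  psi : ∀ r a, θ a = ι r → ψ r = Ideal.Quotient.mk _ (WittVector.constantCoeff a)
  mm : ∀ r ∈ m, ∀ a, θ a = ι r → WittVector.constantCoeff a ∈ 𝔪

def GR (p L : ℕ) [Fact p.Prime] {R : Type} [CommRing R] {D0 : Type} [CommRing D0] (t : D0) (𝔪 : Ideal D0)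
    (w : WittVector p D0) {OL : Type} [CommRing OL] (θ : WittVector p D0 →+* OL) (ι : R →+* OL) (B : Type) [CommRing B] (f : R →+* B) : Prop :=
  ∃ (D : Type) (_ : CommRing D) (φ : D0 →+* D) (π : WittVector p D →+* B), Good p t 𝔪 φ ∧ Function.Surjective π ∧
    (∀ a, π a = 0 ↔ a ∈ Ideal.span {WittVector.map φ (WittVector.teichmuller p t - (p : WittVector p D0) * w), (p : WittVector p D) ^ L}) ∧
    ∀ r a, θ a = ι r → π (WittVector.map φ a) = f r

lemma GR.init {p L : ℕ} [Fact p.Prime] {R : Type} [CommRing R] {m : Ideal R} {D0 : Type} [CommRing D0] {t : D0} {𝔪 : Ideal D0}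
    {w : WittVector p D0} {OL : Type} [CommRing OL] {θ : WittVector p D0 →+* OL} {ι : R →+* OL} {ψ : R →+* D0 ⧸ Ideal.span {t}}
    (h : BaseD p L m t 𝔪 w θ ι ψ) : GR p L t 𝔪 w θ ι OL ι := by
  have hid : WittVector.map (p := p) (RingHom.id D0) = RingHom.id _ := by
    ext x n; simp [WittVector.map_coeff]
  refine ⟨D0, inferInstance, RingHom.id D0, θ, ⟨h.charP, h.perfect, h.nzd, ?_, ?_⟩, h.surj, ?_, ?_⟩
  · intro ι _ a y hy
    refine ⟨Unit, inferInstance, fun i _ => y i, fun _ => 1, fun i => by simp, fun _ => ?_⟩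
    simpa [Ideal.mem_span_singleton] using hy
  · rw [Ideal.map_id]; exact h.ne
  · intro a; rw [hid]; exact h.ker a
  · intro r a hr; rw [hid]; exact hr

lemma GR.root {p L : ℕ} [Fact p.Prime] {R : Type} [CommRing R] {m : Ideal R} {D0 : Type} [CommRing D0] {t : D0} {𝔪 : Ideal D0}
    {w : WittVector p D0} {OL : Type} [CommRing OL] {θ : WittVector p D0 →+* OL} {ι : R →+* OL} {ψ : R →+* D0 ⧸ Ideal.span {t}}
    (h : BaseD p L m t 𝔪 w θ ι ψ) {B : Type} [CommRing B] {f : R →+* B} (hB : GR p L t 𝔪 w θ ι B f) (F : B[X]) (hF : F.Monic) (hd : 0 < F.natDegree) :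
    ∃ (B' : Type) (_ : CommRing B') (g : B →+* B') (z : B'), GR p L t 𝔪 w θ ι B' (g.comp f) ∧ (F.map g).eval z = 0 := by
  obtain ⟨D, _, φ, π, hG, hs, hk, hc⟩ := hB
  have := h.charP; have := h.perfect
  obtain ⟨G, hGF, hGd, hGm⟩ := lifts_and_natDegree_eq_and_monic (f := π) ((mem_lifts _).2 (by
    obtain ⟨G, hG⟩ := map_surjective π hs F; exact ⟨G, hG⟩)) hF
  obtain ⟨C, _, j, z, hgood, hz⟩ := witt_root h.tm w h.wu hG G hGm (by omega) L
  have hcomp : ∀ x, WittVector.map (p := p) (j.comp φ) x = WittVector.map j (WittVector.map φ x) := by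
    intro x; ext n; simp [WittVector.map_coeff]
  let I : Ideal (WittVector p C) := Ideal.span {WittVector.map (j.comp φ) (WittVector.teichmuller p t - (p : WittVector p D0) * w), (p : WittVector p C) ^ L}
  let q := Ideal.Quotient.mk I
  obtain ⟨g, hg⟩ : ∃ g : B →+* (WittVector p C ⧸ I), ∀ a, g (π a) = q (WittVector.map j a) := by
    refine ⟨RingHom.liftOfSurjective π hs ⟨q.comp (WittVector.map j), ?_⟩, fun a => RingHom.liftOfRightInverse_comp_apply _ _ _ _ _⟩
    intro a ha
    obtain ⟨c, d, rfl⟩ := Ideal.mem_span_pair.1 ((hk a).1 ha)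
    change q _ = 0
    rw [Ideal.Quotient.eq_zero_iff_mem, map_add, map_mul, map_mul, ← hcomp, map_pow, map_natCast]
    exact Ideal.mem_span_pair.2 ⟨_, _, rfl⟩
  refine ⟨_, inferInstance, g, q z, ⟨C, inferInstance, j.comp φ, q, hgood, Ideal.Quotient.mk_surjective, fun a => Ideal.Quotient.eq_zero_iff_mem, ?_⟩, ?_⟩
  · intro r a hr
    rw [hcomp, ← hg, hc r a hr]; rfl
  · have : F.map g = (G.map (WittVector.map j)).map q := by
      rw [← hGF, Polynomial.map_map, Polynomial.map_map]
      congr 1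
      ext a; exact hg a
    rw [this, eval_map, eval₂_at_apply, Ideal.Quotient.eq_zero_iff_mem]
    exact hz

lemma GR.closed {p L : ℕ} [Fact p.Prime] {R : Type} [CommRing R] {m : Ideal R} {D0 : Type} [CommRing D0] {t : D0} {𝔪 : Ideal D0}
    {w : WittVector p D0} {OL : Type} [CommRing OL] {θ : WittVector p D0 →+* OL} {ι : R →+* OL} {ψ : R →+* D0 ⧸ Ideal.span {t}}
    (h : BaseD p L m t 𝔪 w θ ι ψ) {B : Type} [CommRing B] {f : R →+* B} (hB : GR p L t 𝔪 w θ ι B f) (e N : ℕ) (hL : p ^ e * N = L) (x : B)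
    (hx : x ^ p ^ e = 0) : x ∈ Ideal.span {(p : B) ^ N} := by
  obtain ⟨D, _, φ, π, hG, hs, hk, hc⟩ := hB
  have := hG.charP; have := hG.perfect
  obtain ⟨x, rfl⟩ := hs x
  have hxi : WittVector.map φ (WittVector.teichmuller p t - (p : WittVector p D0) * w) = WittVector.teichmuller p (φ t) - p * WittVector.map φ w := by
    rw [map_sub, map_mul, WittVector.map_teichmuller, map_natCast]
  rw [← map_pow, hk, hxi, ← hL] at hx
  have := witt_root_closed hG.nzd (WittVector.map φ w) (by rw [witt_cc_map]; exact h.wu.map φ) e N x hx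
  obtain ⟨c, d, rfl⟩ := Ideal.mem_span_pair.1 this
  have h0 : π (WittVector.teichmuller p (φ t) - p * WittVector.map φ w) = 0 := by
    rw [← hxi, hk]; exact Ideal.subset_span (by simp)
  rw [map_add, map_mul, h0, mul_zero, zero_add, map_mul, map_pow, map_natCast]
  exact Ideal.mul_mem_left _ _ (Ideal.mem_span_singleton_self _)

lemma GR.ne {p L : ℕ} [Fact p.Prime] {R : Type} [CommRing R] {m : Ideal R} {D0 : Type} [CommRing D0] {t : D0} {𝔪 : Ideal D0}
    {w : WittVector p D0} {OL : Type} [CommRing OL] {θ : WittVector p D0 →+* OL} {ι : R →+* OL} {ψ : R →+* D0 ⧸ Ideal.span {t}}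
    (h : BaseD p L m t 𝔪 w θ ι ψ) {B : Type} [CommRing B] {f : R →+* B} (hB : GR p L t 𝔪 w θ ι B f) : m.map f ≠ ⊤ := by
  obtain ⟨D, _, φ, π, hG, hs, hk, hc⟩ := hB
  have := hG.charP; have := h.charP
  intro htop
  let K : Ideal (WittVector p D) := (𝔪.map φ).comap WittVector.constantCoeff
  have h1 : m.map f ≤ K.map π := by
    rw [Ideal.map_le_iff_le_comap]
    intro r hr
    obtain ⟨a, ha⟩ := h.surj (ι r)
    rw [Ideal.mem_comap, ← hc r a ha]
    refine Ideal.mem_map_of_mem _ ?_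
    rw [Ideal.mem_comap, witt_cc_map]
    exact Ideal.mem_map_of_mem _ (h.mm r hr a ha)
  rw [htop, top_le_iff] at h1
  have h2 : (1 : B) ∈ K.map π := by rw [h1]; trivial
  obtain ⟨a, ha, ha1⟩ := (Ideal.mem_map_iff_of_surjective π hs).1 h2
  have h3 : π (1 - a) = 0 := by rw [map_sub, map_one, ha1, sub_self]
  obtain ⟨c, d, hcd⟩ := Ideal.mem_span_pair.1 ((hk _).1 h3)
  have h4 := congrArg WittVector.constantCoeff hcd
  rw [map_add, map_mul, map_mul, map_pow, map_natCast, witt_cc_map, map_sub, map_mul, map_natCast, witt_cc_teich, CharP.cast_eq_zero, CharP.cast_eq_zero, zero_mul, sub_zero,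
    zero_pow h.Lpos.ne', mul_zero, add_zero, map_sub, map_one] at h4
  apply hG.ne
  rw [Ideal.eq_top_iff_one]
  rw [show (1 : D) = WittVector.constantCoeff c * φ t + WittVector.constantCoeff a by linear_combination -h4]
  exact Ideal.add_mem _ (Ideal.mul_mem_left _ _ (Ideal.mem_map_of_mem _ h.tm)) ha

lemma GR.fl {p L : ℕ} [Fact p.Prime] {R : Type} [CommRing R] {m : Ideal R} {D0 : Type} [CommRing D0] {t : D0} {𝔪 : Ideal D0}
    {w : WittVector p D0} {OL : Type} [CommRing OL] {θ : WittVector p D0 →+* OL} {ι : R →+* OL} {ψ : R →+* D0 ⧸ Ideal.span {t}}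
    (h : BaseD p L m t 𝔪 w θ ι ψ) {B : Type} [CommRing B] {f : R →+* B} (hB : GR p L t 𝔪 w θ ι B f) (N : ℕ) (hN : N ≤ L) :
    FlI f ((p : R) ^ N) (Ideal.span {(p : B) ^ N}) := by
  obtain ⟨D, _, φ, π, hG, hs, hk, hc⟩ := hB
  have := hG.charP; have := hG.perfect; have := h.charP
  have hxi : WittVector.map φ (WittVector.teichmuller p t - (p : WittVector p D0) * w) = WittVector.teichmuller p (φ t) - p * WittVector.map φ w := by
    rw [map_sub, map_mul, WittVector.map_teichmuller, map_natCast]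
  rw [hxi] at hk
  set ξ := WittVector.teichmuller p (φ t) - p * WittVector.map φ w with hξ
  have h0 : π ξ = 0 := by
    rw [hk]; exact Ideal.subset_span (by simp)
  have hpz : Ideal.span {f (p : R), (0 : B)} = Ideal.span {(p : B)} := by
    rw [Ideal.span_pair_zero, map_natCast]
  have hfl0 : FlI f (p : R) (Ideal.span {f (p : R), 0}) := by
    let q := Ideal.Quotient.mk (Ideal.span {φ t})
    obtain ⟨β, hβ⟩ : ∃ β : B →+* D ⧸ Ideal.span {φ t}, ∀ a, β (π a) = q (WittVector.constantCoeff a) := by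
      refine ⟨RingHom.liftOfSurjective π hs ⟨q.comp (WittVector.constantCoeff), ?_⟩, fun a => RingHom.liftOfRightInverse_comp_apply _ _ _ _ _⟩
      intro a ha
      obtain ⟨c, d, rfl⟩ := Ideal.mem_span_pair.1 ((hk a).1 ha)
      change q _ = 0
      rw [Ideal.Quotient.eq_zero_iff_mem, map_add, map_mul, map_mul, map_pow, map_natCast, CharP.cast_eq_zero, zero_pow h.Lpos.ne', mul_zero, add_zero, hξ, map_sub, map_mul, map_natCast, witt_cc_teich, CharP.cast_eq_zero, zero_mul, sub_zero]
      exact Ideal.mul_mem_left _ _ (Ideal.mem_span_singleton_self _)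
    obtain ⟨ψ2, hψ2⟩ : ∃ ψ2 : D0 ⧸ Ideal.span {t} →+* D ⧸ Ideal.span {φ t}, ∀ a, ψ2 (Ideal.Quotient.mk _ a) = q (φ a) := by
      refine ⟨Ideal.Quotient.lift _ (q.comp φ) ?_, fun a => rfl⟩
      intro a ha
      obtain ⟨c, rfl⟩ := Ideal.mem_span_singleton.1 ha
      change q _ = 0
      rw [Ideal.Quotient.eq_zero_iff_mem, map_mul]
      exact Ideal.mul_mem_right _ _ (Ideal.mem_span_singleton_self _)
    have hf2 : FlI ψ2 0 ⊥ := by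
      refine FlI.push (Ideal.Quotient.mk _) q (fun a => (hψ2 a).symm) Ideal.Quotient.mk_surjective Ideal.Quotient.mk_surjective ?_ ?_ hG.fl
      · intro a ha
        rw [Ideal.Quotient.eq_zero_iff_mem.2 (Ideal.mem_span_singleton.2 ha)]
      · intro b
        rw [Ideal.mem_bot, Ideal.Quotient.eq_zero_iff_mem]
    refine FlI.pull (RingHom.id R) β (φ' := ψ2.comp ψ) ?_ Function.surjective_id ?_ (fun a ha => ha) ?_ (h.fl.comp hf2)
    · intro r
      obtain ⟨a, ha⟩ := h.surj (ι r)
      rw [← hc r a ha, hβ, RingHom.comp_apply, RingHom.id_apply, h.psi r a ha, hψ2]; rfl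
    · intro y
      obtain ⟨y, rfl⟩ := Ideal.Quotient.mk_surjective y
      exact ⟨π (WittVector.teichmuller p y), by rw [hβ, witt_cc_teich]⟩
    · intro b
      obtain ⟨a, rfl⟩ := hs b
      rw [hpz, hβ, Ideal.mem_bot, Ideal.Quotient.eq_zero_iff_mem, Ideal.mem_span_singleton, Ideal.mem_span_singleton]
      constructor
      · rintro ⟨c, hc⟩
        obtain ⟨c, rfl⟩ := hs c
        rw [← sub_eq_zero, ← map_natCast π, ← map_mul, ← map_sub, hk] at hc
        obtain ⟨y, z, hyz⟩ := Ideal.mem_span_pair.1 hc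
        have h4 := congrArg WittVector.constantCoeff hyz
        rw [map_add, map_mul, map_mul, map_pow, map_natCast, hξ, map_sub, map_mul, map_natCast, witt_cc_teich, CharP.cast_eq_zero, zero_mul, sub_zero,
          zero_pow h.Lpos.ne', mul_zero, add_zero, map_sub, map_mul, map_natCast, CharP.cast_eq_zero, zero_mul, sub_zero] at h4
        exact ⟨_, by rw [← h4, mul_comm]⟩
      · rintro ⟨c, hc⟩
        obtain ⟨y, hy⟩ := witt_dvd_p (a - WittVector.teichmuller p (φ t) * WittVector.teichmuller p c) (by
          rw [map_sub, map_mul, witt_cc_teich, witt_cc_teich, hc, sub_self])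
        refine ⟨π (y + WittVector.map φ w * WittVector.teichmuller p c), ?_⟩
        rw [← map_natCast π, ← map_mul, ← sub_eq_zero, ← map_sub,
          show a - p * (y + WittVector.map φ w * WittVector.teichmuller p c) = ξ * WittVector.teichmuller p c by rw [hξ]; linear_combination hy, map_mul, h0, zero_mul]
  have := hfl0.dev N (by
    intro n hn b hb
    obtain ⟨a, rfl⟩ := hs b
    rw [hpz, Ideal.mem_span_singleton]
    rw [Ideal.span_pair_zero, Ideal.mem_span_singleton, map_natCast] at hb
    obtain ⟨c, hb⟩ := hb
    obtain ⟨c, rfl⟩ := hs c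
    rw [← sub_eq_zero, ← map_natCast π, ← map_pow, ← map_mul, ← map_pow, ← map_mul, ← map_sub, hk] at hb
    obtain ⟨y, z, hyz⟩ := Ideal.mem_span_pair.1 hb
    obtain ⟨k, hk'⟩ : ∃ k, L = n + 1 + k := ⟨L - (n+1), by omega⟩
    have key : ∀ n (u v : WittVector p D), (p : WittVector p D) ^ n * u = ξ * v → ξ ∣ u := by
      intro n
      induction n with
      | zero => intro u v huv; exact ⟨v, by simpa using huv⟩
      | succ n ih =>
        intro u v huv
        obtain ⟨v', hv'⟩ := witt_pnzd hG.nzd (WittVector.map φ w) (p ^ n * u) v (by rw [← hξ, ← huv]; ring)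
        exact ih u v' hv'
    obtain ⟨v, hv⟩ := key n (a - p * (c + p ^ k * z)) y (by rw [hk'] at hyz; linear_combination -hyz)
    refine ⟨π (c + p ^ k * z), ?_⟩
    rw [← map_natCast π, ← map_mul, ← sub_eq_zero, ← map_sub, hv, map_mul, h0, zero_mul])
  rwa [Ideal.span_pair_zero, map_natCast] at this

end

section
open Polynomial

structure ON (p : ℕ) (O : Type) [CommRing O] (ϖ u : O) : Prop where
  p0 : (p : O) ≠ 0
  fs : ∀ a : O, ∃ b, (p : O) ∣ a - b ^ p
  hu : IsUnit u
  hϖ : ϖ ^ p = p * u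
  hJ : ∀ y, IsUnit (1 + ϖ * y)
  hN : ∀ q, 0 < q → ∀ w a : O, w ≠ 0 → w ^ q ∣ a ^ q → w ∣ a

variable {p : ℕ} [hpp : Fact p.Prime] {O : Type} [CommRing O] [IsDomain O] {ϖ u : O}

local notation "Ob" => (O ⧸ Ideal.span {(p : O)})

lemma ob_zero (a : O) : (Ideal.Quotient.mk (Ideal.span {(p : O)}) a) = 0 ↔ (p : O) ∣ a := by
  rw [Ideal.Quotient.eq_zero_iff_mem, Ideal.mem_span_singleton]

lemma per_pow [CharP Ob p] (t : Perfection Ob p) (n k : ℕ) :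
    (Perfection.coeff Ob p (n + k) t) ^ p ^ k = Perfection.coeff Ob p n t := by
  induction k with
  | zero => simp
  | succ k ih => rw [pow_succ', pow_mul, ← add_assoc, Perfection.coeff_pow_p', ih]

lemma per_mk [CharP Ob p] (z : ℕ → Ob) (hz : ∀ n, z (n+1) ^ p = z n) : ∃ Z : Perfection Ob p, ∀ n, Perfection.coeff Ob p n Z = z n :=
  ⟨⟨z, hz⟩, fun n => rfl⟩

/-- any lift τ of t_n satisfies τ^(p^n) = p * unit -/
lemma ON.tau (h : ON p O ϖ u) [CharP Ob p] (t : Perfection Ob p)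
    (ht : Perfection.coeff Ob p 1 t = Ideal.Quotient.mk _ ϖ) (n : ℕ) (τ : O) (hτ : Ideal.Quotient.mk _ τ = Perfection.coeff Ob p (1 + n) t) :
    ∃ v, IsUnit v ∧ τ ^ p ^ (n+1) = p * v := by
  have h1 : Ideal.Quotient.mk (Ideal.span {(p : O)}) (τ ^ p ^ n - ϖ) = 0 := by
    rw [map_sub, map_pow, hτ, per_pow, ht, sub_self]
  obtain ⟨c, hc⟩ := (ob_zero _).1 h1
  obtain ⟨u', hu'⟩ := isUnit_iff_exists_inv.1 h.hu
  have h2 : τ ^ p ^ n = ϖ * (1 + ϖ * (ϖ ^ (p - 2) * u' * c)) := by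
    have : ϖ * (ϖ * ϖ ^ (p-2)) = p * u := by
      rw [← h.hϖ, ← pow_succ', ← pow_succ']
      congr 1
      have := hpp.out.two_le; omega
    linear_combination hc + (-u' * c) * this - (p : O) * c * hu'
  refine ⟨u * (1 + ϖ * (ϖ ^ (p - 2) * u' * c)) ^ p, h.hu.mul ((h.hJ _).pow _), ?_⟩
  rw [pow_succ, pow_mul, h2, mul_pow, h.hϖ]; ring

lemma ON.A (h : ON p O ϖ u) [CharP Ob p] (t : Perfection Ob p)
    (ht : Perfection.coeff Ob p 1 t = Ideal.Quotient.mk _ ϖ) (n : ℕ) (y : Ob) (hy : Perfection.coeff Ob p (1 + n) t * y = 0) : y ^ p = 0 := by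
  obtain ⟨τ, hτ⟩ := Ideal.Quotient.mk_surjective (Perfection.coeff Ob p (1 + n) t)
  obtain ⟨y, rfl⟩ := Ideal.Quotient.mk_surjective y
  obtain ⟨v, hv, hv2⟩ := h.tau t ht n τ hτ
  rw [← hτ, ← map_mul, ob_zero] at hy
  obtain ⟨z, hz⟩ := hy
  rw [← map_pow, ob_zero]
  refine h.hN (p ^ n) (pow_pos hpp.out.pos _) _ _ h.p0 ?_
  have h1 : (p : O) * (v * y ^ p ^ (n+1)) = p * ((p : O) ^ (p ^ (n+1) - 1) * z ^ p ^ (n+1)) := by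
    rw [← mul_assoc, ← hv2, ← mul_pow, hz, mul_pow, ← mul_assoc, ← pow_succ']
    congr 2
    have := pow_pos hpp.out.pos (n+1); omega
  have h2 := mul_left_cancel₀ h.p0 h1
  have h3 : (p : O) ^ p ^ n ∣ v * y ^ p ^ (n+1) := by
    rw [h2]
    refine Dvd.dvd.mul_right (pow_dvd_pow _ ?_) _
    have := pow_pos hpp.out.pos n
    have h5 := Nat.mul_le_mul_left (p ^ n) hpp.out.two_le
    rw [pow_succ]; omega
  rw [← pow_mul, ← pow_succ']
  exact hv.dvd_mul_left.1 h3

lemma ON.B (h : ON p O ϖ u) [CharP Ob p] (t : Perfection Ob p)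
    (ht : Perfection.coeff Ob p 1 t = Ideal.Quotient.mk _ ϖ) (n : ℕ) (y : Ob) (hy : y ^ p ^ (n+1) = 0) : ∃ z, y = Perfection.coeff Ob p (1 + n) t * z := by
  obtain ⟨τ, hτ⟩ := Ideal.Quotient.mk_surjective (Perfection.coeff Ob p (1 + n) t)
  obtain ⟨y, rfl⟩ := Ideal.Quotient.mk_surjective y
  obtain ⟨v, hv, hv2⟩ := h.tau t ht n τ hτ
  rw [← map_pow, ob_zero] at hy
  obtain ⟨z, rfl⟩ := h.hN (p ^ (n+1)) (pow_pos hpp.out.pos _) τ y (by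
    rintro rfl
    rw [zero_pow (pow_pos hpp.out.pos _).ne'] at hv2
    exact mul_ne_zero h.p0 hv.ne_zero hv2.symm) (by
    rw [hv2]; exact hv.mul_right_dvd.2 hy)
  exact ⟨Ideal.Quotient.mk _ z, by rw [map_mul, hτ]⟩

lemma ON.nzd (h : ON p O ϖ u) [CharP Ob p] (t : Perfection Ob p)
    (ht : Perfection.coeff Ob p 1 t = Ideal.Quotient.mk _ ϖ) (y : Perfection Ob p) (hy : t * y = 0) : y = 0 := by
  apply Perfection.ext
  intro n
  have := congrArg (Perfection.coeff Ob p (1 + n)) hy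
  rw [map_mul, map_zero] at this
  have := h.A t ht n _ this
  rw [add_comm, Perfection.coeff_pow_p'] at this
  rw [this, map_zero]

lemma ON.ker (h : ON p O ϖ u) [CharP Ob p] (t : Perfection Ob p)
    (ht : Perfection.coeff Ob p 1 t = Ideal.Quotient.mk _ ϖ) (y : Perfection Ob p) (hy : Perfection.coeff Ob p 0 y = 0) : t ∣ y := by
  choose z hz using fun n => h.B t ht n (Perfection.coeff Ob p (1 + n) y) (by rw [add_comm 1 n]; have := per_pow y 0 (n+1); rw [zero_add] at this; rw [this, hy])
  obtain ⟨Z, hZ⟩ := per_mk (fun n => z n ^ p) (by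
    intro n
    have h1 : Perfection.coeff Ob p (1 + n) t * (z (n+1) ^ p - z n) = 0 := by
      rw [mul_sub, ← hz, ← Perfection.coeff_pow_p' t, ← mul_pow]
      change (Perfection.coeff Ob p (1 + (n + 1)) t * z (n+1)) ^ p - _ = 0
      rw [← hz]
      change (Perfection.coeff Ob p (1 + n + 1) y) ^ p - _ = 0
      rw [Perfection.coeff_pow_p', sub_self]
    have h2 := h.A t ht n _ h1
    rw [sub_pow_char, sub_eq_zero] at h2
    exact h2)
  · refine ⟨Z, ?_⟩
    apply Perfection.ext
    intro n
    rw [map_mul, hZ, ← Perfection.coeff_pow_p' t, ← Perfection.coeff_pow_p' y, ← mul_pow, add_comm n 1, hz]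

lemma per_unit [CharP Ob p] (y : Perfection Ob p) (hy : IsUnit (Perfection.coeff Ob p 0 y)) : IsUnit y := by
  have h1 : ∀ n, IsUnit (Perfection.coeff Ob p n y) := by
    intro n
    have := per_pow y 0 n
    rw [zero_add] at this
    rw [← this] at hy
    exact (isUnit_pow_iff (pow_pos hpp.out.pos _).ne').1 hy
  choose z hz using fun n => isUnit_iff_exists_inv.1 (h1 n)
  obtain ⟨Z, hZ⟩ := per_mk z (by
    intro n
    refine (h1 n).mul_left_cancel ?_
    rw [hz, ← Perfection.coeff_pow_p', ← mul_pow, hz, one_pow])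
  refine isUnit_iff_exists_inv.2 ⟨Z, ?_⟩
  · apply Perfection.ext
    intro n
    rw [map_mul, hZ, hz, map_one]


/-- theta -/
noncomputable def thN (p : ℕ) [Fact p.Prime] (O : Type) [CommRing O] [CharP (O ⧸ Ideal.span {(p : O)}) p] (n : ℕ) : WittVector p (Perfection (O ⧸ Ideal.span {(p : O)}) p) →+* O ⧸ (Ideal.span {(p : O)} ^ (n+1)) :=
  (WittVector.ghostComponentModPPow n).comp (WittVector.map (Perfection.coeff (O ⧸ Ideal.span {(p : O)}) p n))

lemma olz (n : ℕ) (a : O) : (Ideal.Quotient.mk (Ideal.span {(p : O)} ^ (n+1)) a) = 0 ↔ (p : O) ^ (n+1) ∣ a := by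
  rw [Ideal.Quotient.eq_zero_iff_mem, Ideal.span_singleton_pow, Ideal.mem_span_singleton]

lemma thN_lift [CharP Ob p] (n : ℕ) (a : WittVector p (Perfection Ob p)) :
    ∃ x : WittVector p O, WittVector.map (Ideal.Quotient.mk _) x = WittVector.map (Perfection.coeff Ob p n) a ∧
      thN p O n a = Ideal.Quotient.mk _ (WittVector.ghostComponent n x) := by
  obtain ⟨x, hx⟩ := WittVector.map_surjective (p := p) _ (Ideal.Quotient.mk_surjective (I := Ideal.span {(p : O)})) (WittVector.map (Perfection.coeff Ob p n) a)
  refine ⟨x, hx, ?_⟩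
  change WittVector.ghostComponentModPPow n _ = _
  rw [← hx, WittVector.ghostComponentModPPow_map_mk]

lemma thN_modp [CharP Ob p] (n : ℕ) (a : WittVector p (Perfection Ob p)) (y : O) (hy : thN p O n a = Ideal.Quotient.mk _ y) :
    Ideal.Quotient.mk _ y = Perfection.coeff Ob p 0 (WittVector.constantCoeff a) := by
  obtain ⟨x, hx, hx2⟩ := thN_lift n a
  rw [hx2, ← sub_eq_zero, ← map_sub, olz] at hy
  have h1 : (p : O) ∣ WittVector.ghostComponent n x - y := (dvd_pow_self _ (by omega)).trans hy
  have h2 := (ob_zero _).2 h1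
  rw [map_sub, sub_eq_zero] at h2
  rw [← h2, WittVector.ghostComponent_apply, wittPolynomial_eq_sum_C_mul_X_pow, map_sum, map_sum, Finset.sum_range_succ', Finset.sum_eq_zero, zero_add]
  · simp only [pow_zero, map_one, one_mul, map_pow, MvPolynomial.aeval_X, Nat.sub_zero]
    have h3 : Ideal.Quotient.mk (Ideal.span {(p : O)}) (x.coeff 0) = Perfection.coeff Ob p n (a.coeff 0) := by
      rw [← WittVector.map_coeff, hx, WittVector.map_coeff]
    rw [h3]
    have := per_pow (WittVector.constantCoeff a) 0 n
    rw [zero_add] at this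
    exact this
  · intro i _
    rw [ob_zero]
    simp only [map_mul, map_pow, MvPolynomial.aeval_X, MvPolynomial.aeval_C, map_natCast]
    exact Dvd.dvd.mul_right (dvd_pow_self _ (by omega)) _

lemma thN_teich [CharP Ob p] (n : ℕ) (t : Perfection Ob p) (τ : O) (hτ : Ideal.Quotient.mk _ τ = Perfection.coeff Ob p n t) :
    thN p O n (WittVector.teichmuller p t) = Ideal.Quotient.mk _ (τ ^ p ^ n) := by
  change WittVector.ghostComponentModPPow n (WittVector.map _ _) = _
  rw [WittVector.map_teichmuller, ← hτ, ← WittVector.map_teichmuller, WittVector.ghostComponentModPPow_map_mk, WittVector.ghostComponent_teichmuller]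

lemma thN_surj (h : ON p O ϖ u) [CharP Ob p] (n : ℕ) : Function.Surjective (thN p O n) := by
  have hcs : Function.Surjective (Perfection.coeff Ob p 0) := by
    refine Perfection.coeff_surjective ?_ 0
    intro y
    obtain ⟨y, rfl⟩ := Ideal.Quotient.mk_surjective y
    obtain ⟨b, hb⟩ := h.fs y
    refine ⟨Ideal.Quotient.mk _ b, ?_⟩
    rw [frobenius_def, ← map_pow]
    symm
    rwa [← sub_eq_zero, ← map_sub, ob_zero]
  have key : ∀ j (x : O), ∃ a y, thN p O n a = Ideal.Quotient.mk _ (x - (p : O) ^ j * y) := by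
    intro j
    induction j with
    | zero => intro x; exact ⟨0, x, by simp⟩
    | succ j ih =>
      intro x
      obtain ⟨a, y, ha⟩ := ih x
      obtain ⟨d, hd⟩ := hcs (Ideal.Quotient.mk _ y)
      obtain ⟨y', hy'⟩ := Ideal.Quotient.mk_surjective (thN p O n (WittVector.teichmuller p d))
      have h1 := thN_modp n _ y' hy'.symm
      rw [witt_cc_teich, hd, ← sub_eq_zero, ← map_sub, ob_zero] at h1
      obtain ⟨c, hc⟩ := h1
      refine ⟨a + (p : WittVector p (Perfection Ob p)) ^ j * WittVector.teichmuller p d, -c, ?_⟩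
      rw [map_add, ha, map_mul, map_pow, map_natCast, ← hy', ← map_natCast (Ideal.Quotient.mk _), ← map_pow, ← map_mul, ← map_add]
      congr 1
      linear_combination (p : O) ^ j * hc
  intro x
  obtain ⟨x, rfl⟩ := Ideal.Quotient.mk_surjective x
  obtain ⟨a, y, ha⟩ := key (n+1) x
  refine ⟨a, ?_⟩
  rw [ha, map_sub, sub_eq_self, olz]
  exact dvd_mul_right _ _

lemma thN_ker (h : ON p O ϖ u) [CharP Ob p] (t : Perfection Ob p)
    (ht : Perfection.coeff Ob p 1 t = Ideal.Quotient.mk _ ϖ) (n : ℕ) (w : WittVector p (Perfection Ob p))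
    (hw : thN p O n (WittVector.teichmuller p t) = p * thN p O n w) (a : WittVector p (Perfection Ob p)) :
    thN p O n a = 0 ↔ a ∈ Ideal.span {WittVector.teichmuller p t - (p : WittVector p (Perfection Ob p)) * w, (p : WittVector p (Perfection Ob p)) ^ (n+1)} := by
  have hxi : thN p O n (WittVector.teichmuller p t - (p : WittVector p (Perfection Ob p)) * w) = 0 := by
    rw [map_sub, map_mul, map_natCast, hw, sub_self]
  have hpz : (p : O ⧸ (Ideal.span {(p : O)} ^ (n+1))) ^ (n+1) = 0 := by
    rw [← map_natCast (Ideal.Quotient.mk _), ← map_pow, olz]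
  constructor
  · intro ha
    have key : ∀ j ≤ n+1, ∃ b c, a = (WittVector.teichmuller p t - (p : WittVector p (Perfection Ob p)) * w) * b + (p : WittVector p (Perfection Ob p)) ^ j * c := by
      intro j
      induction j with
      | zero => intro _; exact ⟨0, a, by simp⟩
      | succ j ih =>
        intro hj
        obtain ⟨b, c, hbc⟩ := ih (by omega)
        obtain ⟨y, hy⟩ := Ideal.Quotient.mk_surjective (thN p O n c)
        have h1 := congrArg (thN p O n) hbc
        rw [ha, map_add, map_mul, hxi, zero_mul, zero_add, map_mul, map_pow, map_natCast, ← hy, ← map_natCast (Ideal.Quotient.mk _), ← map_pow, ← map_mul, eq_comm, olz] at h1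
        have h2 : (p : O) ∣ y := by
          have : (p : O) ^ j * p ∣ (p : O) ^ j * y := by
            rw [← pow_succ]; exact (pow_dvd_pow _ (by omega)).trans h1
          exact (mul_dvd_mul_iff_left (pow_ne_zero _ h.p0)).1 this
        have h3 := thN_modp n c y hy.symm
        rw [(ob_zero y).2 h2] at h3
        obtain ⟨d, hd⟩ := h.ker t ht _ h3.symm
        obtain ⟨z, hz⟩ := witt_dvd_p (c - WittVector.teichmuller p t * WittVector.teichmuller p d) (by
          rw [map_sub, map_mul, witt_cc_teich, witt_cc_teich, hd, sub_self])
        refine ⟨b + p ^ j * WittVector.teichmuller p d, z + w * WittVector.teichmuller p d, ?_⟩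
        rw [hbc]
        linear_combination (p : WittVector p (Perfection Ob p)) ^ j * hz
    obtain ⟨b, c, hbc⟩ := key (n+1) le_rfl
    exact Ideal.mem_span_pair.2 ⟨b, c, by rw [hbc]; ring⟩
  · intro ha
    obtain ⟨b, c, rfl⟩ := Ideal.mem_span_pair.1 ha
    rw [map_add, map_mul, hxi, map_mul, map_pow, map_natCast, hpz, mul_zero, mul_zero, add_zero]

theorem base_of_O (h : ON p O ϖ u) {R : Type} [CommRing R] (m : Ideal R) (i : R →+* O) (hpm : (p : R) ∈ m) (hne : m.map i ≠ ⊤) (hfl : FlI i 0 ⊥) (n : ℕ) :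
    ∃ (D0 : Type) (_ : CommRing D0) (t : D0) (𝔪 : Ideal D0) (w : WittVector p D0) (OL : Type) (_ : CommRing OL) (θ : WittVector p D0 →+* OL)
      (ι : R →+* OL) (ψ : R →+* D0 ⧸ Ideal.span {t}), BaseD p (n+2) m t 𝔪 w θ ι ψ := by
  have hpm' : (p : O) ∈ m.map i := by rw [← map_natCast i]; exact Ideal.mem_map_of_mem _ hpm
  have hnt : Nontrivial Ob := by
    rw [Ideal.Quotient.nontrivial_iff]
    intro h1
    apply hne
    rw [← top_le_iff, ← h1, Ideal.span_singleton_le_iff_mem]; exact hpm'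
  have hch : CharP Ob p := (CharP.charP_iff_prime_eq_zero hpp.out).2 (by rw [← map_natCast (Ideal.Quotient.mk _), ob_zero])
  have hfrob : Function.Surjective (frobenius Ob p) := by
    intro y
    obtain ⟨y, rfl⟩ := Ideal.Quotient.mk_surjective y
    obtain ⟨b, hb⟩ := h.fs y
    refine ⟨Ideal.Quotient.mk _ b, ?_⟩
    rw [frobenius_def, ← map_pow]
    symm
    rwa [← sub_eq_zero, ← map_sub, ob_zero]
  have hcs : Function.Surjective (Perfection.coeff Ob p 0) := Perfection.coeff_surjective hfrob 0
  obtain ⟨t, ht⟩ := Perfection.coeff_surjective hfrob 1 (Ideal.Quotient.mk _ ϖ)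
  have ht0 : Perfection.coeff Ob p 0 t = 0 := by
    rw [← Perfection.coeff_pow_p', zero_add, ht, ← map_pow, ob_zero, h.hϖ]; exact dvd_mul_right _ _
  obtain ⟨τ, hτ⟩ := Ideal.Quotient.mk_surjective (Perfection.coeff Ob p (1 + n) t)
  obtain ⟨v, hv, hv2⟩ := h.tau t ht n τ hτ
  obtain ⟨w, hw⟩ := thN_surj h (n+1) (Ideal.Quotient.mk _ v)
  have hw2 : thN p O (n+1) (WittVector.teichmuller p t) = p * thN p O (n+1) w := by
    rw [thN_teich (n+1) t τ (by rw [hτ, add_comm]), hv2, map_mul, hw, map_natCast]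
  obtain ⟨ε, hε⟩ : ∃ ε : Perfection Ob p ⧸ Ideal.span {t} →+* Ob, ∀ a, ε (Ideal.Quotient.mk _ a) = Perfection.coeff Ob p 0 a := by
    refine ⟨Ideal.Quotient.lift _ (Perfection.coeff Ob p 0) ?_, fun a => rfl⟩
    intro a ha
    obtain ⟨c, rfl⟩ := Ideal.mem_span_singleton.1 ha
    rw [map_mul, ht0, zero_mul]
  have hεb : Function.Bijective ε := by
    constructor
    · rw [injective_iff_map_eq_zero]
      intro a ha
      obtain ⟨a, rfl⟩ := Ideal.Quotient.mk_surjective a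
      rw [hε] at ha
      exact Ideal.Quotient.eq_zero_iff_mem.2 (Ideal.mem_span_singleton.2 (h.ker t ht a ha))
    · intro y
      obtain ⟨a, rfl⟩ := hcs y
      exact ⟨_, hε a⟩
  let E := RingEquiv.ofBijective ε hεb
  have hE : ∀ y, E y = ε y := fun _ => rfl
  let i0 : R →+* Ob := (Ideal.Quotient.mk _).comp i
  let 𝔪 : Ideal (Perfection Ob p) := ((m.map i).map (Ideal.Quotient.mk _)).comap (Perfection.coeff Ob p 0)
  refine ⟨Perfection Ob p, inferInstance, t, 𝔪, w, _, inferInstance, thN p O (n+1), (Ideal.Quotient.mk _).comp i, E.symm.toRingHom.comp i0, ?_⟩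
  refine ⟨by omega, inferInstance, inferInstance, fun y hy => h.nzd t ht y hy, ?_, ?_, ?_, thN_surj h _, fun a => thN_ker h t ht (n+1) w hw2 a, ?_, ?_, ?_⟩
  · rw [Ideal.mem_comap, ht0]; exact zero_mem _
  · intro h1
    have h2 : (1 : Perfection Ob p) ∈ 𝔪 := by rw [h1]; trivial
    rw [Ideal.mem_comap, map_one] at h2
    obtain ⟨a, ha, ha1⟩ := (Ideal.mem_map_iff_of_surjective _ Ideal.Quotient.mk_surjective).1 h2
    have h3 : (p : O) ∣ a - 1 := by rw [← ob_zero, map_sub, ha1, map_one, sub_self]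
    apply hne
    rw [Ideal.eq_top_iff_one]
    obtain ⟨c, hc⟩ := h3
    rw [show (1 : O) = a - p * c by rw [← hc]; ring]
    exact Ideal.sub_mem _ ha (Ideal.mul_mem_right _ _ hpm')
  · apply per_unit
    rw [← thN_modp (n+1) w v hw]
    exact hv.map _
  · refine FlI.push (RingHom.id R) ((E.symm.toRingHom).comp (Ideal.Quotient.mk (Ideal.span {(p : O)}))) (φ := i) (s := (p : R)) (fun a => rfl) Function.surjective_id
      (E.symm.surjective.comp Ideal.Quotient.mk_surjective) (fun a ha => ha) ?_ (FlI.mod (p : R) hfl)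
    intro b
    rw [Ideal.mem_bot, map_natCast, Ideal.mem_span_singleton, ← ob_zero]
    exact (map_eq_zero_iff E.symm E.symm.injective).symm
  · intro r a ha
    apply E.injective
    have h1 := thN_modp (n+1) a (i r) ha
    change E (E.symm (Ideal.Quotient.mk _ (i r))) = _
    rw [RingEquiv.apply_symm_apply, hE, hε, h1]
  · intro r hr a ha
    have h1 := thN_modp (n+1) a (i r) ha
    rw [Ideal.mem_comap, ← h1]
    exact Ideal.mem_map_of_mem _ (Ideal.mem_map_of_mem _ hr)

end

section
open Polynomial

def PIr {K : Type} [Field K] : Subring K → List K → Prop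
  | _, [] => True
  | B, t :: l => t ∉ B ∧ PIr (B ⊔ Subring.closure {t}) l

lemma PIr.append {K : Type} [Field K] (κ : Subring K) (τ : K) (hτ : τ ∉ κ) : ∀ (l : List K) (B : Subring K), B ≤ κ → (∀ t ∈ l, t ∈ κ) → PIr B l → PIr B (l ++ [τ]) := by
  intro l
  induction l with
  | nil => intro B hB _ _; exact ⟨fun h => hτ (hB h), trivial⟩
  | cons t l ih =>
    intro B hB hl h
    refine ⟨h.1, ih _ (sup_le hB ?_) (fun s hs => hl s (List.mem_cons_of_mem _ hs)) h.2⟩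
    rw [Subring.closure_le]
    rintro _ rfl
    exact hl _ List.mem_cons_self

lemma PIr.greedy {K : Type} [Field K] : ∀ (s : List K) (B : Subring K), ∃ l : List K, PIr B l ∧ (∀ t ∈ l, t ∈ s) ∧ ∀ t ∈ s, t ∈ B ⊔ Subring.closure {t | t ∈ l} := by
  intro s
  induction s with
  | nil => intro B; exact ⟨[], trivial, by simp, by simp⟩
  | cons t s ih =>
    intro B
    by_cases ht : t ∈ B
    · obtain ⟨l, h1, h2, h3⟩ := ih B
      refine ⟨l, h1, fun x hx => List.mem_cons_of_mem _ (h2 x hx), ?_⟩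
      intro x hx
      rcases List.mem_cons.1 hx with rfl | hx
      · exact (le_sup_left : B ≤ _) ht
      · exact h3 x hx
    · obtain ⟨l, h1, h2, h3⟩ := ih (B ⊔ Subring.closure {t})
      refine ⟨t :: l, ⟨ht, h1⟩, ?_, ?_⟩
      · intro x hx
        rcases List.mem_cons.1 hx with rfl | hx
        · exact List.mem_cons_self
        · exact List.mem_cons_of_mem _ (h2 x hx)
      · have hle : Subring.closure {x | x ∈ l} ≤ Subring.closure {x | x ∈ t :: l} := Subring.closure_mono (fun x hx => List.mem_cons_of_mem _ hx)
        have ht' : t ∈ Subring.closure {x | x ∈ t :: l} := Subring.subset_closure List.mem_cons_self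
        intro x hx
        rcases List.mem_cons.1 hx with rfl | hx
        · exact (le_sup_right : _ ≤ B ⊔ _) ht'
        · refine (?_ : B ⊔ Subring.closure {t} ⊔ Subring.closure {x | x ∈ l} ≤ B ⊔ Subring.closure {x | x ∈ t :: l}) (h3 x hx)
          refine sup_le (sup_le le_sup_left (le_trans ?_ le_sup_right)) (hle.trans le_sup_right)
          rw [Subring.closure_le]
          rintro _ rfl
          exact ht'

structure Lev (p n : ℕ) [Fact p.Prime] (R : Type) {Ω K : Type} [CommRing R] [CommRing Ω] [Algebra R Ω] [Field K] [CharP K p] (π : Ω →+* K)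
    (A : Subring Ω) (x : ℕ → Ω) (l : List Ω) : Prop where
  alg : ∀ r, algebraMap R Ω r ∈ A
  fl : FlI ((algebraMap R Ω).codRestrict A alg) 0 ⊥
  xm : ∀ i, x i ∈ A
  reg : RegS n A (fun i => ⟨x i, xm i⟩)
  noeth : IsNoetherianRing A
  lm : ∀ t ∈ l, t ∈ A
  pi : PIr ((A.map π).map (frobenius K p)) (l.map π)
  star : A ≤ Subring.closure ({b | ∃ a ∈ A, b = a ^ p ∨ b = p * a} ∪ {b | ∃ i < n, b = x i} ∪ {b | b ∈ l})

lemma adj_equiv {p : ℕ} [hpp : Fact p.Prime] {Ω : Type} [CommRing Ω] [IsDomain Ω] (A : Subring Ω) (a : A) (α : Ω) (hα : α ^ p = a)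
    (hd : IsDomain (AdjoinRoot (X ^ p - C a : A[X]))) :
    ∃ e : AdjoinRoot (X ^ p - C a : A[X]) ≃+* ↥(A ⊔ Subring.closure {α}), (∀ b, (e (AdjoinRoot.of _ b) : Ω) = b) ∧ (e (AdjoinRoot.root _) : Ω) = α := by
  have hm : (X ^ p - C a : _[X]).Monic := monic_X_pow_sub_C a hpp.out.ne_zero
  let f : AdjoinRoot (X ^ p - C a : A[X]) →+* Ω := AdjoinRoot.lift A.subtype α (by simp [hα])
  have hf1 : ∀ b, f (AdjoinRoot.of _ b) = b := fun b => AdjoinRoot.lift_of _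
  have hf2 : f (AdjoinRoot.root _) = α := AdjoinRoot.lift_root _
  have hinj : Function.Injective f := by
    rw [RingHom.injective_iff_ker_eq_bot]
    have := adj_integral hm
    refine Ideal.eq_bot_of_comap_eq_bot (R := A) ?_
    rw [eq_bot_iff]
    intro b hb
    have : f (AdjoinRoot.of _ b) = 0 := hb
    rw [hf1] at this
    exact Subtype.ext this
  have hr : f.range = A ⊔ Subring.closure {α} := by
    apply le_antisymm
    · rintro _ ⟨y, rfl⟩
      have hα' : α ∈ A ⊔ Subring.closure {α} := (le_sup_right : _ ≤ A ⊔ _) (Subring.subset_closure rfl)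
      obtain ⟨g, rfl⟩ := AdjoinRoot.mk_surjective y
      change AdjoinRoot.lift _ _ _ _ ∈ _
      rw [AdjoinRoot.lift_mk, eval₂_eq_sum_range]
      exact sum_mem fun i _ => mul_mem ((le_sup_left : A ≤ _) (g.coeff i).2) (pow_mem hα' _)
    · refine sup_le (fun b hb => ⟨AdjoinRoot.of _ ⟨b, hb⟩, hf1 _⟩) ?_
      rw [Subring.closure_le]
      rintro _ rfl
      exact ⟨_, hf2⟩
  refine ⟨(RingEquiv.ofBijective f.rangeRestrict ⟨?_, f.rangeRestrict_surjective⟩).trans (RingEquiv.subringCongr hr), ?_, ?_⟩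
  · intro y z hyz
    exact hinj (congrArg Subtype.val hyz)
  · exact hf1
  · exact hf2

lemma adj_fl {p : ℕ} [hpp : Fact p.Prime] {A : Type} [CommRing A] (a : A) : FlI (AdjoinRoot.of (X ^ p - C a)) 0 ⊥ := by
  have hm : (X ^ p - C a : _[X]).Monic := monic_X_pow_sub_C a hpp.out.ne_zero
  have h0 : FlI (RingHom.id A) 0 ⊥ := by
    intro ι _ a y hy
    refine ⟨Unit, inferInstance, fun i _ => y i, fun _ => 1, fun i => by simp, fun _ => ?_⟩
    simpa using hy
  refine FlI.push (RingHom.id A) (AdjoinRoot.mk (X ^ p - C a)) (fun a => rfl) Function.surjective_id AdjoinRoot.mk_surjective (fun a h => h) ?_ (h0.polyMod _ hm)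
  intro b
  rw [Ideal.mem_bot, AdjoinRoot.mk_eq_zero, Ideal.mem_span_singleton]

variable {p n : ℕ} [hpp : Fact p.Prime] {R Ω K : Type} [CommRing R] [CommRing Ω] [IsDomain Ω] [Algebra R Ω] [Field K] [CharP K p] {π : Ω →+* K}

lemma Lev.step {A : Subring Ω} {x : ℕ → Ω} {l : List Ω} (h : Lev p n R π A x l) (a : A) (α : Ω) (hα : α ^ p = a)
    (y : ℕ → AdjoinRoot (X ^ p - C a)) (hy : RegS n _ y) (x' : ℕ → Ω) (l' : List Ω)
    (hx' : ∀ i, (∃ b : A, (b : Ω) = x' i ∧ y i = AdjoinRoot.of _ b) ∨ (x' i = α ∧ y i = AdjoinRoot.root _))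
    (hl : ∀ t ∈ l', t ∈ A ∨ t = α) (hpi : PIr (((A ⊔ Subring.closure {α}).map π).map (frobenius K p)) (l'.map π))
    (hst : α ∈ Subring.closure ({b | ∃ i < n, b = x' i} ∪ {b | b ∈ l'}))
    (hst2 : ∀ i < n, x i = α ^ p ∨ x i ∈ Subring.closure ({b | ∃ i < n, b = x' i} ∪ {b | b ∈ l'}))
    (hst3 : ∀ t ∈ l, t = α ^ p ∨ t ∈ Subring.closure ({b | ∃ i < n, b = x' i} ∪ {b | b ∈ l'})) :
    Lev p n R π (A ⊔ Subring.closure {α}) x' l' := by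
  have := h.noeth
  have hd := RegS.isDomain _ _ _ hy
  obtain ⟨e, he1, he2⟩ := adj_equiv A a α hα hd
  have hαm : α ∈ A ⊔ Subring.closure {α} := (le_sup_right : _ ≤ A ⊔ _) (Subring.subset_closure rfl)
  have hAm : A ≤ A ⊔ Subring.closure {α} := le_sup_left
  have hex : ∀ i, (e (y i) : Ω) = x' i := by
    intro i
    rcases hx' i with ⟨b, hb, hb2⟩ | ⟨h1, h2⟩
    · rw [hb2, he1, hb]
    · rw [h2, he2, h1]
  refine ⟨fun r => hAm (h.alg r), ?_, fun i => hex i ▸ (e (y i)).2, ?_, ?_, ?_, hpi, ?_⟩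
  · refine FlI.push (RingHom.id R) e.toRingHom ?_ Function.surjective_id e.surjective (fun a h => h) ?_ (h.fl.comp (adj_fl (p := p) a))
    · intro r
      apply Subtype.ext
      exact he1 _
    · intro b
      rw [Ideal.mem_bot, Ideal.mem_bot]
      exact (map_eq_zero_iff e e.injective).symm
  · exact RegS.ofEquiv n _ _ e y _ (fun i _ => Subtype.ext (hex i).symm) hy
  · exact isNoetherianRing_of_ringEquiv _ e
  · intro t ht
    rcases hl t ht with h1 | h1
    · exact hAm h1
    · rw [h1]; exact hαm
  · have hcm : ∀ z, z ∈ Subring.closure ({b | ∃ i < n, b = x' i} ∪ {b | b ∈ l'}) →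
        z ∈ Subring.closure ({b | ∃ a ∈ A ⊔ Subring.closure {α}, b = a ^ p ∨ b = p * a} ∪ {b | ∃ i < n, b = x' i} ∪ {b | b ∈ l'}) := by
      intro z hz
      rw [Set.union_assoc]
      exact Subring.closure_mono Set.subset_union_right hz
    have hαp : α ^ p ∈ Subring.closure ({b | ∃ a ∈ A ⊔ Subring.closure {α}, b = a ^ p ∨ b = p * a} ∪ {b | ∃ i < n, b = x' i} ∪ {b | b ∈ l'}) :=
      Subring.subset_closure (Or.inl (Or.inl ⟨α, hαm, Or.inl rfl⟩))
    refine sup_le (h.star.trans ?_) ?_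
    · rw [Subring.closure_le]
      rintro b ((⟨c, hc, hc2⟩ | ⟨i, hi, rfl⟩) | hb)
      · exact Subring.subset_closure (Or.inl (Or.inl ⟨c, hAm hc, hc2⟩))
      · rcases hst2 i hi with h1 | h1
        · rw [SetLike.mem_coe, h1]; exact hαp
        · exact hcm _ h1
      · rcases hst3 b hb with h1 | h1
        · rw [SetLike.mem_coe, h1]; exact hαp
        · exact hcm _ h1
    · rw [Subring.closure_le]
      rintro _ rfl
      exact hcm _ hst

lemma Lev.nonunit {A : Subring Ω} {x : ℕ → Ω} {l : List Ω} (h : Lev p n R π A x l) (hπ : Function.Surjective π) [Algebra.IsIntegral R Ω]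
    (b : A) (hb : ¬ IsUnit b) : π b = 0 := by
  have := RegS.isLocal _ _ _ h.reg
  have hint : Algebra.IsIntegral A Ω := by
    constructor
    intro z
    obtain ⟨f, hf, hf2⟩ := Algebra.IsIntegral.isIntegral (R := R) z
    refine ⟨f.map ((algebraMap R Ω).codRestrict A h.alg), hf.map _, ?_⟩
    rw [eval₂_map]; exact hf2
  by_contra h0
  obtain ⟨y, hy⟩ := hπ (-(π b)⁻¹)
  have h1 := jac_of_integral (R := A) (S := Ω) ((IsLocalRing.mem_maximalIdeal b).2 hb) (z := (b : Ω)) (k := 1) (by simp; rfl) y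
  have h2 := h1.map π
  rw [map_add, map_mul, hy, map_one, mul_neg, mul_inv_cancel₀ h0, add_neg_cancel] at h2
  exact not_isUnit_zero h2

lemma adjX' {p : ℕ} (hp : 0 < p) {A : Type} [CommRing A] (n i : ℕ) (hi : i < n) (x : ℕ → A) (a : A) (ha : x i = a) (h : RegS n A x) :
    ∃ y : ℕ → AdjoinRoot (X ^ p - C a : A[X]), RegS n _ y ∧ y i = AdjoinRoot.root _ ∧ ∀ j, j ≠ i → y j = AdjoinRoot.of _ (x j) := by
  subst ha
  exact ⟨_, RegS.adjX p hp i n hi A x h, if_pos rfl, fun j hj => if_neg hj⟩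

lemma Lev.stepX {A : Subring Ω} {x : ℕ → Ω} {l : List Ω} (h : Lev p n R π A x l) (hπ : Function.Surjective π) [Algebra.IsIntegral R Ω]
    (hroot : ∀ a : Ω, ∃ b, b ^ p = a) (i : ℕ) (hi : i < n) : ∃ A' x', Lev p n R π A' x' l ∧ A ≤ A' ∧ x' i ^ p = x i ∧ ∀ j, j ≠ i → x' j = x j := by
  obtain ⟨α, hα⟩ := hroot (x i)
  have := RegS.isLocal _ _ _ h.reg
  have hx0 : π α = 0 := by
    have h1 : (⟨x i, h.xm i⟩ : A) ∈ IsLocalRing.maximalIdeal A := by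
      rw [RegS.max_eq _ _ _ h.reg]
      exact Ideal.subset_span ⟨⟨i, hi⟩, rfl⟩
    have h2 := h.nonunit hπ _ ((IsLocalRing.mem_maximalIdeal _).1 h1)
    change π (x i) = 0 at h2
    rw [← hα, map_pow] at h2
    exact pow_eq_zero_iff (hpp.out.ne_zero) |>.1 h2
  refine ⟨A ⊔ Subring.closure {α}, fun j => if j = i then α else x j, ?_, le_sup_left, by simp [hα], fun j hj => by simp [hj]⟩
  obtain ⟨a, ha⟩ : ∃ a : A, (⟨x i, h.xm i⟩ : A) = a := ⟨_, rfl⟩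
  obtain ⟨y, hy, hy1, hy2⟩ := adjX' hpp.out.pos n i hi _ a ha h.reg
  refine h.step a α (by rw [hα, ← ha]) y hy _ l ?_ (fun t ht => Or.inl (h.lm t ht)) ?_ ?_ ?_ ?_
  · intro j
    by_cases hj : j = i
    · right; exact ⟨if_pos hj, by rw [hj, hy1]⟩
    · left; exact ⟨⟨x j, h.xm j⟩, (if_neg hj).symm, hy2 j hj⟩
  · have : (A ⊔ Subring.closure {α}).map π = A.map π := by
      rw [Subring.map_sup, RingHom.map_closure, Set.image_singleton, hx0, sup_eq_left, Subring.closure_le]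
      rintro _ rfl
      exact zero_mem _
    rw [this]; exact h.pi
  · exact Subring.subset_closure (Or.inl ⟨i, hi, by simp⟩)
  · intro j hj
    by_cases hji : j = i
    · left; rw [hji, hα]
    · right; exact Subring.subset_closure (Or.inl ⟨j, hj, by simp [hji]⟩)
  · intro t ht
    right; exact Subring.subset_closure (Or.inr ht)

lemma Lev.stepT {A : Subring Ω} {x : ℕ → Ω} {t : Ω} {l : List Ω} (h : Lev p n R π A x (t :: l)) (hπ : Function.Surjective π) [Algebra.IsIntegral R Ω]
    (hroot : ∀ a : Ω, ∃ b, b ^ p = a) : ∃ A' τ, Lev p n R π A' x (l ++ [τ]) ∧ A ≤ A' ∧ τ ^ p = t ∧ τ ∈ A' := by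
  obtain ⟨τ, hτ⟩ := hroot t
  have htA := h.lm t List.mem_cons_self
  have hpi := h.pi
  rw [List.map_cons] at hpi
  have hτA : π τ ∉ A.map π := by
    intro h1
    apply hpi.1
    exact ⟨π τ, h1, by rw [frobenius_def, ← map_pow, hτ]⟩
  refine ⟨A ⊔ Subring.closure {τ}, τ, ?_, le_sup_left, hτ, (le_sup_right : _ ≤ A ⊔ _) (Subring.subset_closure rfl)⟩
  refine h.step ⟨t, htA⟩ τ hτ _ (RegS.adjT p hpp.out n A _ ⟨t, htA⟩ ?_ h.reg) x _ ?_ ?_ ?_ ?_ ?_ ?_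
  · intro a
    by_contra h1
    have h2 := h.nonunit hπ _ h1
    change π (t - a ^ p) = 0 at h2
    rw [map_sub, map_pow, sub_eq_zero] at h2
    apply hpi.1
    exact ⟨π a, ⟨a, a.2, rfl⟩, by rw [frobenius_def, h2]⟩
  · intro i; left; exact ⟨⟨x i, h.xm i⟩, rfl, rfl⟩
  · intro s hs
    rcases List.mem_append.1 hs with hs | hs
    · left; exact h.lm s (List.mem_cons_of_mem _ hs)
    · right; simpa using hs
  · have : ((A ⊔ Subring.closure {τ}).map π).map (frobenius K p) = (A.map π).map (frobenius K p) ⊔ Subring.closure {π t} := by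
      rw [Subring.map_sup, Subring.map_sup, RingHom.map_closure, RingHom.map_closure, Set.image_singleton, Set.image_singleton, frobenius_def, ← map_pow, hτ]
    rw [this, List.map_append]
    have hft : ∀ z ∈ A.map π, z ∈ A.map π := fun z hz => hz
    refine PIr.append (A.map π) (π τ) hτA _ _ (sup_le ?_ ?_) ?_ hpi.2
    · rintro _ ⟨z, hz, rfl⟩
      rw [frobenius_def]; exact pow_mem hz p
    · rw [Subring.closure_le]
      rintro _ rfl
      exact ⟨t, htA, rfl⟩
    · intro s hs
      obtain ⟨s', hs', hs2⟩ := List.mem_map.1 hs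
      exact ⟨s', h.lm s' (List.mem_cons_of_mem _ hs'), hs2⟩
  · exact Subring.subset_closure (Or.inr (by simp))
  · intro i hi; right; exact Subring.subset_closure (Or.inl ⟨i, hi, rfl⟩)
  · intro s hs
    rcases List.mem_cons.1 hs with rfl | hs
    · left; rw [hτ]
    · right; exact Subring.subset_closure (Or.inr (by simp [hs]))

lemma Lev.block {A : Subring Ω} {x : ℕ → Ω} {l : List Ω} (h : Lev p n R π A x l) (hπ : Function.Surjective π) [Algebra.IsIntegral R Ω]
    (hroot : ∀ a : Ω, ∃ b, b ^ p = a) : ∃ A' x' l', Lev p n R π A' x' l' ∧ A ≤ A' ∧ (∀ i < n, ∃ b ∈ A', b ^ p = x i) ∧ ∀ t ∈ l, ∃ b ∈ A', b ^ p = t := by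
  have h1 : ∀ k ≤ n, ∃ A' x', Lev p n R π A' x' l ∧ A ≤ A' ∧ (∀ i < k, x' i ^ p = x i) ∧ ∀ i, k ≤ i → x' i = x i := by
    intro k
    induction k with
    | zero => intro _; exact ⟨A, x, h, le_rfl, by simp, by simp⟩
    | succ k ih =>
      intro hk
      obtain ⟨A1, x1, h1, h2, h3, h4⟩ := ih (by omega)
      obtain ⟨A2, x2, h5, h6, h7, h8⟩ := h1.stepX hπ hroot k (by omega)
      refine ⟨A2, x2, h5, h2.trans h6, fun i hi => ?_, fun i hi => ?_⟩
      · by_cases hik : i = k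
        · rw [hik, h7, h4 k le_rfl]
        · rw [h8 i hik, h3 i (by omega)]
      · rw [h8 i (by omega), h4 i (by omega)]
  obtain ⟨A1, x1, h1, h2, h3, -⟩ := h1 n le_rfl
  have h4 : ∀ (l1 l2 : List Ω) (A1 : Subring Ω), Lev p n R π A1 x1 (l1 ++ l2) → ∃ A' l', Lev p n R π A' x1 l' ∧ A1 ≤ A' ∧ ∀ t ∈ l1, ∃ b ∈ A', b ^ p = t := by
    intro l1
    induction l1 with
    | nil => intro l2 A1 h; exact ⟨A1, _, h, le_rfl, by simp⟩
    | cons t l1 ih =>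
      intro l2 A1 h
      obtain ⟨A2, τ, h5, h6, h7, h8⟩ := Lev.stepT (l := l1 ++ l2) h hπ hroot
      rw [List.append_assoc] at h5
      obtain ⟨A3, l3, h9, h10, h11⟩ := ih _ _ h5
      refine ⟨A3, l3, h9, h6.trans h10, ?_⟩
      intro s hs
      rcases List.mem_cons.1 hs with rfl | hs
      · exact ⟨τ, h10 h8, h7⟩
      · exact h11 s hs
  obtain ⟨A2, l2, h5, h6, h7⟩ := h4 l [] A1 (by rwa [List.append_nil])
  exact ⟨A2, x1, l2, h5, h2.trans h6, fun i hi => ⟨x1 i, h6 (h1.xm i), h3 i hi⟩, h7⟩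

end

section

lemma pi_smul_top {R : Type} [CommRing R] (I : Ideal R) {ι : Type} [Fintype ι] (x : ι → R) :
    x ∈ (I • ⊤ : Submodule R (ι → R)) ↔ ∀ i, x i ∈ I := by
  classical
  constructor
  · intro h i
    refine Submodule.smul_induction_on h (fun r hr y _ => ?_) (fun y z hy hz => ?_)
    · exact I.mul_mem_right _ hr
    · exact I.add_mem hy hz
  · intro h
    have : x = ∑ i, x i • (Pi.single i 1 : ι → R) := by
      ext j
      simp [Finset.sum_apply, Pi.single_apply]
    rw [this]
    exact Submodule.sum_mem _ fun i _ => Submodule.smul_mem_smul (h i) trivial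

lemma nak {R S : Type} [CommRing R] [CommRing S] (I : Ideal R) [hI : IsPrecomplete I R] (φ : R →+* S)
    (haus : ∀ s, (∀ k : ℕ, s ∈ (I ^ k).map φ) → s = 0) {ι : Type} [Fintype ι] (E : ι → S)
    (h : ∀ s, ∃ c : ι → R, s - ∑ i, φ (c i) * E i ∈ I.map φ) : ∀ s, ∃ c : ι → R, s = ∑ i, φ (c i) * E i := by
  letI := φ.toAlgebra
  have e0 : ∀ (c : R) (s : S), c • s = φ c * s := fun c s => Algebra.smul_def c s
  have eI : ∀ (J : Ideal R) (s : S), s ∈ (J • ⊤ : Submodule R S) ↔ s ∈ J.map φ := by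
    intro J s
    rw [Ideal.smul_top_eq_map]
    rfl
  have h1 : IsPrecomplete I (ι → R) := by
    constructor
    intro f hf
    have hf' : ∀ i, ∃ L, ∀ n, f n i ≡ L [SMOD (I ^ n • ⊤ : Submodule R R)] := by
      intro i
      apply IsPrecomplete.prec hI (f := fun n => f n i)
      intro m n hmn
      have := hf hmn
      rw [SModEq.sub_mem, pi_smul_top] at this
      rw [SModEq.sub_mem, smul_eq_mul, Ideal.mul_top]
      exact this i
    choose L hL using hf'
    refine ⟨L, fun n => ?_⟩
    rw [SModEq.sub_mem, pi_smul_top]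
    intro i
    have := hL i n
    rw [SModEq.sub_mem, smul_eq_mul, Ideal.mul_top] at this
    exact this
  have h2 : IsHausdorff I S := by
    constructor
    intro s hs
    apply haus
    intro k
    have := hs k
    rwa [SModEq.zero, eI] at this
  have h3 : Function.Surjective (Fintype.linearCombination R E) := by
    apply surjective_of_mkQ_comp_surjective (I := I)
    intro y
    obtain ⟨s, rfl⟩ := Submodule.mkQ_surjective _ y
    obtain ⟨c, hc⟩ := h s
    refine ⟨c, ?_⟩
    rw [← eI] at hc
    symm
    rw [LinearMap.comp_apply, ← sub_eq_zero, ← map_sub, Submodule.mkQ_apply, Submodule.Quotient.mk_eq_zero]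
    convert hc using 2
    rw [Fintype.linearCombination_apply]; simp only [e0]
  intro s
  obtain ⟨c, hc⟩ := h3 s
  exact ⟨c, hc.symm⟩

lemma star0 {R : Type} [CommRing R] [IsNoetherianRing R] [IsLocalRing R] [hc : IsAdicComplete (IsLocalRing.maximalIdeal R) R]
    (p : ℕ) [hpp : Fact p.Prime] (hp : (p : R) ∈ IsLocalRing.maximalIdeal R) {n m : ℕ} (x : Fin n → R)
    (hx : Ideal.span (Set.range x) = IsLocalRing.maximalIdeal R) (T : Subring R) (h1 : ∀ a, a ^ p ∈ T) (h2 : ∀ a, (p : R) * a ∈ T)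
    (h3 : ∀ i, x i ∈ T) (g : Fin m → R) (hg : ∀ i, g i ∈ T)
    (hgs : ∀ r, ∃ c : Fin m → R, r - ∑ i, c i ^ p * g i ∈ IsLocalRing.maximalIdeal R) (r : R) : r ∈ T := by
  have hne : Ideal.span {(p : R)} ≠ ⊤ := by
    intro h
    have : Ideal.span {(p : R)} ≤ IsLocalRing.maximalIdeal R := by
      rw [Ideal.span_le]; rintro _ rfl; exact hp
    rw [h] at this
    exact (IsLocalRing.maximalIdeal.isMaximal R).ne_top (top_le_iff.1 this)
  obtain ⟨S, _, _, mk, hmk, hker⟩ : ∃ (S : Type) (_ : CommRing S) (_ : Nontrivial S) (mk : R →+* S), Function.Surjective mk ∧ ∀ r, mk r = 0 ↔ (p : R) ∣ r :=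
    ⟨R ⧸ Ideal.span {(p : R)}, inferInstance, Ideal.Quotient.nontrivial_iff.2 hne, Ideal.Quotient.mk _, Ideal.Quotient.mk_surjective, fun r => by
      rw [Ideal.Quotient.eq_zero_iff_dvd]⟩
  have hpS : (p : S) = 0 := by rw [← map_natCast mk]; exact (hker _).2 dvd_rfl
  have : CharP S p := (CharP.charP_iff_prime_eq_zero hpp.out).2 hpS
  have hloc : IsLocalRing S := IsLocalRing.of_surjective' mk hmk
  have hno : IsNoetherianRing S := isNoetherianRing_of_surjective R S mk hmk
  set 𝔪 := IsLocalRing.maximalIdeal R with h𝔪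
  set φ : R →+* S := (frobenius S p).comp mk with hφ
  have hφa : ∀ a, φ a = mk (a ^ p) := fun a => by simp [hφ, frobenius_def]
  have hm' : 𝔪.map mk = Ideal.span (Set.range fun j => mk (x j)) := by
    rw [← hx, Ideal.map_span, ← Set.range_comp]; rfl
  have hm'ne : 𝔪.map mk ≠ ⊤ := by
    intro h
    have h5 : (1 : S) ∈ 𝔪.map mk := by rw [h]; trivial
    obtain ⟨y, hy, hy1⟩ := (Ideal.mem_map_iff_of_surjective mk hmk).1 h5
    have h6 : mk (y - 1) = 0 := by rw [map_sub, hy1, map_one, sub_self]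
    obtain ⟨z, hz⟩ := (hker _).1 h6
    apply (IsLocalRing.maximalIdeal.isMaximal R).ne_top
    rw [Ideal.eq_top_iff_one]
    have : (1 : R) = y - p * z := by rw [← hz]; ring
    rw [this]
    exact sub_mem hy (Ideal.mul_mem_right _ _ hp)
  have claim : ∀ k : ℕ, ∃ (ι : Type) (_ : Fintype ι) (E : ι → S), (∀ i, E i ∈ T.map mk) ∧ ∀ s, ∃ c : ι → R, s - ∑ i, φ (c i) * E i ∈ (𝔪.map mk) ^ k := by
    intro k
    induction k with
    | zero => exact ⟨Empty, inferInstance, fun i => i.elim, fun i => i.elim, fun s => ⟨fun i => i.elim, by simp⟩⟩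
    | succ k ih =>
      obtain ⟨ι, _, E, hE, hE2⟩ := ih
      refine ⟨Fin m ⊕ (Fin n × ι), inferInstance, Sum.elim (fun i => mk (g i)) (fun q => mk (x q.1) * E q.2), ?_, ?_⟩
      · rintro (i | q)
        · exact ⟨_, hg i, rfl⟩
        · exact mul_mem ⟨_, h3 _, rfl⟩ (hE _)
      · intro s
        obtain ⟨r, rfl⟩ := hmk s
        obtain ⟨c, hc⟩ := hgs r
        rw [← hx, Ideal.mem_span_range_iff_exists_fun] at hc
        obtain ⟨b, hb⟩ := hc
        choose c2 hc2 using fun j => hE2 (mk (b j))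
        refine ⟨Sum.elim c (fun q => c2 q.1 q.2), ?_⟩
        have e1 : mk r - ∑ i, φ (Sum.elim c (fun q : Fin n × ι => c2 q.1 q.2) i) * (Sum.elim (fun i => mk (g i)) (fun q : Fin n × ι => mk (x q.1) * E q.2) i) =
            ∑ j, mk (x j) * (mk (b j) - ∑ i, φ (c2 j i) * E i) := by
          rw [Fintype.sum_sum_type]
          simp only [Sum.elim_inl, Sum.elim_inr, Fintype.sum_prod_type]
          have e2 : mk r = ∑ i, φ (c i) * mk (g i) + ∑ j, mk (b j) * mk (x j) := by
            have := congrArg mk hb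
            simp only [map_sum, map_mul, map_sub, map_pow] at this
            simp only [hφa, map_pow]
            linear_combination -this
          rw [e2]
          simp only [mul_sub, Finset.sum_sub_distrib, Finset.mul_sum]
          have e3 : ∀ j i, φ (c2 j i) * (mk (x j) * E i) = mk (x j) * (φ (c2 j i) * E i) := fun _ _ => by ring
          simp only [e3]
          have e4 : ∀ j, mk (b j) * mk (x j) = mk (x j) * mk (b j) := fun _ => by ring
          simp only [e4]
          ring
        rw [e1]
        refine Ideal.sum_mem _ fun j _ => ?_
        rw [pow_succ']
        refine Ideal.mul_mem_mul ?_ (hc2 j)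
        rw [hm']; exact Ideal.subset_span ⟨j, rfl⟩
  obtain ⟨k, hk⟩ : ∃ k : ℕ, (𝔪.map mk) ^ k ≤ 𝔪.map φ := by
    refine Ideal.exists_pow_le_of_le_radical_of_fg ?_ (IsNoetherian.noetherian _)
    rw [hm', Ideal.span_le]
    rintro _ ⟨j, rfl⟩
    refine ⟨p, ?_⟩
    dsimp only
    rw [← map_pow, ← hφa]
    refine Ideal.mem_map_of_mem _ ?_
    rw [← hx]; exact Ideal.subset_span ⟨j, rfl⟩
  obtain ⟨ι, _, E, hE, hE2⟩ := claim k
  have hfin := nak 𝔪 φ (by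
    intro s hs
    have h5 : s ∈ (⨅ i : ℕ, (𝔪.map mk) ^ i) := by
      rw [Ideal.mem_iInf]
      intro i
      refine (?_ : (𝔪 ^ i).map φ ≤ _) (hs i)
      rw [Ideal.map_pow]
      refine Ideal.pow_right_mono ?_ i
      rw [Ideal.map_le_iff_le_comap]
      intro a ha
      rw [Ideal.mem_comap, hφa]
      exact Ideal.mem_map_of_mem _ (Ideal.pow_mem_of_mem _ ha _ hpp.out.pos)
    rwa [Ideal.iInf_pow_eq_bot_of_isLocalRing _ hm'ne, Ideal.mem_bot] at h5) E (fun s => by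
      obtain ⟨c, hc⟩ := hE2 s
      exact ⟨c, hk hc⟩)
  obtain ⟨c, hc⟩ := hfin (mk r)
  have h5 : mk r ∈ T.map mk := by
    rw [hc]
    refine sum_mem fun i _ => mul_mem ?_ (hE i)
    rw [hφa]; exact ⟨_, h1 _, rfl⟩
  obtain ⟨t, ht, ht2⟩ := h5
  have h6 : mk (r - t) = 0 := by rw [map_sub, ht2, sub_self]
  obtain ⟨z, hz⟩ := (hker _).1 h6
  have : r = t + p * z := by rw [← hz]; ring
  rw [this]
  exact add_mem ht (h2 z)

end

section

lemma lev0 {R Ω K : Type} [CommRing R] [IsNoetherianRing R] [IsLocalRing R] [hc : IsAdicComplete (IsLocalRing.maximalIdeal R) R]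
    (hreg : ∃ (d : ℕ) (x : Fin d → R), ringKrullDim R = d ∧ Ideal.span (Set.range x) = IsLocalRing.maximalIdeal R)
    (p : ℕ) [hpp : Fact p.Prime] (hp : (p : R) ∈ IsLocalRing.maximalIdeal R)
    (hk : ∃ (m : ℕ) (s : Fin m → IsLocalRing.ResidueField R), ∀ a, ∃ c : Fin m → IsLocalRing.ResidueField R, a = ∑ i, (c i) ^ p * s i)
    [CommRing Ω] [Algebra R Ω] (hinj : Function.Injective (algebraMap R Ω)) [Field K] [CharP K p] (π : Ω →+* K)
    (hπ : ∀ r ∈ IsLocalRing.maximalIdeal R, π (algebraMap R Ω r) = 0) : ∃ n A x l, Lev p n R π A x l := by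
  obtain ⟨d, x0, hd, hx0⟩ := hreg
  obtain ⟨x, hx⟩ := RegS.of_dim d R x0 hx0 hd.symm.le
  have hmax := RegS.max_eq d R x hx
  obtain ⟨m, s, hs⟩ := hk
  choose g hg using fun i => IsLocalRing.residue_surjective (s i)
  set f : R →+* Ω := algebraMap R Ω with hf
  set ρ : R →+* K := π.comp f with hρ
  have hker : ∀ r, ρ r = 0 → r ∈ IsLocalRing.maximalIdeal R := by
    intro r hr
    rw [IsLocalRing.mem_maximalIdeal]
    intro hu
    have := hu.map ρ
    rw [hr] at this
    exact not_isUnit_zero this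
  set B : Subring K := (f.range.map π).map (frobenius K p) with hB
  obtain ⟨l0, hl1, hl2, hl3⟩ := PIr.greedy (List.ofFn fun i => ρ (g i)) B
  obtain ⟨lR, rfl⟩ : l0 ∈ Set.range (List.map ρ) := by
    rw [Set.range_list_map]
    intro t ht
    obtain ⟨i, hi⟩ := (List.mem_ofFn' _ _).1 (hl2 t ht)
    exact ⟨g i, hi⟩
  set C : Subring Ω := Subring.closure ({b | ∃ a ∈ f.range, b = a ^ p ∨ b = p * a} ∪ {b | ∃ i < d, b = f (x i)} ∪ {b | b ∈ lR.map f}) with hC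
  let T : Subring R := C.comap f
  have hT1 : ∀ a, a ^ p ∈ T := fun a => Subring.subset_closure (Or.inl (Or.inl ⟨f a, ⟨a, rfl⟩, Or.inl (map_pow f a p)⟩))
  have hT2 : ∀ a, (p : R) * a ∈ T := fun a => Subring.subset_closure (Or.inl (Or.inl ⟨f a, ⟨a, rfl⟩, Or.inr (by simp)⟩))
  have hT3 : ∀ i : Fin d, x i ∈ T := fun i => Subring.subset_closure (Or.inl (Or.inr ⟨i, i.2, rfl⟩))
  have hT4 : ∀ t ∈ lR, t ∈ T := fun t ht => Subring.subset_closure (Or.inr (List.mem_map.2 ⟨t, ht, rfl⟩))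
  have hle : B ⊔ Subring.closure {t | t ∈ lR.map ρ} ≤ T.map ρ := by
    refine sup_le ?_ ?_
    · rintro _ ⟨_, ⟨_, ⟨a, rfl⟩, rfl⟩, rfl⟩
      exact ⟨a ^ p, hT1 a, by simp [hρ, frobenius_def]⟩
    · rw [Subring.closure_le]
      intro t ht
      obtain ⟨r, hr, rfl⟩ := List.mem_map.1 ht
      exact ⟨r, hT4 r hr, rfl⟩
  have hg' : ∀ i, ∃ g' ∈ T, g' - g i ∈ IsLocalRing.maximalIdeal R := by
    intro i
    obtain ⟨g', h1, h2⟩ := hle (hl3 (ρ (g i)) ((List.mem_ofFn' _ _).2 ⟨i, rfl⟩))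
    exact ⟨g', h1, hker _ (by rw [map_sub, h2, sub_self])⟩
  choose g' hg1 hg2 using hg'
  have hTtop : ∀ r, r ∈ T := by
    refine star0 p hp (fun i : Fin d => x i) hmax.symm T hT1 hT2 hT3 g' hg1 ?_
    intro r
    obtain ⟨c, hc⟩ := hs (IsLocalRing.residue R r)
    choose c' hc' using fun i => IsLocalRing.residue_surjective (c i)
    refine ⟨c', ?_⟩
    rw [← IsLocalRing.residue_eq_zero_iff, map_sub, hc, map_sum, sub_eq_zero]
    refine Finset.sum_congr rfl fun i _ => ?_
    rw [map_mul, map_pow, hc', ← hg]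
    congr 1
    symm
    rw [← sub_eq_zero, ← map_sub, IsLocalRing.residue_eq_zero_iff]
    exact hg2 i
  let e : R ≃+* f.range := RingEquiv.ofBijective f.rangeRestrict ⟨fun a b h => hinj (congrArg Subtype.val h), f.rangeRestrict_surjective⟩
  refine ⟨d, f.range, fun i => f (x i), lR.map f, ⟨fun r => ⟨r, rfl⟩, ?_, fun i => ⟨_, rfl⟩, ?_, ?_, ?_, ?_, ?_⟩⟩
  · have h0 : FlI (RingHom.id R) 0 ⊥ := by
      intro ι _ a y hy
      refine ⟨Unit, inferInstance, fun i _ => y i, fun _ => 1, fun i => by simp, fun _ => ?_⟩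
      simpa using hy
    refine FlI.push (RingHom.id R) e.toRingHom (fun a => rfl) Function.surjective_id e.surjective (fun a h => h) ?_ h0
    intro b
    rw [Ideal.mem_bot, Ideal.mem_bot]
    exact (map_eq_zero_iff e e.injective).symm
  · exact RegS.ofEquiv d _ _ e x _ (fun i _ => rfl) hx
  · exact isNoetherianRing_of_ringEquiv _ e
  · intro t ht
    obtain ⟨r, hr, rfl⟩ := List.mem_map.1 ht
    exact ⟨r, rfl⟩
  · rw [List.map_map]; exact hl1
  · rintro _ ⟨r, rfl⟩
    exact hTtop r

end

section
open Polynomial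

lemma frob_sub (p : ℕ) [hpp : Fact p.Prime] (O : Type) [CommRing O] : ∃ T : Subring O, ∀ b, b ∈ T ↔ ∃ s z, b = s ^ p + p * z := by
  refine ⟨⟨⟨⟨⟨{b | ∃ s z, b = s ^ p + p * z}, ?_⟩, ?_⟩, ?_, ?_⟩, ?_⟩, fun b => Iff.rfl⟩
  · rintro a b ⟨s, z, rfl⟩ ⟨s', z', rfl⟩
    exact ⟨s * s', s ^ p * z' + z * s' ^ p + p * z * z', by ring⟩
  · exact ⟨1, 0, by simp⟩
  · rintro a b ⟨s, z, rfl⟩ ⟨s', z', rfl⟩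
    obtain ⟨r, hr⟩ := exists_add_pow_prime_eq hpp.out s s'
    exact ⟨s + s', z + z' - s * s' * r, by rw [hr]; ring⟩
  · exact ⟨0, 0, by simp [hpp.out.ne_zero]⟩
  · rintro a ⟨s, z, rfl⟩
    obtain ⟨r, hr⟩ := exists_add_pow_prime_eq hpp.out s (-s)
    rw [add_neg_cancel, zero_pow hpp.out.ne_zero] at hr
    exact ⟨-s, - z + s * (-s) * r, by linear_combination hr⟩

lemma sum_pow_J (p : ℕ) [hpp : Fact p.Prime] {O : Type} [CommRing O] (J : Ideal O) {ι : Type} (s : Finset ι) (b : ι → O) (hb : ∀ i, b i ∈ J) :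
    ∃ c ∈ J, (∑ i ∈ s, b i) ^ p = ∑ i ∈ s, b i ^ p + p * c := by
  classical
  induction s using Finset.induction_on with
  | empty => exact ⟨0, zero_mem _, by simp [hpp.out.ne_zero]⟩
  | insert i s hi ih =>
    obtain ⟨c, hc, h⟩ := ih
    rw [Finset.sum_insert hi, Finset.sum_insert hi]
    obtain ⟨r, hr⟩ := exists_add_pow_prime_eq hpp.out (b i) (∑ i ∈ s, b i)
    refine ⟨c + b i * ((∑ i ∈ s, b i) * r), add_mem hc (J.mul_mem_right _ (hb i)), ?_⟩
    rw [hr, h]; ring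

variable {p n : ℕ} [hpp : Fact p.Prime] {R Ω K : Type} [CommRing R] [CommRing Ω] [IsDomain Ω] [Algebra R Ω] [Field K] [CharP K p] {π : Ω →+* K}

lemma Lev.tower {A0 : Subring Ω} {x0 : ℕ → Ω} {l0 : List Ω} (h0 : Lev p n R π A0 x0 l0) (hπ : Function.Surjective π) [Algebra.IsIntegral R Ω]
    (hroot : ∀ a : Ω, ∃ b, b ^ p = a) : ∃ (A : ℕ → Subring Ω) (x : ℕ → ℕ → Ω) (l : ℕ → List Ω), (∀ e, Lev p n R π (A e) (x e) (l e)) ∧ Monotone A ∧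
      (∀ e, (∀ i < n, ∃ b ∈ A (e+1), b ^ p = x e i) ∧ ∀ t ∈ l e, ∃ b ∈ A (e+1), b ^ p = t) := by
  let Q := {q : Subring Ω × (ℕ → Ω) × List Ω // Lev p n R π q.1 q.2.1 q.2.2}
  have h1 : ∀ q : Q, ∃ q' : Q, q.1.1 ≤ q'.1.1 ∧ (∀ i < n, ∃ b ∈ q'.1.1, b ^ p = q.1.2.1 i) ∧ ∀ t ∈ q.1.2.2, ∃ b ∈ q'.1.1, b ^ p = t := by
    rintro ⟨⟨A, x, l⟩, h⟩
    obtain ⟨A', x', l', h', h2⟩ := h.block hπ hroot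
    exact ⟨⟨⟨A', x', l'⟩, h'⟩, h2⟩
  choose N hN1 hN2 hN3 using h1
  let q : ℕ → Q := fun e => Nat.rec ⟨⟨A0, x0, l0⟩, h0⟩ (fun _ r => N r) e
  refine ⟨fun e => (q e).1.1, fun e => (q e).1.2.1, fun e => (q e).1.2.2, fun e => (q e).2, monotone_nat_of_le_succ fun e => hN1 (q e), fun e => ⟨hN2 (q e), hN3 (q e)⟩⟩

lemma exO {A0 : Subring Ω} {x0 : ℕ → Ω} {l0 : List Ω} (h0 : Lev p n R π A0 x0 l0) (hπ : Function.Surjective π) [Algebra.IsIntegral R Ω] [CharZero Ω]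
    (hroot : ∀ a : Ω, ∃ b, b ^ p = a) (m : Ideal R) (hm : ∀ r ∈ m, π (algebraMap R Ω r) = 0) :
    ∃ (O : Type) (_ : CommRing O) (_ : IsDomain O) (i : R →+* O) (ϖ u : O), ON p O ϖ u ∧ m.map i ≠ ⊤ ∧ FlI i 0 ⊥ := by
  obtain ⟨A, x, l, hL, hmono, hrt⟩ := h0.tower hπ hroot
  have hdir : Directed (· ≤ ·) A := hmono.directed_le
  obtain ⟨O, hO⟩ : ∃ O : Subring Ω, ∀ a, a ∈ O ↔ ∃ e, a ∈ A e := ⟨⨆ e, A e, fun a => Subring.mem_iSup_of_directed hdir⟩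
  have hAO : ∀ e, A e ≤ O := fun e a ha => (hO a).2 ⟨e, ha⟩
  have halg : ∀ r, algebraMap R Ω r ∈ O := fun r => hAO 0 ((hL 0).alg r)
  have hfin : ∀ (ι : Type) [Fintype ι] (y : ι → O), ∃ e, ∀ i, (y i : Ω) ∈ A e := by
    intro ι _ y
    choose f hf using fun i => (hO _).1 (y i).2
    refine ⟨∑ i, f i, fun i => hmono (Finset.single_le_sum (fun _ _ => Nat.zero_le _) (Finset.mem_univ i)) (hf i)⟩
  have hfs : ∀ a : O, ∃ s z : O, a = s ^ p + p * z := by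
    obtain ⟨T, hT⟩ := frob_sub p O
    rintro ⟨a, ha⟩
    obtain ⟨e, he⟩ := (hO a).1 ha
    have h1 := (hL e).star he
    have h2 : Subring.closure ({b | ∃ a ∈ A e, b = a ^ p ∨ b = p * a} ∪ {b | ∃ i < n, b = x e i} ∪ {b | b ∈ l e}) ≤ T.map O.subtype := by
      rw [Subring.closure_le]
      have hroots : ∀ c, (∃ b ∈ A (e+1), b ^ p = c) → c ∈ T.map O.subtype := by
        rintro c ⟨b, hb, rfl⟩
        exact ⟨⟨b, hAO _ hb⟩ ^ p, (hT _).2 ⟨⟨b, hAO _ hb⟩, 0, by simp⟩, rfl⟩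
      rintro b ((⟨c, hc, rfl | rfl⟩ | ⟨i, hi, rfl⟩) | hb)
      · exact hroots _ ⟨c, hmono (Nat.le_succ e) hc, rfl⟩
      · exact ⟨(p : O) * ⟨c, hAO _ hc⟩, (hT _).2 ⟨0, ⟨c, hAO _ hc⟩, by simp [hpp.out.ne_zero]⟩, by simp⟩
      · exact hroots _ ((hrt e).1 i hi)
      · exact hroots _ ((hrt e).2 b hb)
    obtain ⟨b, hb, hb2⟩ := h2 h1
    obtain ⟨s, z, hsz⟩ := (hT b).1 hb
    exact ⟨s, z, by rw [← hsz]; exact Subtype.ext hb2.symm⟩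
  -- jacobson
  have hloc0 := RegS.isLocal _ _ _ (hL 0).reg
  letI : Algebra (A 0) O := (Subring.inclusion (hAO 0)).toAlgebra
  have hint : Algebra.IsIntegral (A 0) O := by
    constructor
    intro z
    obtain ⟨f, hf, hf2⟩ := Algebra.IsIntegral.isIntegral (R := R) (z : Ω)
    refine ⟨f.map ((algebraMap R Ω).codRestrict (A 0) (hL 0).alg), hf.map _, ?_⟩
    apply Subtype.ext
    change O.subtype _ = _
    rw [hom_eval₂, eval₂_map]
    exact hf2
  have hxm : ∀ i : Fin n, (⟨x 0 i, (hL 0).xm i⟩ : A 0) ∈ IsLocalRing.maximalIdeal (A 0) := by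
    intro i
    rw [RegS.max_eq _ _ _ (hL 0).reg]
    exact Ideal.subset_span ⟨i, rfl⟩
  choose X hXm hX using fun i : Fin n => (hrt 0).1 i i.2
  let X' : Fin n → O := fun i => ⟨X i, hAO _ (hXm i)⟩
  let x' : Fin n → O := fun i => ⟨x 0 i, hAO _ ((hL 0).xm i)⟩
  have hX' : ∀ i, X' i ^ p = x' i := fun i => Subtype.ext (hX i)
  set J : Ideal O := Ideal.jacobson ⊥ with hJdef
  have hXJ : ∀ i, X' i ∈ J := by
    intro i
    rw [hJdef, Ideal.mem_jacobson_bot]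
    intro y
    rw [add_comm]
    exact jac_of_integral (hxm i) (k := p) (hX' i) y
  have hxJ : ∀ i, x' i ∈ J := fun i => by rw [← hX']; exact Ideal.pow_mem_of_mem _ (hXJ i) _ hpp.out.pos
  -- p
  have hpm : (p : A 0) ∈ IsLocalRing.maximalIdeal (A 0) := by
    rw [IsLocalRing.mem_maximalIdeal]
    intro hu
    have h1 := hu.map (π.comp (A 0).subtype)
    rw [map_natCast, CharP.cast_eq_zero] at h1
    exact not_isUnit_zero h1
  rw [RegS.max_eq _ _ _ (hL 0).reg, Ideal.mem_span_range_iff_exists_fun] at hpm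
  obtain ⟨r, hr⟩ := hpm
  choose s z hsz using fun i => hfs ⟨r i, hAO _ (r i).2⟩
  have hpO : (p : O) = ∑ i, (s i ^ p + p * z i) * x' i := by
    have h1 := congrArg (Subring.inclusion (hAO 0)) hr
    rw [map_natCast, map_sum] at h1
    refine h1.symm.trans ?_
    refine Finset.sum_congr rfl fun i _ => ?_
    rw [map_mul, ← hsz]
    rfl
  obtain ⟨c, hcJ, hc⟩ := sum_pow_J p J Finset.univ (fun i => X' i * s i) (fun i => J.mul_mem_right _ (hXJ i))
  have hJu : ∀ j ∈ J, ∀ y, IsUnit (1 + j * y) := by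
    intro j hj y
    rw [add_comm]
    exact Ideal.mem_jacobson_bot.1 hj y
  have hp0 : (p : O) ≠ 0 := by
    intro h
    have h1 := congrArg O.subtype h
    rw [map_natCast, map_zero] at h1
    exact hpp.out.ne_zero (Nat.cast_eq_zero.1 h1)
  refine ⟨O, inferInstance, inferInstance, (algebraMap R Ω).codRestrict O halg, ∑ i, X' i * s i, 1 + (c - ∑ i, z i * x' i) * 1, ⟨hp0, ?_, ?_, ?_, ?_, ?_⟩, ?_, ?_⟩
  · intro a
    obtain ⟨s, z, h⟩ := hfs a
    exact ⟨s, z, by rw [h]; ring⟩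
  · exact hJu _ (sub_mem hcJ (sum_mem fun i _ => J.mul_mem_left _ (hxJ i))) 1
  · rw [hc]
    have : ∑ i, (X' i * s i) ^ p = p - p * ∑ i, z i * x' i := by
      rw [eq_sub_iff_add_eq]
      conv_rhs => rw [hpO]
      rw [Finset.mul_sum, ← Finset.sum_add_distrib]
      refine Finset.sum_congr rfl fun i _ => ?_
      rw [mul_pow, hX']; ring
    rw [this]; ring
  · exact hJu _ (sum_mem fun i _ => J.mul_mem_right _ (hXJ i))
  · rintro q hq w a hw ⟨c, hc⟩
    obtain ⟨e, he⟩ := hfin (Fin 3) ![w, a, c]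
    have := (hL e).noeth
    have hcic := RegS.cic _ _ _ (hL e).reg ⟨w, he 0⟩ (⟨w, he 0⟩ ^ q) ⟨a, he 1⟩
    have hw' : (⟨w, he 0⟩ : A e) ≠ 0 := fun h => hw (Subtype.ext (congrArg (A e).subtype h))
    have hc' : (⟨a, he 1⟩ : A e) ^ q = ⟨w, he 0⟩ ^ q * ⟨c, he 2⟩ := Subtype.ext (congrArg O.subtype hc)
    obtain ⟨b, hb⟩ := hcic hw' (pow_ne_zero _ hw') (by
      intro j
      have h1 : (⟨a, he 1⟩ : A e) ^ j = ⟨w, he 0⟩ ^ (q * (j / q)) * (⟨c, he 2⟩ ^ (j / q) * ⟨a, he 1⟩ ^ (j % q)) := by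
        conv_lhs => rw [← Nat.div_add_mod j q]
        rw [pow_add, pow_mul, hc', mul_pow, pow_mul, mul_assoc]
      rw [h1, ← mul_assoc, ← pow_add]
      refine Dvd.dvd.mul_right (pow_dvd_pow _ ?_) _
      have h2 := Nat.div_add_mod j q
      have h3 := Nat.mod_lt j hq
      omega)
    exact ⟨⟨b, hAO e b.2⟩, Subtype.ext (congrArg (A e).subtype hb)⟩
  · intro htop
    have h1 : m.map ((algebraMap R Ω).codRestrict O halg) ≤ RingHom.ker (π.comp O.subtype) := by
      rw [Ideal.map_le_iff_le_comap]
      intro r hr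
      exact hm r hr
    rw [htop, top_le_iff] at h1
    exact RingHom.ker_ne_top _ h1
  · intro ι _ a y hy
    obtain ⟨e, he⟩ := hfin ι y
    obtain ⟨κ, i1, f, w, h1, h2⟩ := (hL e).fl ι a (fun i => ⟨y i, he i⟩) (by
      rw [Ideal.mem_bot] at hy ⊢
      have := congrArg O.subtype hy
      apply Subtype.ext
      change (A e).subtype _ = _
      rw [map_sum] at this ⊢
      exact this)
    refine ⟨κ, i1, f, fun k => ⟨w k, hAO e (w k).2⟩, fun i => ?_, h2⟩
    have h3 := h1 i
    rw [Ideal.mem_bot] at h3 ⊢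
    have := congrArg (A e).subtype h3
    apply Subtype.ext
    rw [map_sub, map_sum] at this
    rw [AddSubgroupClass.coe_sub, AddSubmonoidClass.coe_finsetSum]
    exact this

end

section
open Polynomial

lemma exO_R (R : Type) [CommRing R] [IsDomain R] [IsNoetherianRing R] [IsLocalRing R] [hc : IsAdicComplete (IsLocalRing.maximalIdeal R) R]
    (hreg : ∃ (d : ℕ) (x : Fin d → R), ringKrullDim R = d ∧ Ideal.span (Set.range x) = IsLocalRing.maximalIdeal R)
    (p : ℕ) [hpp : Fact p.Prime] [CharZero R] (hp : (p : R) ∈ IsLocalRing.maximalIdeal R)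
    (hk : ∃ (m : ℕ) (s : Fin m → IsLocalRing.ResidueField R), ∀ a, ∃ c : Fin m → IsLocalRing.ResidueField R, a = ∑ i, (c i) ^ p * s i) :
    ∃ (O : Type) (_ : CommRing O) (_ : IsDomain O) (i : R →+* O) (ϖ u : O), ON p O ϖ u ∧ (IsLocalRing.maximalIdeal R).map i ≠ ⊤ ∧ FlI i 0 ⊥ := by
  obtain ⟨Ω, _, _, _, hint, hinj, hroot⟩ : ∃ (Ω : Type) (_ : CommRing Ω) (_ : IsDomain Ω) (_ : Algebra R Ω), Algebra.IsIntegral R Ω ∧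
      Function.Injective (algebraMap R Ω) ∧ ∀ a : Ω, ∃ b, b ^ p = a := by
    refine ⟨integralClosure R (AlgebraicClosure (FractionRing R)), inferInstance, inferInstance, inferInstance, inferInstance, ?_, ?_⟩
    · have h1 : Function.Injective (algebraMap R (AlgebraicClosure (FractionRing R))) := by
        rw [IsScalarTower.algebraMap_eq R (FractionRing R) (AlgebraicClosure (FractionRing R))]
        exact (algebraMap (FractionRing R) _).injective.comp (IsFractionRing.injective R (FractionRing R))
      intro a b hab
      exact h1 (congrArg Subtype.val hab)
    · intro a
      obtain ⟨z, hz⟩ := IsAlgClosed.exists_pow_nat_eq (a : AlgebraicClosure (FractionRing R)) hpp.out.pos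
      refine ⟨⟨z, ?_⟩, Subtype.ext hz⟩
      have h2 : IsIntegral R (z ^ p) := by rw [hz]; exact a.2
      exact IsIntegral.of_pow hpp.out.pos h2
  have hcz : CharZero Ω := charZero_of_injective_algebraMap hinj
  obtain ⟨M, hM⟩ := Ideal.exists_maximal Ω
  letI : Field (Ω ⧸ M) := Ideal.Quotient.field M
  have h1 : (M.comap (algebraMap R Ω)).IsMaximal := Ideal.isMaximal_comap_of_isIntegral_of_isMaximal M
  have h2 := IsLocalRing.eq_maximalIdeal h1
  have hπ : ∀ r ∈ IsLocalRing.maximalIdeal R, Ideal.Quotient.mk M (algebraMap R Ω r) = 0 := by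
    intro r hr
    rw [← h2, Ideal.mem_comap] at hr
    exact Ideal.Quotient.eq_zero_iff_mem.2 hr
  have hch : CharP (Ω ⧸ M) p := by
    rw [CharP.charP_iff_prime_eq_zero hpp.out]
    have := hπ _ hp
    simpa using this
  obtain ⟨n, A, x, l, h⟩ := lev0 hreg p hp hk hinj (Ideal.Quotient.mk M) hπ
  exact exO h Ideal.Quotient.mk_surjective hroot _ hπ

end

section
open Polynomial

lemma symm_desc {R : Type} [CommRing R] {r : ℕ} (f : R[X]) (S : MvPolynomial (Fin r) R) (hS : S.IsSymmetric) :
    ∃ S0 : R, ∀ (B : Type) [CommRing B] (φ : R →+* B) (β : Fin r → B), f.map φ = ∏ i, (X - C (β i)) → MvPolynomial.eval₂Hom φ β S = φ S0 := by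
  obtain ⟨P, hP⟩ := MvPolynomial.esymmAlgHom_surjective (σ := Fin r) (n := r) R (by simp) ⟨S, hS⟩
  have hP' : MvPolynomial.aeval (fun i : Fin r => MvPolynomial.esymm (Fin r) R (i + 1)) P = S := by
    rw [← MvPolynomial.esymmAlgHom_apply, hP]
  refine ⟨MvPolynomial.eval (fun i : Fin r => (-1) ^ ((i : ℕ) + 1) * f.coeff (r - (i + 1))) P, ?_⟩
  intro B _ φ β h
  letI := φ.toAlgebra
  have h1 : ∀ i : Fin r, MvPolynomial.aeval β (MvPolynomial.esymm (Fin r) R (i + 1)) = φ ((-1) ^ ((i : ℕ) + 1) * f.coeff (r - (i + 1))) := by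
    intro i
    rw [MvPolynomial.aeval_esymm_eq_multiset_esymm, map_mul, ← coeff_map, h]
    have h2 := Multiset.prod_X_sub_C_coeff (Finset.univ.val.map β) (k := r - (i + 1)) (by simp)
    have h3 : (Multiset.map (fun t => X - C t) (Finset.univ.val.map β)).prod = ∏ i, (X - C (β i)) := by
      rw [Multiset.map_map]; rfl
    rw [h3] at h2
    rw [h2]
    have h4 : Multiset.card (Finset.univ.val.map β) - (r - ((i:ℕ) + 1)) = i + 1 := by
      simp; omega
    rw [h4, map_pow, map_neg, map_one, ← mul_assoc, ← mul_pow]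
    simp
  change MvPolynomial.aeval β S = _
  rw [← hP', MvPolynomial.comp_aeval_apply]
  simp only [h1]
  rw [MvPolynomial.aeval_def, ← MvPolynomial.coe_eval₂Hom, ← RingHom.comp_apply φ]
  congr 1
  apply MvPolynomial.ringHom_ext
  · intro a; simp; rfl
  · intro i; simp

lemma poly_desc {R : Type} [CommRing R] {r : ℕ} (f : R[X]) (q : MvPolynomial (Fin r) R) :
    ∃ G0 : R[X], ∀ (B : Type) [CommRing B] (φ : R →+* B) (β : Fin r → B), f.map φ = ∏ i, (X - C (β i)) →
      ∏ ρ : Equiv.Perm (Fin r), (X - C (MvPolynomial.eval₂Hom φ (β ∘ ρ) q)) = G0.map φ := by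
  let G : (MvPolynomial (Fin r) R)[X] := ∏ ρ : Equiv.Perm (Fin r), (X - C (MvPolynomial.rename ρ q))
  have hG : ∀ i, (G.coeff i).IsSymmetric := by
    intro i e
    have : G.map (MvPolynomial.rename e : MvPolynomial (Fin r) R →ₐ[R] MvPolynomial (Fin r) R).toRingHom = G := by
      simp only [G, Polynomial.map_prod]
      refine Fintype.prod_equiv (Equiv.mulLeft e) _ _ ?_
      intro ρ
      simp [MvPolynomial.rename_rename]
    conv_rhs => rw [← this, coeff_map]
    rfl
  choose S0 hS0 using fun i => symm_desc f (G.coeff i) (hG i)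
  refine ⟨∑ i ∈ Finset.range (G.natDegree + 1), C (S0 i) * X ^ i, ?_⟩
  intro B _ φ β h
  have h1 : ∏ ρ : Equiv.Perm (Fin r), (X - C (MvPolynomial.eval₂Hom φ (β ∘ ρ) q)) = G.map (MvPolynomial.eval₂Hom φ β) := by
    simp only [G, Polynomial.map_prod]
    refine Finset.prod_congr rfl fun ρ _ => ?_
    rw [Polynomial.map_sub, map_X, map_C, MvPolynomial.eval₂Hom_rename]
  rw [h1]
  conv_lhs => rw [G.as_sum_range_C_mul_X_pow]
  simp only [Polynomial.map_sum, Polynomial.map_mul, map_C, Polynomial.map_pow, map_X]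
  refine Finset.sum_congr rfl fun i _ => ?_
  rw [hS0 i B φ β h]

lemma transport {R Kb : Type} [CommRing R] [IsDomain R] [Field Kb] (ψ : R →+* Kb) (hψ : Function.Injective ψ) {r : ℕ} (f : R[X]) (ζ : Fin r → Kb)
    (hf : f.map ψ = ∏ i, (X - C (ζ i))) {ι : Type} [Fintype ι] (Q : ι → MvPolynomial (Fin r) R) (hQ : ∀ i, MvPolynomial.eval₂Hom ψ ζ (Q i) = 0) :
    ∃ (g : R) (K : ℕ) (h : MvPolynomial (Fin r) R), g ≠ 0 ∧ ∀ (B : Type) [CommRing B] (φ : R →+* B) (β : Fin r → B), f.map φ = ∏ i, (X - C (β i)) →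
      (∀ (ρ : Equiv.Perm (Fin r)) i, (MvPolynomial.eval₂Hom φ (β ∘ ρ) h * MvPolynomial.eval₂Hom φ (β ∘ ρ) (Q i)) ^ K = 0) ∧
      ∏ ρ : Equiv.Perm (Fin r), (φ g - MvPolynomial.eval₂Hom φ (β ∘ ρ) h) = 0 := by
  classical
  choose G0 hG0 using fun i => poly_desc f (Q i)
  have hne : ∀ i, G0 i ≠ 0 := by
    intro i h0
    have h1 := hG0 i Kb ψ ζ hf
    rw [h0, Polynomial.map_zero] at h1
    exact (monic_prod_of_monic _ _ fun ρ _ => monic_X_sub_C _).ne_zero h1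
  choose G1 hG1 hG2 using fun i => exists_eq_pow_rootMultiplicity_mul_and_not_dvd (G0 i) (hne i) 0
  have hG3 : ∀ i, (G1 i).eval 0 ≠ 0 := by
    intro i h
    exact hG2 i (dvd_iff_isRoot.2 h)
  set k := fun i => (G0 i).rootMultiplicity 0 with hk
  let h : MvPolynomial (Fin r) R := ∏ i, (G1 i).eval₂ (MvPolynomial.C) (Q i)
  have hev : ∀ (B : Type) [CommRing B] (φ : R →+* B) (β : Fin r → B) i, MvPolynomial.eval₂Hom φ β ((G1 i).eval₂ (MvPolynomial.C) (Q i)) = (G1 i).eval₂ φ (MvPolynomial.eval₂Hom φ β (Q i)) := by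
    intro B _ φ β i
    rw [hom_eval₂]
    congr 1
    ext a; simp
  obtain ⟨H0, hH0⟩ := poly_desc f h
  refine ⟨∏ i, (G1 i).eval 0, ∑ i, k i + 1, h, Finset.prod_ne_zero_iff.2 fun i _ => hG3 i, ?_⟩
  have hg0 : H0.eval (∏ i, (G1 i).eval 0) = 0 := by
    apply hψ
    rw [map_zero, ← eval_map_apply, ← hH0 Kb ψ ζ hf, eval_prod]
    refine Finset.prod_eq_zero (Finset.mem_univ 1) ?_
    rw [eval_sub, eval_X, eval_C, sub_eq_zero, Equiv.Perm.coe_one, Function.comp_id, map_prod, map_prod]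
    refine Finset.prod_congr rfl fun i _ => ?_
    rw [hev, hQ, ← eval_map_apply, map_zero, eval₂_eq_eval_map]
  intro B _ φ β hβ
  refine ⟨fun ρ i => ?_, ?_⟩
  · have h1 : (G0 i).eval₂ φ (MvPolynomial.eval₂Hom φ (β ∘ ρ) (Q i)) = 0 := by
      rw [eval₂_eq_eval_map, ← hG0 i B φ β hβ, eval_prod]
      refine Finset.prod_eq_zero (Finset.mem_univ ρ) ?_
      simp
    rw [hG1 i, eval₂_mul, eval₂_pow, C_0, sub_zero, eval₂_X] at h1
    obtain ⟨c, hc⟩ : MvPolynomial.eval₂Hom φ (β ∘ ρ) ((G1 i).eval₂ (MvPolynomial.C) (Q i)) ∣ MvPolynomial.eval₂Hom φ (β ∘ ρ) h :=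
      map_dvd _ (Finset.dvd_prod_of_mem _ (Finset.mem_univ i))
    rw [hev] at hc
    obtain ⟨j, hj⟩ := Nat.exists_eq_add_of_le (Finset.single_le_sum (f := k) (fun _ _ => Nat.zero_le _) (Finset.mem_univ i))
    rw [hc]
    have e1 : ((G1 i).eval₂ φ (MvPolynomial.eval₂Hom φ (β ∘ ρ) (Q i)) * c * MvPolynomial.eval₂Hom φ (β ∘ ρ) (Q i)) ^ (k i + j + 1) =
        (MvPolynomial.eval₂Hom φ (β ∘ ρ) (Q i) ^ k i * (G1 i).eval₂ φ (MvPolynomial.eval₂Hom φ (β ∘ ρ) (Q i))) *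
          ((G1 i).eval₂ φ (MvPolynomial.eval₂Hom φ (β ∘ ρ) (Q i)) ^ (k i + j) * c ^ (k i + j + 1) * MvPolynomial.eval₂Hom φ (β ∘ ρ) (Q i) ^ (j + 1)) := by
      ring
    rw [hj, e1, h1, zero_mul]
  · have h2 := congrArg (eval (φ (∏ i, (G1 i).eval 0))) (hH0 B φ β hβ)
    rw [eval_map_apply, hg0, map_zero, eval_prod] at h2
    simpa using h2

end

section
open Polynomial

lemma split_ex {R : Type} [CommRing R] (P : ∀ (B : Type) [CommRing B], (R →+* B) → Prop)
    (hroot : ∀ (B : Type) [CommRing B] (f : R →+* B), P B f → ∀ F : B[X], F.Monic → 0 < F.natDegree →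
      ∃ (B' : Type) (_ : CommRing B') (g : B →+* B') (z : B'), P B' (g.comp f) ∧ (F.map g).eval z = 0) (r : ℕ) :
    ∀ (B : Type) [CommRing B] (f : R →+* B), P B f → ∀ F : B[X], F.Monic → F.natDegree = r →
      ∃ (B' : Type) (_ : CommRing B') (g : B →+* B') (β : Fin r → B'), P B' (g.comp f) ∧ F.map g = ∏ i, (X - C (β i)) := by
  induction r with
  | zero =>
    intro B _ f hf F hF hd
    refine ⟨B, inferInstance, RingHom.id B, fun i => i.elim0, hf, ?_⟩
    simp [hF.natDegree_eq_zero.1 hd]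
  | succ r ih =>
    intro B _ f hf F hF hd
    obtain ⟨B1, _, g1, z, hP1, hz⟩ := hroot B f hf F hF (by omega)
    by_cases hnt : Nontrivial B1
    · have hdiv : (X - C z) ∣ F.map g1 := dvd_iff_isRoot.2 hz
      obtain ⟨G, hG⟩ := hdiv
      have hGm : G.Monic := by
        have := hF.map g1
        rw [hG] at this
        exact (monic_X_sub_C z).of_mul_monic_left this
      have hGd : G.natDegree = r := by
        have h1 := hF.natDegree_map g1
        rw [hG, (monic_X_sub_C z).natDegree_mul hGm, natDegree_X_sub_C] at h1
        omega
      obtain ⟨B2, _, g2, β, hP2, hβ⟩ := ih B1 (g1.comp f) hP1 G hGm hGd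
      refine ⟨B2, inferInstance, g2.comp g1, Fin.cons (g2 z) β, ?_, ?_⟩
      · rwa [RingHom.comp_assoc]
      · rw [← Polynomial.map_map, hG, Polynomial.map_mul, hβ, Fin.prod_univ_succ]
        simp
    · rw [not_nontrivial_iff_subsingleton] at hnt
      exact ⟨B1, inferInstance, g1, fun _ => 0, hP1, Subsingleton.elim _ _⟩

lemma roots_ex {R : Type} [CommRing R] (P : ∀ (B : Type) [CommRing B], (R →+* B) → Prop)
    (hroot : ∀ (B : Type) [CommRing B] (f : R →+* B), P B f → ∀ F : B[X], F.Monic → 0 < F.natDegree →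
      ∃ (B' : Type) (_ : CommRing B') (g : B →+* B') (z : B'), P B' (g.comp f) ∧ (F.map g).eval z = 0) (q : ℕ) (hq : 0 < q) (n : ℕ) :
    ∀ (B : Type) [CommRing B] (f : R →+* B), P B f → ∀ h : Fin n → B,
      ∃ (B' : Type) (_ : CommRing B') (g : B →+* B') (b : Fin n → B'), P B' (g.comp f) ∧ ∀ i, b i ^ q = g (h i) := by
  induction n with
  | zero =>
    intro B _ f hf h
    exact ⟨B, inferInstance, RingHom.id B, fun i => i.elim0, hf, fun i => i.elim0⟩
  | succ n ih =>
    intro B _ f hf h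
    by_cases hnt : Nontrivial B
    · obtain ⟨B1, _, g1, z, hP1, hz⟩ := hroot B f hf (X ^ q - C (h 0)) (monic_X_pow_sub_C _ hq.ne') (by rw [natDegree_X_pow_sub_C]; exact hq)
      obtain ⟨B2, _, g2, b, hP2, hb⟩ := ih B1 (g1.comp f) hP1 (fun i => g1 (h i.succ))
      refine ⟨B2, inferInstance, g2.comp g1, Fin.cons (g2 z) b, ?_, ?_⟩
      · rwa [RingHom.comp_assoc]
      · intro i
        refine Fin.cases ?_ (fun i => ?_) i
        · simp only [Polynomial.map_sub, Polynomial.map_pow, map_X, map_C, eval_sub, eval_pow, eval_X, eval_C] at hz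
          simp only [Fin.cons_zero, RingHom.comp_apply]
          rw [← map_pow, sub_eq_zero.1 hz]
        · simpa using hb i
    · rw [not_nontrivial_iff_subsingleton] at hnt
      exact ⟨B, inferInstance, RingHom.id B, fun _ => 0, hf, fun i => Subsingleton.elim _ _⟩

lemma exB (R : Type) [CommRing R] [IsDomain R] [IsNoetherianRing R] [IsLocalRing R] [hc : IsAdicComplete (IsLocalRing.maximalIdeal R) R]
    (hreg : ∃ (d : ℕ) (x : Fin d → R), ringKrullDim R = d ∧ Ideal.span (Set.range x) = IsLocalRing.maximalIdeal R)
    (p : ℕ) [hpp : Fact p.Prime] [CharZero R] (hp : (p : R) ∈ IsLocalRing.maximalIdeal R)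
    (hk : ∃ (m : ℕ) (s : Fin m → IsLocalRing.ResidueField R), ∀ a, ∃ c : Fin m → IsLocalRing.ResidueField R, a = ∑ i, (c i) ^ p * s i)
    (L : ℕ) (hL : 2 ≤ L) (F : R[X]) (hF : F.Monic) (r : ℕ) (hr : F.natDegree = r) (σ : Type) [Finite σ] (H : σ → MvPolynomial (Fin r) R) (q : ℕ) (hq : 0 < q) :
    ∃ (B : Type) (_ : CommRing B) (f : R →+* B) (β : Fin r → B) (b : σ → B),
      F.map f = ∏ i, (X - C (β i)) ∧ (∀ i, b i ^ q = MvPolynomial.eval₂Hom f β (H i)) ∧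
      (∀ e N, p ^ e * N = L → ∀ x : B, x ^ p ^ e = 0 → x ∈ Ideal.span {(p : B) ^ N}) ∧
      (IsLocalRing.maximalIdeal R).map f ≠ ⊤ ∧ ∀ N, N ≤ L → FlI f ((p : R) ^ N) (Ideal.span {(p : B) ^ N}) := by
  obtain ⟨O, _, _, i, ϖ, u, hON, hne, hfl⟩ := exO_R R hreg p hp hk
  obtain ⟨n, rfl⟩ := Nat.exists_eq_add_of_le' hL
  obtain ⟨D0, _, t, 𝔪, w, OL, _, θ, ι, ψ, hB⟩ := base_of_O hON (IsLocalRing.maximalIdeal R) i hp hne hfl n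
  let P : ∀ (B : Type) [CommRing B], (R →+* B) → Prop := fun B _ f => GR p (n+2) t 𝔪 w θ ι B f
  have hroot : ∀ (B : Type) [CommRing B] (f : R →+* B), P B f → ∀ F : B[X], F.Monic → 0 < F.natDegree →
      ∃ (B' : Type) (_ : CommRing B') (g : B →+* B') (z : B'), P B' (g.comp f) ∧ (F.map g).eval z = 0 :=
    fun B _ f h F hF hd => GR.root hB h F hF hd
  have h0 : P OL ι := GR.init hB
  have hnt : Nontrivial OL := by
    by_contra h
    rw [not_nontrivial_iff_subsingleton] at h
    exact GR.ne hB h0 (Subsingleton.elim _ _)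
  obtain ⟨B1, _, g1, β, h1, hβ⟩ := split_ex P hroot r OL ι h0 (F.map ι) (hF.map _) (by rw [hF.natDegree_map, hr])
  obtain ⟨N, ⟨eq⟩⟩ := Finite.exists_equiv_fin σ
  obtain ⟨B2, _, g2, b, h2, hb⟩ := roots_ex P hroot q hq N B1 (g1.comp ι) h1 (fun j => MvPolynomial.eval₂Hom (g1.comp ι) β (H (eq.symm j)))
  refine ⟨B2, inferInstance, g2.comp (g1.comp ι), fun i => g2 (β i), fun s => b (eq s), ?_, ?_, ?_, ?_, ?_⟩
  · rw [← Polynomial.map_map, ← Polynomial.map_map, hβ]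
    simp [Polynomial.map_prod]
  · intro s
    rw [hb, Equiv.symm_apply_apply]
    simp only [MvPolynomial.coe_eval₂Hom]
    rw [MvPolynomial.eval₂_comp_left]; rfl
  · intro e N hN x hx
    exact GR.closed hB h2 e N hN x hx
  · exact GR.ne hB h2
  · intro N hN
    exact GR.fl hB h2 N hN

end

section
open Polynomial

lemma fl_descent {R B : Type} [CommRing R] [IsLocalRing R] [CommRing B] (f : R →+* B) (I : Ideal R) (s : R) (hs : s ∈ I)
    (hfl : FlI f s (Ideal.span {f s})) (hne : (IsLocalRing.maximalIdeal R).map f ≠ ⊤) (x : R) (hx : f x ∈ I.map f) : x ∈ I := by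
  by_contra hxI
  have hIm : I ≤ IsLocalRing.maximalIdeal R := IsLocalRing.le_maximalIdeal (by rintro rfl; exact hxI trivial)
  obtain ⟨n, y, c, hc⟩ := Submodule.mem_span_set'.1 hx
  have hc' : ∀ i, ∃ a ∈ I, f a = (c i : B) := fun i => (c i).2
  choose a haI ha using hc'
  obtain ⟨κ, _, e, z, h1, h2⟩ := hfl (Option (Fin n)) (fun o => o.elim x a) (fun o => o.elim (-1) y) (by
    rw [Fintype.sum_option]
    simp only [Option.elim, ha]
    have : f x * -1 + ∑ i, (c i : B) * y i = 0 := by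
      rw [← hc]; simp [mul_comm]
    rw [this]; exact zero_mem _)
  have h3 : ∀ l, e none l ∈ IsLocalRing.maximalIdeal R := by
    intro l
    rw [IsLocalRing.mem_maximalIdeal]
    intro hu
    apply hxI
    have h4 := h2 l
    rw [Fintype.sum_option] at h4
    simp only [Option.elim] at h4
    have h5 : ∑ i, a i * e (some i) l ∈ I := sum_mem fun i _ => I.mul_mem_right _ (haI i)
    have h6 := (I.add_mem_iff_left h5).1 (I.mem_of_dvd h4 hs)
    exact (I.mul_unit_mem_iff_mem hu).1 h6
  apply hne
  rw [Ideal.eq_top_iff_one]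
  have h7 := h1 none
  simp only [Option.elim] at h7
  have h8 : Ideal.span {f s} ≤ (IsLocalRing.maximalIdeal R).map f := by
    rw [Ideal.span_singleton_le_iff_mem]; exact Ideal.mem_map_of_mem _ (hIm hs)
  have h9 : ∑ l, f (e none l) * z l ∈ (IsLocalRing.maximalIdeal R).map f :=
    sum_mem fun l _ => Ideal.mul_mem_right _ _ (Ideal.mem_map_of_mem _ (h3 l))
  have h10 := add_mem (h8 h7) h9
  rw [sub_add_cancel] at h10
  exact neg_mem_iff.1 h10

lemma local_step {R B : Type} [CommRing R] [CommRing B] (f : R →+* B) (m : Ideal R) (s : R) (J : Ideal B) (hJ : J = Ideal.span {f s})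
    (hfl : FlI f s J) (n P : ℕ) (hn : 0 < n) (hP : 0 < P) (hs : s ∈ m ^ (n * P)) {κ : Type} [Fintype κ] {ν : ℕ} (a0 : κ → R) (a : Fin ν → κ → R)
    (H : ∀ e : κ → R, (∀ i, s ∣ ∑ j, a i j * e j) → ∑ j, a0 j * e j ∈ m)
    (c : R) (b δ : B) (Y : κ → B) (h1 : b * (δ - ∑ j, f (a0 j) * Y j) ∈ J) (h2 : ∀ i, b * ∑ j, f (a i j) * Y j ∈ J)
    (h3 : b * (δ ^ n - f c) ∈ J) : (b ^ P) ^ n * f (c ^ P) ∈ (m ^ (n * P)).map f := by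
  have hJ1 : J ≤ (m ^ (n * P)).map f := by
    rw [hJ, Ideal.span_singleton_le_iff_mem]; exact Ideal.mem_map_of_mem _ hs
  have hJ2 : J ≤ m.map f := hJ1.trans (Ideal.map_mono (Ideal.pow_le_self (by positivity)))
  obtain ⟨l, _, e, z, h4, h5⟩ := hfl.multi ν κ a (fun j => b * Y j) (by
    intro k
    have := h2 k
    rw [Finset.mul_sum] at this
    convert this using 2; ring)
  have h6 : b * δ ∈ m.map f := by
    have e1 : b * δ = b * (δ - ∑ j, f (a0 j) * Y j) + ∑ j, f (a0 j) * (b * Y j - ∑ t, f (e j t) * z t) + ∑ t, f (∑ j, a0 j * e j t) * z t := by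
      have e2 : ∑ t, f (∑ j, a0 j * e j t) * z t = ∑ j, f (a0 j) * ∑ t, f (e j t) * z t := by
        simp only [map_sum, map_mul, Finset.sum_mul, Finset.mul_sum]
        rw [Finset.sum_comm]
        simp only [mul_assoc]
      rw [e2]
      simp only [mul_sub, Finset.sum_sub_distrib, Finset.mul_sum]
      have e3 : ∀ j, f (a0 j) * (b * Y j) = b * (f (a0 j) * Y j) := fun j => by ring
      simp only [e3]
      ring
    rw [e1]
    refine add_mem (add_mem (hJ2 h1) (sum_mem fun j _ => Ideal.mul_mem_left _ _ (hJ2 (h4 j)))) (sum_mem fun t _ => Ideal.mul_mem_right _ _ (Ideal.mem_map_of_mem _ (H _ fun i => h5 i t)))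
  have h7 : (b * δ) ^ (n * P) ∈ (m ^ (n * P)).map f := by
    rw [Ideal.map_pow]; exact Ideal.pow_mem_pow h6 _
  have h8 : (b * δ ^ n) ^ P - (b * f c) ^ P ∈ J := by
    refine J.mem_of_dvd (sub_dvd_pow_sub_pow _ _ P) ?_
    rw [← mul_sub]; exact h3
  obtain ⟨n', rfl⟩ := Nat.exists_eq_succ_of_ne_zero hn.ne'
  have e4 : (b ^ P) ^ (n'+1) * f (c ^ P) = (b * δ) ^ ((n'+1) * P) - (b ^ P) ^ n' * ((b * δ ^ (n'+1)) ^ P - (b * f c) ^ P) := by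
    rw [map_pow]
    have : (b * δ) ^ ((n'+1) * P) = (b ^ P) ^ n' * (b * δ ^ (n'+1)) ^ P := by
      rw [mul_pow, mul_pow, ← pow_mul, ← pow_mul, ← mul_assoc, ← pow_add]
      congr 2; ring
    rw [this, pow_succ, mul_pow b (f c)]; ring
  rw [e4]
  exact sub_mem h7 (Ideal.mul_mem_left _ _ (hJ1 h8))

lemma prod_step {B σ : Type} [CommRing B] [Fintype σ] (I : Ideal B) (G x : B) (h : σ → B) (n : ℕ) (h0 : ∏ i, (G - h i) = 0)
    (h1 : ∀ i, h i ^ n * x ∈ I) : G ^ (n * Fintype.card σ) * x ∈ I := by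
  let I' : Ideal B := Submodule.comap (LinearMap.mulRight B x) I
  have h2 : ∀ i, h i ^ n ∈ I' := h1
  have h3 : ∏ i, (G ^ n - h i ^ n) = 0 := by
    rw [← zero_dvd_iff, ← h0]
    exact Finset.prod_dvd_prod_of_dvd _ _ fun i _ => sub_dvd_pow_sub_pow _ _ n
  have h4 := congrArg (Ideal.Quotient.mk I') h3
  simp only [map_prod, map_sub, Ideal.Quotient.eq_zero_iff_mem.2 (h2 _), sub_zero, map_zero, Finset.prod_const, Finset.card_univ] at h4
  rw [← map_pow, ← pow_mul, Ideal.Quotient.eq_zero_iff_mem] at h4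
  exact h4

end

section
open Polynomial

lemma split_closed {K : Type} [Field K] [IsAlgClosed K] (r : ℕ) : ∀ F : K[X], F.Monic → F.natDegree = r →
    ∃ ζ : Fin r → K, F = ∏ i, (X - C (ζ i)) := by
  induction r with
  | zero => intro F hF hd; exact ⟨fun i => i.elim0, by simp [hF.natDegree_eq_zero.1 hd]⟩
  | succ r ih =>
    intro F hF hd
    obtain ⟨z, hz⟩ := IsAlgClosed.exists_root F (by rw [degree_eq_natDegree hF.ne_zero, hd]; exact_mod_cast Nat.succ_ne_zero r)
    obtain ⟨G, hG⟩ := dvd_iff_isRoot.2 hz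
    have hGm : G.Monic := by
      rw [hG] at hF
      exact (monic_X_sub_C z).of_mul_monic_left hF
    have hGd : G.natDegree = r := by
      rw [hG, (monic_X_sub_C z).natDegree_mul hGm, natDegree_X_sub_C] at hd
      omega
    obtain ⟨ζ, hζ⟩ := ih G hGm hGd
    refine ⟨Fin.cons z ζ, ?_⟩
    rw [Fin.prod_univ_succ, hG]
    simp [← hζ]

lemma common_poly {R K κ : Type} [CommRing R] [IsDomain R] [Field K] [IsAlgClosed K] [Fintype κ] (ψ : R →+* K) (y : κ → K) (hy : ∀ j, ψ.IsIntegralElem (y j)) :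
    ∃ (F : R[X]) (ζ : Fin F.natDegree → K) (τ : κ → Fin F.natDegree), F.Monic ∧ F.map ψ = ∏ i, (X - C (ζ i)) ∧ ∀ j, ζ (τ j) = y j := by
  choose G hG hG0 using hy
  have hm : (∏ j, G j).Monic := monic_prod_of_monic _ _ fun j _ => hG j
  obtain ⟨ζ, hζ⟩ := split_closed (∏ j, G j).natDegree ((∏ j, G j).map ψ) (hm.map _) (hm.natDegree_map _)
  have h1 : ∀ j, ∃ i, ζ i = y j := by
    intro j
    have h2 : ((∏ j, G j).map ψ).eval (y j) = 0 := by
      rw [Polynomial.map_prod, eval_prod]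
      refine Finset.prod_eq_zero (Finset.mem_univ j) ?_
      rw [eval_map]; exact hG0 j
    rw [hζ, eval_prod, Finset.prod_eq_zero_iff] at h2
    obtain ⟨i, _, hi⟩ := h2
    refine ⟨i, ?_⟩
    simp only [eval_sub, eval_X, eval_C] at hi
    exact (sub_eq_zero.1 hi).symm
  choose τ hτ using h1
  exact ⟨_, ζ, τ, hm, hζ, hτ⟩

lemma main_alg (R : Type) [CommRing R] [IsDomain R] [IsNoetherianRing R] [IsLocalRing R] [hc : IsAdicComplete (IsLocalRing.maximalIdeal R) R]
    (hreg : ∃ (d : ℕ) (x : Fin d → R), ringKrullDim R = d ∧ Ideal.span (Set.range x) = IsLocalRing.maximalIdeal R)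
    (p : ℕ) [hpp : Fact p.Prime] [CharZero R] (hp : (p : R) ∈ IsLocalRing.maximalIdeal R)
    (hk : ∃ (m : ℕ) (s : Fin m → IsLocalRing.ResidueField R), ∀ a, ∃ c : Fin m → IsLocalRing.ResidueField R, a = ∑ i, (c i) ^ p * s i)
    (K : Type) [Field K] [IsAlgClosed K] (ψ : R →+* K) (hψ : Function.Injective ψ) (c : R) (hc0 : c ≠ 0) :
    ∃ n, 0 < n ∧ ∀ (N0 : ℕ) (κ : Type) [Fintype κ] (ν : ℕ) (a0 : κ → R) (a : Fin ν → κ → R)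
      (H : ∀ e : κ → R, (∀ i, (p : R) ^ N0 ∣ ∑ j, a i j * e j) → ∑ j, a0 j * e j ∈ IsLocalRing.maximalIdeal R)
      (d : K) (y : κ → K) (hd : ψ.IsIntegralElem d) (hy : ∀ j, ψ.IsIntegralElem (y j)) (h1 : d = ∑ j, ψ (a0 j) * y j)
      (h2 : ∀ i, ∑ j, ψ (a i j) * y j = 0) (h3 : d ^ n = ψ c), False := by
  obtain ⟨D, x, hD, hx⟩ := id hreg
  obtain ⟨x', hx'⟩ := RegS.of_dim D R x hx hD.symm.le
  obtain ⟨n, hν⟩ := RegS.ord D R x' hx' c hc0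
  have hn : 0 < n := by
    rcases Nat.eq_zero_or_pos n with rfl | h
    · obtain ⟨P0, hP0⟩ := hν 1 one_ne_zero 0
      exact absurd (by simp) (hP0 P0 le_rfl)
    · exact h
  refine ⟨n, hn, ?_⟩
  intro N0 κ _ ν a0 a H d y hd hy h1 h2 h3
  obtain ⟨F, ζ, τ, hF, hFζ, hτ⟩ := common_poly ψ (fun o : Option κ => o.elim d y) (by
    intro o; cases o
    · exact hd
    · exact hy _)
  let Q : Option (Option (Fin ν)) → MvPolynomial (Fin F.natDegree) R := fun o => o.elim
    (MvPolynomial.X (τ none) - ∑ j, MvPolynomial.C (a0 j) * MvPolynomial.X (τ (some j)))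
    (fun o => o.elim (MvPolynomial.X (τ none) ^ n - MvPolynomial.C c) (fun i => ∑ j, MvPolynomial.C (a i j) * MvPolynomial.X (τ (some j))))
  have hQ : ∀ o, MvPolynomial.eval₂Hom ψ ζ (Q o) = 0 := by
    intro o
    rcases o with _ | _ | i
    · simp only [Q, Option.elim, map_sub, map_sum, map_mul, MvPolynomial.eval₂Hom_X', MvPolynomial.eval₂Hom_C, hτ]
      rw [sub_eq_zero]; exact h1
    · simp only [Q, Option.elim, map_sub, map_pow, MvPolynomial.eval₂Hom_X', MvPolynomial.eval₂Hom_C, hτ]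
      rw [sub_eq_zero]; exact h3
    · simp only [Q, Option.elim, map_sum, map_mul, MvPolynomial.eval₂Hom_X', MvPolynomial.eval₂Hom_C, hτ]
      exact h2 i
  obtain ⟨g, K, h, hg, hT⟩ := transport ψ hψ F ζ hFζ Q hQ
  obtain ⟨P0, hP0⟩ := hν (g ^ (n * Fintype.card (Equiv.Perm (Fin F.natDegree)))) (pow_ne_zero _ hg) 0
  have hp1 : 1 < p := hpp.out.one_lt
  let P := p ^ P0
  have hPP : 0 < P := pow_pos hpp.out.pos _
  have hP1 : P0 ≤ P := (Nat.lt_pow_self hp1).le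
  let N2 := N0 + n * P + 2
  let e := P0 + K
  have hN2L : N2 ≤ p ^ e * N2 := Nat.le_mul_of_pos_left _ (pow_pos hpp.out.pos _)
  obtain ⟨B, _, f, β, b, hβ, hb, hcl, hne, hfl⟩ := exB R hreg p hp hk (p ^ e * N2) (by omega) F hF F.natDegree rfl
    (Equiv.Perm (Fin F.natDegree)) (fun ρ => MvPolynomial.rename ρ h) P hPP
  obtain ⟨hT1, hT2⟩ := hT B f β hβ
  simp only [MvPolynomial.eval₂Hom_rename] at hb
  have hpN : f ((p : R) ^ N2) = (p : B) ^ N2 := by rw [map_pow, map_natCast]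
  have hJ : Ideal.span {(p : B) ^ N2} = Ideal.span {f ((p : R) ^ N2)} := by rw [hpN]
  have hsm : (p : R) ^ N2 ∈ IsLocalRing.maximalIdeal R ^ (n * P) :=
    Ideal.pow_le_pow_right (by omega) (Ideal.pow_mem_pow hp N2)
  have hbQ : ∀ ρ o, b ρ * MvPolynomial.eval₂Hom f (β ∘ ρ) (Q o) ∈ Ideal.span {(p : B) ^ N2} := by
    intro ρ o
    apply hcl e N2 rfl
    have h4 := hT1 ρ o
    have h5 : (MvPolynomial.eval₂Hom f (β ∘ ρ) h * MvPolynomial.eval₂Hom f (β ∘ ρ) (Q o)) ^ p ^ K = 0 :=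
      pow_eq_zero_of_le (Nat.lt_pow_self hp1).le h4
    have h6 : p ^ e = P * p ^ K := pow_add _ _ _
    obtain ⟨w, hw⟩ : ∃ w, P * p ^ K = p ^ K + w := Nat.exists_eq_add_of_le (Nat.le_mul_of_pos_left _ hPP)
    rw [mul_pow] at h5 ⊢
    rw [h6, pow_mul, hb, hw, pow_add, ← mul_assoc, h5, zero_mul]
  have hstep : ∀ ρ : Equiv.Perm (Fin F.natDegree), (MvPolynomial.eval₂Hom f (β ∘ ρ) h) ^ n * f (c ^ P) ∈ (IsLocalRing.maximalIdeal R ^ (n * P)).map f := by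
    intro ρ
    rw [← hb]
    refine local_step f (IsLocalRing.maximalIdeal R) ((p : R) ^ N2) _ hJ (hfl N2 hN2L) n P hn hPP hsm a0 a
      (fun e' he => H e' fun i => (pow_dvd_pow _ (by omega)).trans (he i)) c (b ρ) (β (ρ (τ none))) (fun j => β (ρ (τ (some j)))) ?_ ?_ ?_
    · have := hbQ ρ none
      simpa only [Q, Option.elim, map_sub, map_sum, map_mul, MvPolynomial.eval₂Hom_X', MvPolynomial.eval₂Hom_C, Function.comp_apply] using this
    · intro i
      have := hbQ ρ (some (some i))
      simpa only [Q, Option.elim, map_sub, map_sum, map_mul, MvPolynomial.eval₂Hom_X', MvPolynomial.eval₂Hom_C, Function.comp_apply] using this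
    · have := hbQ ρ (some none)
      simpa only [Q, Option.elim, map_sub, map_pow, map_mul, MvPolynomial.eval₂Hom_X', MvPolynomial.eval₂Hom_C, Function.comp_apply] using this
  have hfin := prod_step _ _ _ _ n hT2 hstep
  rw [← map_pow, ← map_mul] at hfin
  apply hP0 P hP1
  rw [Nat.sub_zero]
  refine fl_descent f _ _ hsm ?_ hne _ hfin
  rw [← hJ]; exact hfl N2 hN2L

end

/-- Over a complete regular local domain of mixed characteristic with
F-finite residue field, every submodule of a finitely generated module is wepf-closed. -/
theorem stmt6 (R : Type) [CommRing R] [IsDomain R] [IsNoetherianRing R] [IsLocalRing R]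
    [IsAdicComplete (maximalIdeal R) R]
    (hreg : ∃ (d : ℕ) (x : Fin d → R), ringKrullDim R = d ∧
      Ideal.span (Set.range x) = maximalIdeal R)
    (p : ℕ) [Fact p.Prime] [CharZero R] (hp : (p : R) ∈ maximalIdeal R)
    (hk : FFinite p (ResidueField R))
    (M : Type) [AddCommGroup M] [Module R M] [Module.Finite R M]
    (W : Submodule R M) :
    wepfMod p R W = ↑W := by
  classical
  apply Set.Subset.antisymm
  · intro u hu
    by_contra huW
    have huW' : u ∉ W := huW
    obtain ⟨N0, hN0, huN⟩ : ∃ N0, 0 < N0 ∧ u ∉ W ⊔ Ideal.span {(p : R) ^ N0} • (⊤ : Submodule R M) := by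
      by_contra! hcon
      apply huW'
      rw [← Submodule.Quotient.mk_eq_zero W, ← Submodule.mem_bot R,
        ← Ideal.iInf_pow_smul_eq_bot_of_isLocalRing (Ideal.span {(p : R)}) (M := M ⧸ W)
          (by
            intro h
            apply (maximalIdeal.isMaximal R).ne_top
            rw [← top_le_iff, ← h, Ideal.span_singleton_le_iff_mem]; exact hp), Submodule.mem_iInf]
      intro i
      have h1 := Submodule.mem_map_of_mem (f := W.mkQ) (hcon (i+1) (Nat.succ_pos i))
      rw [Submodule.map_sup, Submodule.mkQ_map_self, bot_sup_eq, Submodule.map_smul'', ← Ideal.span_singleton_pow] at h1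
      exact Submodule.smul_mono (Ideal.pow_le_pow_right (Nat.le_succ i)) le_top h1
    obtain ⟨c, hc0, hcd⟩ := hu N0 hN0
    have hinj : Function.Injective (algebraMap R (AlgebraicClosure (FractionRing R))) := by
      rw [IsScalarTower.algebraMap_eq R (FractionRing R) (AlgebraicClosure (FractionRing R))]
      exact (algebraMap (FractionRing R) _).injective.comp (IsFractionRing.injective R (FractionRing R))
    obtain ⟨n, hn, hmain⟩ := main_alg R hreg p hp hk (AlgebraicClosure (FractionRing R)) (algebraMap R _) hinj c hc0
    obtain ⟨d0, hd0⟩ := IsAlgClosed.exists_pow_nat_eq (algebraMap R (AlgebraicClosure (FractionRing R)) c) hn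
    have hd0i : IsIntegral R d0 := IsIntegral.of_pow hn (by rw [hd0]; exact isIntegral_algebraMap)
    let d : RPlus R := ⟨d0, hd0i⟩
    have hdn : d ^ n = algebraMap R (RPlus R) c := Subtype.ext hd0
    have hmem := hcd n N0 hn hN0 d hdn
    set W1 := W ⊔ Ideal.span {(p : R) ^ N0} • (⊤ : Submodule R M) with hW1
    have hkill : ∀ x : M ⧸ W1, (p : R) ^ N0 • x = 0 := by
      intro x
      obtain ⟨x, rfl⟩ := Submodule.Quotient.mk_surjective _ x
      rw [← Submodule.Quotient.mk_smul, Submodule.Quotient.mk_eq_zero]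
      exact Submodule.mem_sup_right (Submodule.smul_mem_smul (Ideal.mem_span_singleton_self _) trivial)
    have hker : LinearMap.range (LinearMap.baseChange (RPlus R) W1.subtype) ⊔
        Ideal.span {(p : RPlus R) ^ N0} • (⊤ : Submodule (RPlus R) (RPlus R ⊗[R] M)) ≤
        LinearMap.ker (LinearMap.baseChange (RPlus R) W1.mkQ) := by
      refine sup_le ?_ ?_
      · rintro _ ⟨x, rfl⟩
        rw [LinearMap.mem_ker, ← LinearMap.comp_apply, ← LinearMap.baseChange_comp]
        have : W1.mkQ ∘ₗ W1.subtype = 0 := by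
          ext x; simp
        rw [this, LinearMap.baseChange_zero, LinearMap.zero_apply]
      · rw [Submodule.smul_le]
        intro r hr x _
        obtain ⟨s, rfl⟩ := Ideal.mem_span_singleton.1 hr
        rw [LinearMap.mem_ker, map_smul]
        have hz : ∀ y : RPlus R ⊗[R] (M ⧸ W1), ((p : RPlus R) ^ N0 * s) • y = 0 := by
          intro y
          induction y using TensorProduct.induction_on with
          | zero => rw [smul_zero]
          | add a b ha hb => rw [smul_add, ha, hb, add_zero]
          | tmul a b =>
            have e1 : ((p : RPlus R) ^ N0 * s) • (a ⊗ₜ[R] b) = ((p : R) ^ N0 • (s * a)) ⊗ₜ[R] b := by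
              rw [TensorProduct.smul_tmul', smul_eq_mul, Algebra.smul_def ((p : R) ^ N0), map_pow, map_natCast, mul_assoc]
            rw [e1, TensorProduct.smul_tmul, hkill, TensorProduct.tmul_zero]
        exact hz _
    have hd1 := hker hmem
    rw [LinearMap.mem_ker, LinearMap.baseChange_tmul] at hd1
    have hd2 := congrArg (TensorProduct.comm R (RPlus R) (M ⧸ W1)) hd1
    rw [TensorProduct.comm_tmul, map_zero] at hd2
    obtain ⟨ν, s, hs⟩ := Module.Finite.exists_fin (R := R) (M := M ⧸ W1)
    have hv := TensorProduct.vanishesTrivially_of_sum_tmul_eq_zero R (M := M ⧸ W1) (N := RPlus R)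
      (m := fun o : Option (Fin ν) => o.elim (W1.mkQ u) s) (n := fun o => o.elim d (fun _ => 0))
      (by
        rw [eq_top_iff, ← hs]
        apply Submodule.span_mono
        rintro _ ⟨i, rfl⟩
        exact ⟨some i, rfl⟩)
      (by
        rw [Fintype.sum_option]
        simp only [Option.elim, TensorProduct.tmul_zero, Finset.sum_const_zero, add_zero]
        exact hd2)
    obtain ⟨k, a, y, hy1, hy2⟩ := hv
    refine hmain N0 (Fin k) ν (a none) (fun i => a (some i)) ?_ d0 (fun j => (y j : AlgebraicClosure (FractionRing R))) hd0i (fun j => (y j).2) ?_ ?_ hd0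
    · intro e he
      rw [mem_maximalIdeal]
      intro hu
      apply huN
      rw [← Submodule.Quotient.mk_eq_zero W1]
      have h1 : (∑ j, a none j * e j) • W1.mkQ u = 0 := by
        have h2 : ∑ j, e j • ∑ i : Option (Fin ν), a i j • (i.elim (W1.mkQ u) s : M ⧸ W1) = 0 :=
          Finset.sum_eq_zero fun j _ => by rw [hy2 j, smul_zero]
        simp only [Fintype.sum_option, Option.elim, smul_add, Finset.sum_add_distrib] at h2
        have h3 : ∑ j, e j • ∑ i, a (some i) j • s i = 0 := by
          simp only [Finset.smul_sum]
          rw [Finset.sum_comm]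
          refine Finset.sum_eq_zero fun i _ => ?_
          have h4 : ∑ j, e j • a (some i) j • s i = (∑ j, a (some i) j * e j) • s i := by
            rw [Finset.sum_smul]
            refine Finset.sum_congr rfl fun j _ => ?_
            rw [smul_smul, mul_comm]
          rw [h4]
          obtain ⟨q, hq⟩ := he i
          rw [hq, mul_smul, hkill]
        rw [h3, add_zero] at h2
        rw [Finset.sum_smul, ← h2]
        refine Finset.sum_congr rfl fun j _ => ?_
        rw [smul_smul, mul_comm]
      exact (hu.smul_eq_zero).1 h1
    · have h1 := congrArg (fun z : RPlus R => (z : AlgebraicClosure (FractionRing R))) (hy1 none)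
      simp only [Option.elim, Algebra.smul_def] at h1
      simpa using h1
    · intro i
      have h1 := congrArg (fun z : RPlus R => (z : AlgebraicClosure (FractionRing R))) (hy1 (some i))
      simp only [Option.elim, Algebra.smul_def] at h1
      simpa using h1.symm
  · intro u hu N hN
    refine ⟨1, one_ne_zero, fun n N' _ _ d _ => Submodule.mem_sup_left ?_⟩
    exact ⟨d ⊗ₜ ⟨u, Submodule.mem_sup_left hu⟩, by simp⟩
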